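/- arXiv:2305.15877 — 4 statements merged into one kernel-verified Lean document; each statement's English description precedes it below -/
import Mathlib

section
/- (Main theorem) Let λ > 0, n ≥ 1, δ ∈ (0,1), α ∈ [0,1], and let P be a fixed prior on H. Then with probability at least 1−δ over draws of D_n, the following holds simultaneously for all posteriors Q on H: |R(π_Q) − R̂_n^α(π_Q)| ≤ √(KL1(π_Q)/(2n)) + B_n^α(π_Q) + KL2(π_Q)/(nλ) + (λ/2)·V̄_n^α(π_Q). -/
open MeasureTheory ProbabilityTheory Real

open Classical in
/-- Kullback–Leibler divergence between two measures, valued in `ℝ≥0∞` (junk value `⊤` when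
`Q` is not absolutely continuous w.r.t. `P` or the log-likelihood ratio is not integrable). -/
noncomputable def klDiv {α : Type*} [MeasurableSpace α] (Q P : Measure α) : ENNReal :=
  if Q ≪ P ∧ Integrable (llr Q P) Q then ENNReal.ofReal (∫ x, llr Q P x ∂Q) else ⊤


lemma pbi_lint_pi {Z : Type*} [MeasurableSpace Z] (μ : Measure Z) [IsProbabilityMeasure μ]
    (n : ℕ) (g : Z → ENNReal) (hg : Measurable g) :
    ∫⁻ ω, ∏ i, g (ω i) ∂(Measure.pi fun _ : Fin n => μ) = (∫⁻ z, g z ∂μ) ^ n := by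
  have hind : iIndepFun (fun (i : Fin n) (ω : Fin n → Z) => g (ω i))
      (Measure.pi fun _ : Fin n => μ) :=
    iIndepFun_pi (X := fun _ => g) (fun _ => hg.aemeasurable)
  rw [lintegral_prod_eq_prod_lintegral_of_indepFun Finset.univ _ hind
    (fun i => hg.comp (measurable_pi_apply i))]
  have : ∀ i : Fin n, ∫⁻ ω, g (ω i) ∂(Measure.pi fun _ : Fin n => μ) = ∫⁻ z, g z ∂μ := by
    intro i
    exact (measurePreserving_eval (fun _ : Fin n => μ) i).lintegral_comp hg
  simp [this]

lemma pbi_dv {H : Type*} [MeasurableSpace H] (Q P : Measure H) [IsProbabilityMeasure Q]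
    [IsProbabilityMeasure P] (hkl : klDiv Q P ≠ ⊤) (f : H → ℝ) (hf : Measurable f)
    (hfQ : Integrable f Q) (C : ℝ) (hC : 0 < C)
    (h : ∫⁻ x, ENNReal.ofReal (Real.exp (f x)) ∂P ≤ ENNReal.ofReal C) :
    ∫ x, f x ∂Q ≤ (klDiv Q P).toReal + Real.log C := by
  have hh : Q ≪ P ∧ Integrable (llr Q P) Q := by
    by_contra hcon
    exact hkl (by simp [klDiv, hcon])
  obtain ⟨hac, hint⟩ := hh
  have hk : ∫ x, llr Q P x ∂Q ≤ (klDiv Q P).toReal := by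
    rw [klDiv, if_pos ⟨hac, hint⟩]
    rw [ENNReal.toReal_ofReal']
    exact le_max_left _ _
  have hexp : Integrable (fun x => Real.exp (f x)) P := by
    refine ⟨(hf.exp).aestronglyMeasurable, ?_⟩
    rw [hasFiniteIntegral_iff_ofReal (Filter.Eventually.of_forall fun x => (Real.exp_pos _).le)]
    exact lt_of_le_of_lt h ENNReal.ofReal_lt_top
  have hle : ∫ x, Real.exp (f x) ∂P ≤ C := by
    rw [integral_eq_lintegral_of_nonneg_ae
      (Filter.Eventually.of_forall fun x => (Real.exp_pos _).le) hf.exp.aestronglyMeasurable]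
    exact ENNReal.toReal_le_of_le_ofReal hC.le h
  have hpos : 0 < ∫ x, Real.exp (f x) ∂P := integral_exp_pos hexp
  have h1 := integral_llr_tilted_right hac hfQ hexp hint
  have : IsProbabilityMeasure (P.tilted f) := isProbabilityMeasure_tilted hexp
  have hac2 : Q ≪ P.tilted f := hac.trans (absolutelyContinuous_tilted hexp)
  have h2 := InformationTheory.integral_llr_add_sub_measure_univ_nonneg hac2
    (integrable_llr_tilted_right hac hfQ hint hexp)
  have h3 := Real.log_le_log hpos hle
  simp at h2
  linarith

lemma pbi_markov {Ω : Type*} [MeasurableSpace Ω] (μ : Measure Ω) (F : Ω → ENNReal)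
    (hF : Measurable F) (A C : ℝ) (hC : 0 < C) (h : ∫⁻ ω, F ω ∂μ ≤ ENNReal.ofReal A) :
    μ {ω | ¬ F ω ≤ ENNReal.ofReal C} ≤ ENNReal.ofReal (A / C) := by
  calc μ {ω | ¬ F ω ≤ ENNReal.ofReal C} ≤ μ {ω | ENNReal.ofReal C ≤ F ω} :=
        measure_mono (fun ω hω => (not_le.1 hω).le)
    _ ≤ (∫⁻ ω, F ω ∂μ) / ENNReal.ofReal C :=
        meas_ge_le_lintegral_div hF.aemeasurable (by simpa using hC) ENNReal.ofReal_ne_top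
    _ ≤ ENNReal.ofReal A / ENNReal.ofReal C := by gcongr
    _ = _ := (ENNReal.ofReal_div_of_pos hC).symm

/-- Exponential moment of a sum, mixed over a prior. -/
lemma pbi_mix {Z H : Type*} [MeasurableSpace Z] [MeasurableSpace H] (μ : Measure Z)
    [IsProbabilityMeasure μ] (P : Measure H) [IsProbabilityMeasure P] (n : ℕ)
    (f : H × Z → ℝ) (hf : Measurable f)
    (h : ∀ x, ∫⁻ z, ENNReal.ofReal (Real.exp (f (x, z))) ∂μ ≤ 1) :
    ∫⁻ ω, ∫⁻ x, ENNReal.ofReal (Real.exp (∑ i, f (x, ω i))) ∂P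
      ∂(Measure.pi fun _ : Fin n => μ) ≤ ENNReal.ofReal 1 := by
  rw [lintegral_lintegral_swap]
  · calc _ ≤ ∫⁻ x, 1 ∂P := by
          apply lintegral_mono
          intro x
          have : ∀ ω : Fin n → Z, ENNReal.ofReal (Real.exp (∑ i, f (x, ω i)))
              = ∏ i, ENNReal.ofReal (Real.exp (f (x, ω i))) := by
            intro ω
            rw [Real.exp_sum, ENNReal.ofReal_prod_of_nonneg (fun _ _ => (Real.exp_pos _).le)]
          simp only [this]
          rw [pbi_lint_pi μ n (fun z => ENNReal.ofReal (Real.exp (f (x, z)))) (by fun_prop)]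
          exact pow_le_one₀ (by simp) (h x)
      _ = ENNReal.ofReal 1 := by simp
  · apply Measurable.aemeasurable
    simp only [Function.uncurry_def]
    fun_prop

lemma pbi_gauss0 : (1:ℝ)/2 ≤ ∫ s in (0:ℝ)..1, Real.exp (-2 * s^2) := by
  have h1 : ∫ s in (0:ℝ)..1, (1 - 2*s^2 + 2*s^4 - 4/3*s^6) = 1 - 2/3 + 2/5 - 4/21 := by
    rw [intervalIntegral.integral_sub, intervalIntegral.integral_add,
      intervalIntegral.integral_sub]
    · simp; norm_num
    all_goals exact Continuous.intervalIntegrable (by fun_prop) _ _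
  have h2 : ∫ s in (0:ℝ)..1, (1 - 2*s^2 + 2*s^4 - 4/3*s^6)
      ≤ ∫ s in (0:ℝ)..1, Real.exp (-2 * s^2) := by
    apply intervalIntegral.integral_mono_on (by norm_num)
    · exact Continuous.intervalIntegrable (by fun_prop) _ _
    · exact Continuous.intervalIntegrable (by fun_prop) _ _
    · intro s hs
      have key : ∀ t : ℝ, 0 ≤ t → 1 - t + t^2/2 - t^3/6 ≤ Real.exp (-t) := by
        intro t ht
        have hq : 0 < 1 + t + t^2/2 + t^3/6 := by positivity
        have e4 : 1 + t + t^2/2 + t^3/6 ≤ Real.exp t := by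
          have := Real.sum_le_exp_of_nonneg ht 4
          simp [Finset.sum_range_succ, Nat.factorial] at this
          linarith
        -- monotonicity argument
        let g : ℝ → ℝ := fun t => Real.exp (-t) - (1 - t + t^2/2 - t^3/6)
        let g1 : ℝ → ℝ := fun t => -Real.exp (-t) - (- 1 + t - t^2/2)
        let g2 : ℝ → ℝ := fun t => Real.exp (-t) - (1 - t)
        have hd1 : ∀ t, HasDerivAt g1 (g2 t) t := by
          intro t
          have h0 := ((hasDerivAt_id t).neg).exp
          have h1 := hasDerivAt_id t
          have h2 := (hasDerivAt_pow 2 t).div_const 2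
          refine HasDerivAt.congr_deriv (f := g1) (h0.neg.sub ((h1.const_add (-1)).sub h2)) ?_
          simp [g2]
        have hd : ∀ t, HasDerivAt g (g1 t) t := by
          intro t
          have h0 := ((hasDerivAt_id t).neg).exp
          have h1 := hasDerivAt_id t
          have h2 := (hasDerivAt_pow 2 t).div_const 2
          have h3 := (hasDerivAt_pow 3 t).div_const 6
          refine HasDerivAt.congr_deriv (f := g) (h0.sub (((h1.const_sub 1).add h2).sub h3)) ?_
          simp [g1]; ring
        have hm1 : Monotone g1 := by
          apply monotone_of_deriv_nonneg (fun t => (hd1 t).differentiableAt)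
          intro t
          rw [(hd1 t).deriv]
          have := Real.add_one_le_exp (-t)
          simp [g2]; linarith
        have hm : MonotoneOn g (Set.Ici 0) := by
          apply monotoneOn_of_deriv_nonneg (convex_Ici 0)
            (fun t _ => (hd t).continuousAt.continuousWithinAt)
            (fun t _ => (hd t).differentiableAt.differentiableWithinAt)
          intro t ht
          rw [(hd t).deriv]
          rw [interior_Ici] at ht
          have := hm1 (le_of_lt ht)
          simpa [g1] using this
        have := hm (Set.mem_Ici.2 le_rfl) (Set.mem_Ici.2 ht) ht
        simp [g] at this
        linarith
      have := key (2*s^2) (by positivity)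
      have e : -2 * s^2 = -(2*s^2) := by ring
      rw [e]
      nlinarith
  have h3 : (1:ℝ)/2 ≤ 1 - 2/3 + 2/5 - 4/21 := by norm_num
  linarith

lemma pbi_gauss1 (n : ℕ) (hn : 1 ≤ n) (A y : ℝ) (h1 : A ≤ y) (h2 : y ≤ A + 1) :
    1 ≤ 2 * √n * ∫ u in A..(A+1), Real.exp (-2 * n * (u - y)^2) := by
  have hn' : (1:ℝ) ≤ n := by exact_mod_cast hn
  have hs : 1 ≤ √(n:ℝ) := Real.one_le_sqrt.2 hn'
  have hs2 : √(n:ℝ)^2 = n := Real.sq_sqrt (by linarith)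
  set g : ℝ → ℝ := fun v => Real.exp (-2 * n * v^2) with hg
  have hi : ∀ a b, IntervalIntegrable g volume a b :=
    fun a b => Continuous.intervalIntegrable (by fun_prop) _ _
  have e1 : ∫ u in A..(A+1), Real.exp (-2 * n * (u - y)^2) = ∫ v in (A-y)..(A+1-y), g v :=
    intervalIntegral.integral_comp_sub_right g y
  have e2 : ∫ v in (A-y)..0, g v = ∫ v in 0..(y-A), g v := by
    have := intervalIntegral.integral_comp_neg (a := 0) (b := y - A) g
    simp only [neg_zero, neg_sub] at this
    rw [← this]
    simp [hg]
  have e3 : ∫ v in (A+1-y)..1, g v = ∫ v in 0..(y-A), g (v + (A+1-y)) := by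
    rw [intervalIntegral.integral_comp_add_right]
    congr 1 <;> ring
  have e4 : ∫ v in 0..(y-A), g (v + (A+1-y)) ≤ ∫ v in 0..(y-A), g v := by
    apply intervalIntegral.integral_mono_on (by linarith)
    · exact Continuous.intervalIntegrable (by fun_prop) _ _
    · exact hi _ _
    · intro v hv
      apply Real.exp_le_exp.2
      have : v^2 ≤ (v + (A+1-y))^2 := by
        apply pow_le_pow_left₀ hv.1; linarith
      nlinarith
  have e5 : ∫ v in (0:ℝ)..1, g v = (√(n:ℝ))⁻¹ * ∫ s in (0:ℝ)..√n, Real.exp (-2 * s^2) := by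
    have := intervalIntegral.integral_comp_mul_left (a := 0) (b := 1)
      (fun s => Real.exp (-2 * s^2)) (c := √(n:ℝ)) (by positivity)
    simp only [mul_zero, mul_one, smul_eq_mul] at this
    rw [← this]
    congr 1; ext v; simp only [hg]; congr 1; rw [mul_pow, hs2]; ring
  have e6 : (1:ℝ)/2 ≤ ∫ s in (0:ℝ)..√n, Real.exp (-2 * s^2) := by
    refine pbi_gauss0.trans ?_
    apply intervalIntegral.integral_mono_interval le_rfl (by norm_num) hs
    · exact Filter.Eventually.of_forall fun x => (Real.exp_pos _).le
    · exact Continuous.intervalIntegrable (by fun_prop) _ _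
  have a1 := intervalIntegral.integral_add_adjacent_intervals (hi (A-y) 0) (hi 0 (A+1-y))
  have a2 := intervalIntegral.integral_add_adjacent_intervals (hi 0 (A+1-y)) (hi (A+1-y) 1)
  have e7 : ∫ v in (0:ℝ)..1, g v ≤ ∫ v in (A-y)..(A+1-y), g v := by linarith
  rw [e1]
  calc (1:ℝ) = 2 * √n * ((√(n:ℝ))⁻¹ * (1/2)) := by field_simp
    _ ≤ 2 * √n * ((√(n:ℝ))⁻¹ * ∫ s in (0:ℝ)..√n, Real.exp (-2 * s^2)) := by gcongr
    _ ≤ _ := by rw [← e5]; gcongr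

lemma pbi_gauss (n : ℕ) (hn : 1 ≤ n) (A y : ℝ) (h1 : A ≤ y) (h2 : y ≤ A + 1) :
    1 ≤ ENNReal.ofReal (2 * √n) *
      ∫⁻ u in Set.Ioc A (A+1), ENNReal.ofReal (Real.exp (-2 * n * (u - y)^2)) := by
  have := pbi_gauss1 n hn A y h1 h2
  rw [intervalIntegral.integral_of_le (by linarith)] at this
  rw [← ofReal_integral_eq_lintegral_ofReal, ← ENNReal.ofReal_mul (by positivity)]
  · rw [← ENNReal.ofReal_one]; exact ENNReal.ofReal_le_ofReal this
  · exact (Continuous.integrableOn_Ioc (by fun_prop))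
  · exact Filter.Eventually.of_forall fun x => (Real.exp_pos _).le

/-- Critical exponential moment of the squared deviation for variables in `[-1,0]`. -/
lemma pbi_maurer {Z : Type*} [MeasurableSpace Z] (μ : Measure Z) [IsProbabilityMeasure μ]
    (n : ℕ) (hn : 1 ≤ n) (L : Z → ℝ) (hL : Measurable L) (hb : ∀ z, L z ∈ Set.Icc (-1:ℝ) 0) :
    ∫⁻ ω, ENNReal.ofReal (Real.exp (2 * n * ((n:ℝ)⁻¹ * ∑ i, L (ω i) - ∫ z, L z ∂μ)^2))
      ∂(Measure.pi fun _ : Fin n => μ) ≤ ENNReal.ofReal (2 * √n) := by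
  set m := ∫ z, L z ∂μ with hm
  have hn0 : (0:ℝ) < n := by exact_mod_cast hn
  set Y : (Fin n → Z) → ℝ := fun ω => (n:ℝ)⁻¹ * ∑ i, L (ω i) - m with hY
  have hYm : Measurable Y := by fun_prop
  have hYr : ∀ ω, -1 - m ≤ Y ω ∧ Y ω ≤ -1 - m + 1 := by
    intro ω
    have l1 : ∑ i : Fin n, (-1:ℝ) ≤ ∑ i, L (ω i) := Finset.sum_le_sum fun i _ => (hb _).1
    have l2 : ∑ i, L (ω i) ≤ ∑ i : Fin n, (0:ℝ) := Finset.sum_le_sum fun i _ => (hb _).2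
    simp at l1 l2
    have k1 : (n:ℝ)⁻¹ * (-n) ≤ (n:ℝ)⁻¹ * ∑ i, L (ω i) := by gcongr
    have k2 : (n:ℝ)⁻¹ * ∑ i, L (ω i) ≤ 0 := mul_nonpos_of_nonneg_of_nonpos (by positivity) l2
    have : (n:ℝ)⁻¹ * (-n) = -1 := by field_simp
    constructor <;> simp only [hY] <;> linarith
  have hsub := hasSubgaussianMGF_of_mem_Icc (μ := μ) hL.aemeasurable
    (Filter.Eventually.of_forall hb)
  have hmom : ∀ u : ℝ, ∫⁻ ω, ENNReal.ofReal (Real.exp (4 * n * u * Y ω))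
      ∂(Measure.pi fun _ : Fin n => μ) ≤ ENNReal.ofReal (Real.exp (2 * n * u^2)) := by
    intro u
    have : ∀ ω, ENNReal.ofReal (Real.exp (4 * n * u * Y ω)) =
        ∏ i, ENNReal.ofReal (Real.exp (4 * u * (L (ω i) - m))) := by
      intro ω
      rw [← ENNReal.ofReal_prod_of_nonneg (fun _ _ => (Real.exp_pos _).le), ← Real.exp_sum,
        ← Finset.mul_sum, Finset.sum_sub_distrib]
      congr 2
      simp [hY]; field_simp
    simp only [this]
    rw [pbi_lint_pi μ n (fun z => ENNReal.ofReal (Real.exp (4 * u * (L z - m)))) (by fun_prop)]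
    have h1 : ∫⁻ z, ENNReal.ofReal (Real.exp (4 * u * (L z - m))) ∂μ
        ≤ ENNReal.ofReal (Real.exp (2 * u^2)) := by
      rw [← ofReal_integral_eq_lintegral_ofReal (hsub.integrable_exp_mul (4*u))
        (Filter.Eventually.of_forall fun x => (Real.exp_pos _).le)]
      apply ENNReal.ofReal_le_ofReal
      have := hsub.mgf_le (4*u)
      refine this.trans (le_of_eq ?_)
      congr 1
      simp; ring
    calc _ ≤ (ENNReal.ofReal (Real.exp (2 * u^2)))^n := by gcongr
      _ = _ := by
        rw [← ENNReal.ofReal_pow (Real.exp_pos _).le, ← Real.exp_nat_mul]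
        congr 2; ring
  calc ∫⁻ ω, ENNReal.ofReal (Real.exp (2 * n * (Y ω)^2)) ∂(Measure.pi fun _ : Fin n => μ)
      ≤ ∫⁻ ω, (ENNReal.ofReal (2 * √n) * ∫⁻ u in Set.Ioc (-1-m) (-1-m+1),
          ENNReal.ofReal (Real.exp (4 * n * u * Y ω)) * ENNReal.ofReal (Real.exp (-2 * n * u^2)))
          ∂(Measure.pi fun _ : Fin n => μ) := by
        apply lintegral_mono
        intro ω
        have := pbi_gauss n hn (-1-m) (Y ω) (hYr ω).1 (hYr ω).2
        calc ENNReal.ofReal (Real.exp (2 * n * (Y ω)^2))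
            = ENNReal.ofReal (Real.exp (2 * n * (Y ω)^2)) * 1 := by simp
          _ ≤ ENNReal.ofReal (Real.exp (2 * n * (Y ω)^2)) * (ENNReal.ofReal (2 * √n) *
                ∫⁻ u in Set.Ioc (-1-m) (-1-m+1),
                  ENNReal.ofReal (Real.exp (-2 * n * (u - Y ω)^2))) := by gcongr
          _ = ENNReal.ofReal (2 * √n) * (ENNReal.ofReal (Real.exp (2 * n * (Y ω)^2)) *
                ∫⁻ u in Set.Ioc (-1-m) (-1-m+1),
                  ENNReal.ofReal (Real.exp (-2 * n * (u - Y ω)^2))) := by ring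
          _ = _ := by
            rw [← lintegral_const_mul _ (by fun_prop)]
            congr 2; ext u
            rw [← ENNReal.ofReal_mul (Real.exp_pos _).le, ← ENNReal.ofReal_mul (Real.exp_pos _).le,
              ← Real.exp_add, ← Real.exp_add]
            congr 2; ring
    _ = ENNReal.ofReal (2 * √n) * ∫⁻ u in Set.Ioc (-1-m) (-1-m+1), ∫⁻ ω,
          ENNReal.ofReal (Real.exp (4 * n * u * Y ω)) * ENNReal.ofReal (Real.exp (-2 * n * u^2))
          ∂(Measure.pi fun _ : Fin n => μ) := by
        rw [lintegral_const_mul']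
        · rw [lintegral_lintegral_swap]
          apply Measurable.aemeasurable
          simp only [Function.uncurry_def]
          fun_prop
        · exact ENNReal.ofReal_ne_top
    _ ≤ ENNReal.ofReal (2 * √n) * ∫⁻ u in Set.Ioc (-1-m) (-1-m+1), 1 := by
        gcongr with u
        rw [lintegral_mul_const _ (by fun_prop)]
        calc _ ≤ ENNReal.ofReal (Real.exp (2 * n * u^2)) *
                ENNReal.ofReal (Real.exp (-2 * n * u^2)) := by gcongr; exact hmom u
          _ = 1 := by
            rw [← ENNReal.ofReal_mul (Real.exp_pos _).le, ← Real.exp_add]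
            simp
    _ = ENNReal.ofReal (2 * √n) := by simp

lemma pbi_fin {H : Type*} [MeasurableSpace H] {K : ℕ} (Q : Measure H) [IsProbabilityMeasure Q]
    (e : H → Fin K) (he : Measurable e) (g : Fin K → ℝ) :
    Integrable (fun h => g (e h)) Q ∧
      ∫ h, g (e h) ∂Q = ∑ a, (Q {h | e h = a}).toReal * g a := by
  have : IsProbabilityMeasure (Q.map e) := Measure.isProbabilityMeasure_map he.aemeasurable
  have hg : Measurable g := measurable_of_countable g
  refine ⟨(Integrable.of_finite (μ := Q.map e) (f := g)).comp_measurable he, ?_⟩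
  rw [← integral_map he.aemeasurable hg.aestronglyMeasurable,
    integral_fintype Integrable.of_finite]
  apply Finset.sum_congr rfl
  intro a _
  rw [smul_eq_mul, Measure.real, Measure.map_apply he (measurableSet_singleton a)]
  rfl

lemma pbi_cond {X : Type*} [MeasurableSpace X] {K : ℕ} (ν : Measure X) [IsProbabilityMeasure ν]
    (p0 : X → Fin K → ℝ) (hp0pos : ∀ x a, 0 < p0 x a)
    (κ0 : Kernel X (Fin K)) [IsMarkovKernel κ0]
    (hκ0 : ∀ x a, κ0 x {a} = ENNReal.ofReal (p0 x a)) (f : X × Fin K → ℝ) (hf : Measurable f)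
    (h : ∀ x, ∑ a, p0 x a * Real.exp (f (x, a)) ≤ 1) :
    ∫⁻ z, ENNReal.ofReal (Real.exp (f z)) ∂(ν ⊗ₘ κ0) ≤ 1 := by
  rw [Measure.lintegral_compProd (by fun_prop)]
  calc _ ≤ ∫⁻ x, 1 ∂ν := by
        apply lintegral_mono
        intro x
        simp only
        rw [lintegral_fintype]
        have : ∀ a, ENNReal.ofReal (Real.exp (f (x, a))) * κ0 x {a}
            = ENNReal.ofReal (p0 x a * Real.exp (f (x, a))) := by
          intro a
          rw [hκ0, mul_comm, ENNReal.ofReal_mul (hp0pos x a).le]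
        simp only [this]
        rw [← ENNReal.ofReal_sum_of_nonneg
          (fun a _ => mul_nonneg (hp0pos x a).le (Real.exp_pos _).le)]
        simpa using h x
    _ = 1 := by simp

lemma pbi_exp1 (t : ℝ) (ht : 0 ≤ t) : Real.exp (t - t^2/2) ≤ 1 + t := by
  have h1 : 0 < 1 + t := by linarith
  rw [← Real.le_log_iff_exp_le h1]
  let g : ℝ → ℝ := fun t => Real.log (1 + t) - (t - t^2/2)
  have hd : ∀ t, 0 ≤ t → HasDerivAt g (1/(1+t) - (1 - t)) t := by
    intro t ht
    have h0 := ((hasDerivAt_id t).const_add 1).log (by simp; linarith)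
    have h2 := (hasDerivAt_pow 2 t).div_const 2
    refine HasDerivAt.congr_deriv (f := g) (h0.sub ((hasDerivAt_id t).sub h2)) ?_
    simp
  have hm : MonotoneOn g (Set.Ici 0) := by
    apply monotoneOn_of_deriv_nonneg (convex_Ici 0)
      (fun t ht => (hd t ht).continuousAt.continuousWithinAt)
      (fun t ht => (hd t (interior_subset ht)).differentiableAt.differentiableWithinAt)
    intro t ht
    have ht0 : 0 ≤ t := interior_subset ht
    rw [(hd t ht0).deriv, sub_nonneg, le_div_iff₀ (by linarith)]
    nlinarith [sq_nonneg t]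
  have := hm (Set.mem_Ici.2 le_rfl) (Set.mem_Ici.2 ht) ht
  simp [g] at this
  linarith

lemma pbi_exp2 (t : ℝ) (ht : 0 ≤ t) : Real.exp (-t) ≤ 1 - t + t^2/2 := by
  have h := Real.quadratic_le_exp_of_nonneg ht
  have hq : 0 < 1 + t + t^2/2 := by positivity
  rw [Real.exp_neg]
  calc (Real.exp t)⁻¹ ≤ (1 + t + t^2/2)⁻¹ := by gcongr
    _ ≤ 1 - t + t^2/2 := by
      rw [inv_le_iff_one_le_mul₀ hq]
      nlinarith [sq_nonneg (t^2)]

lemma pbi_up {K : ℕ} (p : Fin K → ℝ) (hp : ∀ a, 0 < p a) (hs : ∑ a, p a = 1) (b : Fin K)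
    (w lam : ℝ) (hw : 0 ≤ w) (hl : 0 < lam) :
    ∑ a, p a * Real.exp (lam * ((if b = a then w else 0) - p b * w)
      - lam^2/2 * (if b = a then w^2 else 0)) ≤ 1 := by
  calc _ ≤ ∑ a, (p a + if b = a then p a * (lam * w) else 0) * Real.exp (-(lam * (p b * w))) := by
        apply Finset.sum_le_sum
        intro a _
        have : Real.exp (lam * (if b = a then w else 0) - lam^2/2 * (if b = a then w^2 else 0))
            ≤ 1 + lam * (if b = a then w else 0) := by
          split_ifs
          · refine le_trans (le_of_eq ?_) (pbi_exp1 (lam * w) (by positivity))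
            congr 1; ring
          · simp
        rw [show lam * ((if b = a then w else 0) - p b * w)
            - lam^2/2 * (if b = a then w^2 else 0)
            = (lam * (if b = a then w else 0) - lam^2/2 * (if b = a then w^2 else 0))
              + (-(lam * (p b * w))) by ring, Real.exp_add, ← mul_assoc]
        apply mul_le_mul_of_nonneg_right _ (Real.exp_pos _).le
        calc _ ≤ p a * (1 + lam * (if b = a then w else 0)) :=
              mul_le_mul_of_nonneg_left this (hp a).le
          _ = _ := by split_ifs <;> ring
    _ = (lam * (p b * w) + 1) * Real.exp (-(lam * (p b * w))) := by
        rw [← Finset.sum_mul, Finset.sum_add_distrib, hs]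
        simp; ring_nf
    _ ≤ Real.exp (lam * (p b * w)) * Real.exp (-(lam * (p b * w))) := by
        gcongr; exact Real.add_one_le_exp _
    _ = 1 := by rw [← Real.exp_add]; simp

lemma pbi_down {K : ℕ} (p : Fin K → ℝ) (hp : ∀ a, 0 < p a) (hs : ∑ a, p a = 1) (b : Fin K)
    (w lam v : ℝ) (hw : 0 ≤ w) (hl : 0 < lam) (hv : p b * w^2 ≤ v) :
    ∑ a, p a * Real.exp (lam * (p b * w - (if b = a then w else 0)) - lam^2/2 * v) ≤ 1 := by
  set E := lam * (p b * w) - lam^2/2 * v with hE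
  calc _ ≤ ∑ a, (p a + if b = a then p a * (-(lam * w) + (lam*w)^2/2) else 0) * Real.exp E := by
        apply Finset.sum_le_sum
        intro a _
        have : Real.exp (-(lam * (if b = a then w else 0)))
            ≤ 1 + (if b = a then (-(lam * w) + (lam*w)^2/2) else 0) := by
          split_ifs
          · have := pbi_exp2 (lam * w) (by positivity)
            linarith
          · simp
        rw [show lam * (p b * w - (if b = a then w else 0)) - lam^2/2 * v
            = -(lam * (if b = a then w else 0)) + E by rw [hE]; ring, Real.exp_add, ← mul_assoc]
        apply mul_le_mul_of_nonneg_right _ (Real.exp_pos _).le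
        calc _ ≤ p a * (1 + (if b = a then (-(lam * w) + (lam*w)^2/2) else 0)) :=
              mul_le_mul_of_nonneg_left this (hp a).le
          _ = _ := by split_ifs <;> ring
    _ = (p b * (-(lam * w) + (lam*w)^2/2) + 1) * Real.exp E := by
        rw [← Finset.sum_mul, Finset.sum_add_distrib, hs]
        simp; ring_nf
    _ ≤ (-E + 1) * Real.exp E := by
        gcongr
        have : lam^2/2 * (p b * w^2) ≤ lam^2/2 * v := by gcongr
        rw [hE]; nlinarith
    _ ≤ Real.exp (-E) * Real.exp E := by
        gcongr; exact Real.add_one_le_exp _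
    _ = 1 := by rw [← Real.exp_add]; simp

set_option maxHeartbeats 4000000 in
/-- **Main theorem (two-sided PAC-Bayes generalization bound for IPS-α).** -/
theorem pac_bayes_ips_alpha
    {X : Type*} [MeasurableSpace X] {K : ℕ}
    {H : Type*} [MeasurableSpace H]
    (ν : Measure X) [IsProbabilityMeasure ν]
    (p0 c : X → Fin K → ℝ)
    (hp0meas : ∀ a, Measurable fun x => p0 x a)
    (hcmeas : ∀ a, Measurable fun x => c x a)
    (hp0pos : ∀ x a, 0 < p0 x a) (hp0sum : ∀ x, ∑ a, p0 x a = 1)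
    (hc : ∀ x a, c x a ∈ Set.Icc (-1 : ℝ) 0)
    (ev : H → X → Fin K)
    (hev : Measurable fun q : H × X => ev q.1 q.2)
    (κ0 : Kernel X (Fin K)) [IsMarkovKernel κ0]
    (hκ0 : ∀ x a, κ0 x {a} = ENNReal.ofReal (p0 x a))
    (P : Measure H) [IsProbabilityMeasure P]
    (lam : ℝ) (hlam : 0 < lam) (n : ℕ) (hn : 1 ≤ n)
    (δ : ℝ) (hδ : δ ∈ Set.Ioo (0 : ℝ) 1) (α : ℝ) (hα : α ∈ Set.Icc (0 : ℝ) 1) :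
    ENNReal.ofReal (1 - δ) ≤
      (Measure.pi fun _ : Fin n => ν ⊗ₘ κ0)
        {ω | ∀ Q : Measure H, IsProbabilityMeasure Q → klDiv Q P ≠ ⊤ →
          |(∫ x, ∑ a, (Q {h | ev h x = a}).toReal * c x a ∂ν)
              - (n : ℝ)⁻¹ * ∑ i, c (ω i).1 (ω i).2 * (Q {h | ev h (ω i).1 = (ω i).2}).toReal
                  / p0 (ω i).1 (ω i).2 ^ α|
            ≤ Real.sqrt (((klDiv Q P).toReal + Real.log (4 * Real.sqrt n / δ)) / (2 * n))
              + (1 - (n : ℝ)⁻¹ * ∑ i, ∑ a,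
                  (Q {h | ev h (ω i).1 = a}).toReal * p0 (ω i).1 a ^ (1 - α))
              + ((klDiv Q P).toReal + Real.log (4 / δ)) / (n * lam)
              + lam / 2 * ((n : ℝ)⁻¹ * ∑ i,
                  ((∑ a, p0 (ω i).1 a *
                      ((Q {h | ev h (ω i).1 = a}).toReal / p0 (ω i).1 a ^ (2 * α)))
                    + (Q {h | ev h (ω i).1 = (ω i).2}).toReal * c (ω i).1 (ω i).2 ^ 2
                        / p0 (ω i).1 (ω i).2 ^ (2 * α)))} := by
  have hn0 : (0:ℝ) < n := by exact_mod_cast hn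
  have hδ0 : 0 < δ := hδ.1
  -- measurability
  have hp' : Measurable fun z : X × Fin K => p0 z.1 z.2 :=
    measurable_from_prod_countable_left (fun a => hp0meas a)
  have hc' : Measurable fun z : X × Fin K => c z.1 z.2 :=
    measurable_from_prod_countable_left (fun a => hcmeas a)
  have hevz : Measurable fun t : H × (X × Fin K) => ev t.1 t.2.1 :=
    hev.comp (measurable_fst.prodMk (measurable_fst.comp measurable_snd))
  have hpair : Measurable fun t : H × (X × Fin K) => ((t.2.1, ev t.1 t.2.1) : X × Fin K) :=
    (measurable_fst.comp measurable_snd).prodMk hevz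
  have hpe : Measurable fun t : H × (X × Fin K) => p0 t.2.1 (ev t.1 t.2.1) := hp'.comp hpair
  have hce : Measurable fun t : H × (X × Fin K) => c t.2.1 (ev t.1 t.2.1) := hc'.comp hpair
  have hpz : Measurable fun t : H × (X × Fin K) => p0 t.2.1 t.2.2 := hp'.comp measurable_snd
  have hcz : Measurable fun t : H × (X × Fin K) => c t.2.1 t.2.2 := hc'.comp measurable_snd
  have hset : MeasurableSet {t : H × (X × Fin K) | ev t.1 t.2.1 = t.2.2} :=
    measurableSet_eq_fun hevz (measurable_snd.comp measurable_snd)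
  have hevx : ∀ x, Measurable fun h => ev h x := fun x =>
    hev.comp (measurable_id.prodMk measurable_const)
  -- the functions
  set U : H × (X × Fin K) → ℝ := fun t =>
    if ev t.1 t.2.1 = t.2.2 then c t.2.1 t.2.2 / p0 t.2.1 t.2.2 ^ α else 0 with hU
  set M : H × (X × Fin K) → ℝ := fun t =>
    c t.2.1 (ev t.1 t.2.1) * p0 t.2.1 (ev t.1 t.2.1) ^ (1 - α) with hM
  set S : H × (X × Fin K) → ℝ := fun t =>
    if ev t.1 t.2.1 = t.2.2 then c t.2.1 t.2.2 ^ 2 / p0 t.2.1 t.2.2 ^ (2 * α) else 0 with hS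
  set V : H × (X × Fin K) → ℝ := fun t =>
    p0 t.2.1 (ev t.1 t.2.1) * (1 / p0 t.2.1 (ev t.1 t.2.1) ^ (2 * α)) with hV
  set L : H × (X × Fin K) → ℝ := fun t => c t.2.1 (ev t.1 t.2.1) with hL
  have hUm : Measurable U := Measurable.ite hset (hcz.div (hpz.pow_const _)) measurable_const
  have hSm : Measurable S :=
    Measurable.ite hset ((hcz.pow_const 2).div (hpz.pow_const _)) measurable_const
  have hMm : Measurable M := hce.mul (hpe.pow_const _)
  have hVm : Measurable V := hpe.mul (measurable_const.div (hpe.pow_const _))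
  have hLm : Measurable L := hce
  set m : H → ℝ := fun h => ∫ x, c x (ev h x) ∂ν with hm
  have hcx : Measurable fun t : H × X => c t.2 (ev t.1 t.2) :=
    hc'.comp (measurable_snd.prodMk hev)
  have hmm : Measurable m :=
    (StronglyMeasurable.integral_prod_right (ν := ν)
      (f := fun h x => c x (ev h x)) hcx.stronglyMeasurable).measurable
  set μ := ν ⊗ₘ κ0 with hμ
  have hLint : ∀ h, ∫ z, L (h, z) ∂μ = m h := by
    intro h
    have hmeas : Measurable fun x => c x (ev h x) :=
      hcx.comp (measurable_const.prodMk measurable_id)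
    have : ν = μ.map Prod.fst := (Measure.fst_compProd ν κ0).symm
    simp only [hm]
    rw [this, integral_map measurable_fst.aemeasurable hmeas.aestronglyMeasurable]
  have hpow1 : ∀ x a, p0 x a * (p0 x a ^ α)⁻¹ = p0 x a ^ (1 - α) := by
    intro x a
    rw [Real.rpow_sub (hp0pos x a), Real.rpow_one, div_eq_mul_inv]
  have hpow2 : ∀ x a, (p0 x a ^ α)^2 = p0 x a ^ (2 * α) := by
    intro x a
    rw [← Real.rpow_natCast, ← Real.rpow_mul (hp0pos x a).le]
    congr 1; push_cast; ring
  have hppos : ∀ x a (r : ℝ), 0 < p0 x a ^ r := fun x a r => Real.rpow_pos_of_pos (hp0pos x a) r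
  -- exponential moments
  have m2 : ∀ h, ∫⁻ z, ENNReal.ofReal (Real.exp (lam * (M (h, z) - U (h, z))
      - lam^2/2 * S (h, z))) ∂μ ≤ 1 := by
    intro h
    refine pbi_cond ν p0 hp0pos κ0 hκ0
      (fun z => lam * (M (h, z) - U (h, z)) - lam^2/2 * S (h, z)) (by fun_prop) ?_
    intro x
    refine le_trans (le_of_eq ?_) (pbi_up (p0 x) (hp0pos x) (hp0sum x) (ev h x)
      (-c x (ev h x) / p0 x (ev h x) ^ α) lam
      (div_nonneg (by linarith [(hc x (ev h x)).2]) (hppos _ _ _).le) hlam)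
    apply Finset.sum_congr rfl
    intro a _
    congr 2
    have e1 : M (h, (x, a)) = -(p0 x (ev h x) * (-c x (ev h x) / p0 x (ev h x) ^ α)) := by
      simp only [hM]; rw [← hpow1]; ring
    have e2 : U (h, (x, a)) = -(if ev h x = a then (-c x (ev h x) / p0 x (ev h x) ^ α) else 0) := by
      simp only [hU]
      split_ifs with hh
      · subst hh; ring
      · simp
    have e3 : S (h, (x, a)) =
        (if ev h x = a then (-c x (ev h x) / p0 x (ev h x) ^ α)^2 else 0) := by
      simp only [hS]
      split_ifs with hh
      · subst hh; rw [div_pow, hpow2]; ring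
      · rfl
    rw [e1, e2, e3]; ring
  have m3 : ∀ h, ∫⁻ z, ENNReal.ofReal (Real.exp (lam * (U (h, z) - M (h, z))
      - lam^2/2 * V (h, z))) ∂μ ≤ 1 := by
    intro h
    refine pbi_cond ν p0 hp0pos κ0 hκ0
      (fun z => lam * (U (h, z) - M (h, z)) - lam^2/2 * V (h, z)) (by fun_prop) ?_
    intro x
    refine le_trans (le_of_eq ?_) (pbi_down (p0 x) (hp0pos x) (hp0sum x) (ev h x)
      (-c x (ev h x) / p0 x (ev h x) ^ α) lam
      (p0 x (ev h x) * (1 / p0 x (ev h x) ^ (2 * α)))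
      (div_nonneg (by linarith [(hc x (ev h x)).2]) (hppos _ _ _).le) hlam ?_)
    · apply Finset.sum_congr rfl
      intro a _
      congr 2
      have e1 : M (h, (x, a)) = -(p0 x (ev h x) * (-c x (ev h x) / p0 x (ev h x) ^ α)) := by
        simp only [hM]; rw [← hpow1]; ring
      have e2 : U (h, (x, a)) =
          -(if ev h x = a then (-c x (ev h x) / p0 x (ev h x) ^ α) else 0) := by
        simp only [hU]
        split_ifs with hh
        · subst hh; ring
        · simp
      rw [e1, e2]; ring
    · apply mul_le_mul_of_nonneg_left _ (hp0pos _ _).le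
      rw [div_pow, hpow2]
      have h1 := hc x (ev h x)
      apply div_le_div_of_nonneg_right _ (hppos _ _ _).le
      nlinarith [h1.1, h1.2]
  have i2 := pbi_mix μ P n (fun t => lam * (M t - U t) - lam^2/2 * S t) (by fun_prop) m2
  have i3 := pbi_mix μ P n (fun t => lam * (U t - M t) - lam^2/2 * V t) (by fun_prop) m3
  set D : H → (Fin n → X × Fin K) → ℝ := fun h ω => (n:ℝ)⁻¹ * ∑ i, L (h, ω i) - m h with hD
  have hDm : Measurable fun t : H × (Fin n → X × Fin K) => D t.1 t.2 := by
    simp only [hD]; fun_prop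
  have hDm2 : Measurable fun t : (Fin n → X × Fin K) × H => D t.2 t.1 :=
    hDm.comp measurable_swap
  have i1 : ∫⁻ ω, ∫⁻ h, ENNReal.ofReal (Real.exp (2 * n * (D h ω)^2)) ∂P
      ∂(Measure.pi fun _ : Fin n => μ) ≤ ENNReal.ofReal (2 * √n) := by
    rw [lintegral_lintegral_swap]
    · calc _ ≤ ∫⁻ _h, ENNReal.ofReal (2 * √n) ∂P := by
            apply lintegral_mono
            intro h
            have := pbi_maurer μ n hn (fun z => L (h, z)) (by fun_prop) (fun z => hc _ _)
            rw [hLint h] at this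
            exact this
        _ = _ := by simp
    · apply Measurable.aemeasurable
      simp only [Function.uncurry_def]
      fun_prop
  have hs0 : 0 < √(n:ℝ) := Real.sqrt_pos.2 hn0
  -- the good event
  have mF1 : Measurable fun ω : Fin n → X × Fin K =>
      ∫⁻ h, ENNReal.ofReal (Real.exp (2 * n * (D h ω)^2)) ∂P := by
    apply Measurable.lintegral_prod_right'
      (f := fun t : (Fin n → X × Fin K) × H => ENNReal.ofReal (Real.exp (2 * n * (D t.2 t.1)^2)))
    fun_prop
  have mF : ∀ f : H × (X × Fin K) → ℝ, Measurable f → Measurable fun ω : Fin n → X × Fin K =>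
      ∫⁻ h, ENNReal.ofReal (Real.exp (∑ i, f (h, ω i))) ∂P := by
    intro f hf
    apply Measurable.lintegral_prod_right'
      (f := fun t : (Fin n → X × Fin K) × H => ENNReal.ofReal (Real.exp (∑ i, f (t.2, t.1 i))))
    fun_prop
  have b1 := pbi_markov _ _ mF1 _ (4 * √n / δ) (by positivity) i1
  have b2 := pbi_markov _ _ (mF (fun t => lam * (M t - U t) - lam^2/2 * S t) (by fun_prop)) _ (4 / δ) (by positivity) i2
  have b3 := pbi_markov _ _ (mF (fun t => lam * (U t - M t) - lam^2/2 * V t) (by fun_prop)) _ (4 / δ) (by positivity) i3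
  have key : ∀ (T A B C : Set (Fin n → X × Fin K)) , (Aᶜ ∩ Bᶜ ∩ Cᶜ ⊆ T) →
      (Measure.pi fun _ : Fin n => μ) A ≤ ENNReal.ofReal (2 * √n / (4 * √n / δ)) →
      (Measure.pi fun _ : Fin n => μ) B ≤ ENNReal.ofReal (1 / (4 / δ)) →
      (Measure.pi fun _ : Fin n => μ) C ≤ ENNReal.ofReal (1 / (4 / δ)) →
      ENNReal.ofReal (1 - δ) ≤ (Measure.pi fun _ : Fin n => μ) T := by
    intro T A B C hT hA hB hC
    have hcov : (Set.univ : Set (Fin n → X × Fin K)) ⊆ T ∪ (A ∪ (B ∪ C)) := by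
      intro ω _
      by_contra hcon
      simp only [Set.mem_union, not_or] at hcon
      exact hcon.1 (hT ⟨⟨hcon.2.1, hcon.2.2.1⟩, hcon.2.2.2⟩)
    have h1 : (1 : ENNReal) ≤ (Measure.pi fun _ : Fin n => μ) T + ENNReal.ofReal δ := by
      calc (1 : ENNReal) = (Measure.pi fun _ : Fin n => μ) Set.univ := by simp
        _ ≤ _ := measure_mono hcov
        _ ≤ (Measure.pi fun _ : Fin n => μ) T + ((Measure.pi fun _ : Fin n => μ) A +
            ((Measure.pi fun _ : Fin n => μ) B + (Measure.pi fun _ : Fin n => μ) C)) := by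
          refine (measure_union_le _ _).trans ?_
          gcongr
          refine (measure_union_le _ _).trans ?_
          gcongr
          exact measure_union_le _ _
        _ ≤ (Measure.pi fun _ : Fin n => μ) T + (ENNReal.ofReal (2 * √n / (4 * √n / δ)) +
            (ENNReal.ofReal (1 / (4 / δ)) + ENNReal.ofReal (1 / (4 / δ)))) := by gcongr
        _ = _ := by
          rw [← ENNReal.ofReal_add (by positivity) (by positivity),
            ← ENNReal.ofReal_add (by positivity) (by positivity)]
          congr 2
          field_simp; norm_num
    rw [ENNReal.ofReal_sub _ hδ0.le, ENNReal.ofReal_one]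
    exact tsub_le_iff_right.2 h1
  refine key _ _ _ _ ?_ b1 b2 b3
  rintro ω ⟨⟨g1, g2⟩, g3⟩ Q hQ hkl
  simp only [Set.mem_compl_iff, Set.mem_ofPred_eq, not_not] at g1 g2 g3
  -- integrals against `Q`
  set q : Fin n → Fin K → ℝ := fun i a => (Q {h | ev h (ω i).1 = a}).toReal with hq
  have hq0 : ∀ i a, 0 ≤ q i a := fun i a => ENNReal.toReal_nonneg
  have F := fun i (g : Fin K → ℝ) => pbi_fin Q (fun h => ev h (ω i).1) (hevx _) g
  have hq1 : ∀ i, ∑ a, q i a = 1 := by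
    intro i
    have := (F i (fun _ => 1)).2
    simpa using this.symm
  have FU : ∀ i, Integrable (fun h => U (h, ω i)) Q ∧
      ∫ h, U (h, ω i) ∂Q = c (ω i).1 (ω i).2 * q i (ω i).2 / p0 (ω i).1 (ω i).2 ^ α := by
    intro i
    have := F i (fun b => if b = (ω i).2 then c (ω i).1 (ω i).2 / p0 (ω i).1 (ω i).2 ^ α else 0)
    refine ⟨this.1, this.2.trans ?_⟩
    simp [hq]; ring
  have FS : ∀ i, Integrable (fun h => S (h, ω i)) Q ∧
      ∫ h, S (h, ω i) ∂Q = q i (ω i).2 * c (ω i).1 (ω i).2 ^ 2 / p0 (ω i).1 (ω i).2 ^ (2 * α) := by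
    intro i
    have := F i (fun b => if b = (ω i).2 then
      c (ω i).1 (ω i).2 ^ 2 / p0 (ω i).1 (ω i).2 ^ (2 * α) else 0)
    refine ⟨this.1, this.2.trans ?_⟩
    simp [hq]; ring
  have FM : ∀ i, Integrable (fun h => M (h, ω i)) Q ∧
      ∫ h, M (h, ω i) ∂Q = ∑ a, q i a * (c (ω i).1 a * p0 (ω i).1 a ^ (1 - α)) :=
    fun i => F i (fun b => c (ω i).1 b * p0 (ω i).1 b ^ (1 - α))
  have FL : ∀ i, Integrable (fun h => L (h, ω i)) Q ∧
      ∫ h, L (h, ω i) ∂Q = ∑ a, q i a * c (ω i).1 a :=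
    fun i => F i (fun b => c (ω i).1 b)
  have FV : ∀ i, Integrable (fun h => V (h, ω i)) Q ∧
      ∫ h, V (h, ω i) ∂Q = ∑ a, p0 (ω i).1 a * (q i a / p0 (ω i).1 a ^ (2 * α)) := by
    intro i
    have := F i (fun b => p0 (ω i).1 b * (1 / p0 (ω i).1 b ^ (2 * α)))
    refine ⟨this.1, this.2.trans ?_⟩
    apply Finset.sum_congr rfl
    intro a _
    simp only [hq]; ring
  have hcb : ∀ t : H × X, ‖c t.2 (ev t.1 t.2)‖ ≤ 1 := by
    intro t
    have := hc t.2 (ev t.1 t.2)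
    rw [Real.norm_eq_abs, abs_le]
    exact ⟨this.1, by linarith [this.2]⟩
  have Fm : Integrable m Q ∧
      ∫ h, m h ∂Q = ∫ x, ∑ a, (Q {h | ev h x = a}).toReal * c x a ∂ν := by
    have hI : Integrable (fun t : H × X => c t.2 (ev t.1 t.2)) (Q.prod ν) :=
      Integrable.of_bound hcx.aestronglyMeasurable 1 (Filter.Eventually.of_forall hcb)
    refine ⟨hI.integral_prod_left, ?_⟩
    simp only [hm]
    rw [integral_integral_swap (f := fun h x => c x (ev h x)) hI]
    apply integral_congr_ae
    refine Filter.Eventually.of_forall fun x => ?_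
    exact (pbi_fin Q (fun h => ev h x) (hevx x) (fun b => c x b)).2
  rw [← Fm.2]
  set k := (klDiv Q P).toReal with hk
  -- term 1
  have T1 : |∫ h, m h ∂Q - (n:ℝ)⁻¹ * ∑ i, ∑ a, q i a * c (ω i).1 a|
      ≤ √((k + Real.log (4 * √n / δ)) / (2 * n)) := by
    have hDi : Integrable (fun h => D h ω) Q := by
      have : Integrable (fun h => (n:ℝ)⁻¹ * ∑ i, L (h, ω i)) Q :=
        (integrable_finsetSum _ fun i _ => (FL i).1).const_mul _
      exact this.sub Fm.1
    have hDe : ∫ h, D h ω ∂Q = (n:ℝ)⁻¹ * ∑ i, ∑ a, q i a * c (ω i).1 a - ∫ h, m h ∂Q := by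
      have h0 : Integrable (fun h => (n:ℝ)⁻¹ * ∑ i, L (h, ω i)) Q :=
        (integrable_finsetSum _ fun i _ => (FL i).1).const_mul _
      simp only [hD]
      rw [integral_sub h0 Fm.1, integral_const_mul, integral_finsetSum _ fun i _ => (FL i).1]
      simp only [(FL _).2]
    have hmeasD : Measurable fun h => D h ω := by fun_prop
    have hDb : ∀ h, ‖D h ω‖ ≤ 2 := by
      intro h
      have a1 : |(n:ℝ)⁻¹ * ∑ i, L (h, ω i)| ≤ 1 := by
        rw [abs_mul, abs_of_pos (inv_pos.2 hn0), inv_mul_le_iff₀ hn0, mul_one]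
        refine (Finset.abs_sum_le_sum_abs _ _).trans ?_
        calc _ ≤ ∑ i : Fin n, (1:ℝ) := Finset.sum_le_sum fun i _ => hcb (h, (ω i).1)
          _ = n := by simp
      have a2 : |m h| ≤ 1 := by
        have := norm_integral_le_of_norm_le_const (μ := ν) (f := fun x => c x (ev h x)) (C := 1)
          (Filter.Eventually.of_forall fun x => hcb (h, x))
        simpa using this
      rw [Real.norm_eq_abs]
      calc _ ≤ |(n:ℝ)⁻¹ * ∑ i, L (h, ω i)| + |m h| := abs_sub _ _
        _ ≤ 2 := by linarith
    have hD2 : Integrable (fun h => 2 * (n:ℝ) * (D h ω)^2) Q := by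
      apply Integrable.const_mul
      refine Integrable.of_bound (by fun_prop) 4 (Filter.Eventually.of_forall fun h => ?_)
      rw [norm_pow]
      have := hDb h
      nlinarith [norm_nonneg (D h ω)]
    have dv := pbi_dv Q P hkl (fun h => 2 * (n:ℝ) * (D h ω)^2) (by fun_prop) hD2
      (4 * √n / δ) (by positivity) g1
    rw [← hk] at dv
    set t := ∫ h, D h ω ∂Q with ht
    have jen : 2 * (n:ℝ) * t^2 ≤ ∫ h, 2 * (n:ℝ) * (D h ω)^2 ∂Q := by
      have e : ∫ h, (2 * (n:ℝ)) * (2 * t * D h ω - t^2) ∂Q = 2 * (n:ℝ) * t^2 := by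
        rw [integral_const_mul, integral_sub (hDi.const_mul _) (integrable_const _),
          integral_const_mul, ← ht, integral_const]
        simp only [probReal_univ, smul_eq_mul]; ring
      rw [← e]
      apply integral_mono (((hDi.const_mul _).sub (integrable_const _)).const_mul _) hD2
      intro h
      have : 2 * t * D h ω - t^2 ≤ (D h ω)^2 := by nlinarith [sq_nonneg (D h ω - t)]
      exact mul_le_mul_of_nonneg_left this (by positivity)
    rw [abs_sub_comm, ← hDe]
    apply Real.abs_le_sqrt
    rw [le_div_iff₀ (by positivity)]
    linarith
  -- term 2
  have T2 : |(n:ℝ)⁻¹ * ∑ i, ∑ a, q i a * c (ω i).1 a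
      - (n:ℝ)⁻¹ * ∑ i, ∑ a, q i a * (c (ω i).1 a * p0 (ω i).1 a ^ (1 - α))|
      ≤ 1 - (n:ℝ)⁻¹ * ∑ i, ∑ a, q i a * p0 (ω i).1 a ^ (1 - α) := by
    have hone : (1:ℝ) = (n:ℝ)⁻¹ * ∑ i : Fin n, ∑ a, q i a := by
      simp [hq1, hn0.ne']
    rw [← mul_sub, ← Finset.sum_sub_distrib]
    have hrhs : 1 - (n:ℝ)⁻¹ * ∑ i, ∑ a, q i a * p0 (ω i).1 a ^ (1 - α)
        = (n:ℝ)⁻¹ * ∑ i, (∑ a, q i a - ∑ a, q i a * p0 (ω i).1 a ^ (1 - α)) := by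
      rw [Finset.sum_sub_distrib, mul_sub, ← hone]
    rw [hrhs]
    rw [abs_mul, abs_of_pos (inv_pos.2 hn0)]
    gcongr
    refine (Finset.abs_sum_le_sum_abs _ _).trans ?_
    gcongr with i
    rw [← Finset.sum_sub_distrib, ← Finset.sum_sub_distrib]
    refine (Finset.abs_sum_le_sum_abs _ _).trans ?_
    gcongr with a
    have hple : p0 (ω i).1 a ≤ 1 := by
      rw [← hp0sum (ω i).1]
      exact Finset.single_le_sum (f := fun a => p0 (ω i).1 a)
        (fun a _ => (hp0pos _ a).le) (Finset.mem_univ a)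
    have hr1 : p0 (ω i).1 a ^ (1 - α) ≤ 1 :=
      Real.rpow_le_one (hp0pos _ _).le hple (by linarith [hα.2])
    have hcc := hc (ω i).1 a
    rw [show q i a * c (ω i).1 a - q i a * (c (ω i).1 a * p0 (ω i).1 a ^ (1 - α))
      = -(q i a * ((-c (ω i).1 a) * (1 - p0 (ω i).1 a ^ (1 - α)))) by ring, abs_neg,
      abs_of_nonneg (mul_nonneg (hq0 i a)
        (mul_nonneg (by linarith [hcc.2]) (by linarith))),
      show q i a - q i a * p0 (ω i).1 a ^ (1 - α)
        = q i a * (1 * (1 - p0 (ω i).1 a ^ (1 - α))) by ring]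
    apply mul_le_mul_of_nonneg_left _ (hq0 i a)
    apply mul_le_mul_of_nonneg_right _ (by linarith)
    linarith [hcc.1]
  -- term 3
  set u := ∑ i, c (ω i).1 (ω i).2 * q i (ω i).2 / p0 (ω i).1 (ω i).2 ^ α with hu
  set mm := ∑ i, ∑ a, q i a * (c (ω i).1 a * p0 (ω i).1 a ^ (1 - α)) with hmmdef
  set s := ∑ i, q i (ω i).2 * c (ω i).1 (ω i).2 ^ 2 / p0 (ω i).1 (ω i).2 ^ (2 * α) with hsdef
  set v := ∑ i, ∑ a, p0 (ω i).1 a * (q i a / p0 (ω i).1 a ^ (2 * α)) with hv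
  have hs_nonneg : 0 ≤ s := Finset.sum_nonneg fun i _ =>
    div_nonneg (mul_nonneg (hq0 _ _) (sq_nonneg _)) (hppos _ _ _).le
  have hv_nonneg : 0 ≤ v := Finset.sum_nonneg fun i _ => Finset.sum_nonneg fun a _ =>
    mul_nonneg (hp0pos _ _).le (div_nonneg (hq0 _ _) (hppos _ _ _).le)
  have d2 : lam * (mm - u) - lam^2/2 * s ≤ k + Real.log (4 / δ) := by
    have hi : ∀ i ∈ Finset.univ, Integrable
        (fun h => lam * (M (h, ω i) - U (h, ω i)) - lam^2/2 * S (h, ω i)) Q := fun i _ =>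
      (((FM i).1.sub (FU i).1).const_mul _).sub ((FS i).1.const_mul _)
    have dv := pbi_dv Q P hkl
      (fun h => ∑ i, (lam * (M (h, ω i) - U (h, ω i)) - lam^2/2 * S (h, ω i))) (by fun_prop)
      (integrable_finsetSum _ hi) (4 / δ) (by positivity) g2
    refine le_trans (le_of_eq ?_) dv
    rw [integral_finsetSum _ hi, hu, hmmdef, hsdef, ← Finset.sum_sub_distrib, Finset.mul_sum,
      Finset.mul_sum, ← Finset.sum_sub_distrib]
    apply Finset.sum_congr rfl
    intro i _
    have e1 : Integrable (fun h => lam * (M (h, ω i) - U (h, ω i))) Q :=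
      ((FM i).1.sub (FU i).1).const_mul _
    rw [integral_sub e1 ((FS i).1.const_mul _), integral_const_mul,
      integral_const_mul, integral_sub (FM i).1 (FU i).1, (FM i).2, (FU i).2, (FS i).2]
  have d3 : lam * (u - mm) - lam^2/2 * v ≤ k + Real.log (4 / δ) := by
    have hi : ∀ i ∈ Finset.univ, Integrable
        (fun h => lam * (U (h, ω i) - M (h, ω i)) - lam^2/2 * V (h, ω i)) Q := fun i _ =>
      (((FU i).1.sub (FM i).1).const_mul _).sub ((FV i).1.const_mul _)
    have dv := pbi_dv Q P hkl
      (fun h => ∑ i, (lam * (U (h, ω i) - M (h, ω i)) - lam^2/2 * V (h, ω i))) (by fun_prop)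
      (integrable_finsetSum _ hi) (4 / δ) (by positivity) g3
    refine le_trans (le_of_eq ?_) dv
    rw [integral_finsetSum _ hi, hu, hmmdef, hv, ← Finset.sum_sub_distrib, Finset.mul_sum,
      Finset.mul_sum, ← Finset.sum_sub_distrib]
    apply Finset.sum_congr rfl
    intro i _
    have e1 : Integrable (fun h => lam * (U (h, ω i) - M (h, ω i))) Q :=
      ((FU i).1.sub (FM i).1).const_mul _
    rw [integral_sub e1 ((FV i).1.const_mul _), integral_const_mul,
      integral_const_mul, integral_sub (FU i).1 (FM i).1, (FM i).2, (FU i).2, (FV i).2]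
  have T3 : |(n:ℝ)⁻¹ * mm - (n:ℝ)⁻¹ * u|
      ≤ (k + Real.log (4 / δ)) / (n * lam) + lam / 2 * ((n:ℝ)⁻¹ * (v + s)) := by
    have ee : (k + Real.log (4 / δ)) / (n * lam) + lam / 2 * ((n:ℝ)⁻¹ * (v + s))
        = ((k + Real.log (4 / δ)) + lam^2/2 * (v + s)) / (n * lam) := by
      field_simp
    have e2 : (n:ℝ)⁻¹ * mm - (n:ℝ)⁻¹ * u = (lam * (mm - u)) / (n * lam) := by
      field_simp
    rw [ee, e2, abs_div, abs_of_pos (a := (n:ℝ) * lam) (by positivity)]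
    apply div_le_div_of_nonneg_right _ (by positivity)
    have p1 : 0 ≤ lam^2/2 * s := by positivity
    have p2 : 0 ≤ lam^2/2 * v := by positivity
    rw [abs_le]
    constructor <;> nlinarith
  have hsum : ∑ i, ((∑ a, p0 (ω i).1 a * (q i a / p0 (ω i).1 a ^ (2 * α)))
      + q i (ω i).2 * c (ω i).1 (ω i).2 ^ 2 / p0 (ω i).1 (ω i).2 ^ (2 * α)) = v + s :=
    Finset.sum_add_distrib
  rw [← hsum] at T3
  have tri := abs_add_three
    (∫ h, m h ∂Q - (n:ℝ)⁻¹ * ∑ i, ∑ a, q i a * c (ω i).1 a)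
    ((n:ℝ)⁻¹ * ∑ i, ∑ a, q i a * c (ω i).1 a - (n:ℝ)⁻¹ * mm)
    ((n:ℝ)⁻¹ * mm - (n:ℝ)⁻¹ * u)
  rw [show (∫ h, m h ∂Q - (n:ℝ)⁻¹ * ∑ i, ∑ a, q i a * c (ω i).1 a) +
    ((n:ℝ)⁻¹ * ∑ i, ∑ a, q i a * c (ω i).1 a - (n:ℝ)⁻¹ * mm) +
    ((n:ℝ)⁻¹ * mm - (n:ℝ)⁻¹ * u) = ∫ h, m h ∂Q - (n:ℝ)⁻¹ * u by ring] at tri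
  linarith
end

section
/- Let λ > 0, n ≥ 1, δ ∈ (0,1), α ∈ [0,1], and let P be a fixed prior on H. Define the smoothed risk R^α(π_Q) = E_{x∼ν, a∼π0(·|x)}[π_Q(a|x)·c(x,a)/π0(a|x)^α]. Then with probability at least 1−δ over draws of D_n, the following holds simultaneously for all posteriors Q on H: |R^α(π_Q) − R̂_n^α(π_Q)| ≤ (D_KL(Q‖P)+log(2/δ))/(λn) + (λ/(2n))·Σ_{i=1}^n π_Q(a_i|x_i)c_i²/π0(a_i|x_i)^{2α} + (λ/2)·E_{x∼ν, a∼π0(·|x)}[π_Q(a|x)·c(x,a)²/π0(a|x)^{2α}]. -/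
open MeasureTheory ProbabilityTheory Real

lemma exp_neg_le_quad {x : ℝ} (hx : 0 ≤ x) : exp (-x) ≤ 1 - x + x ^ 2 / 2 := by
  have h := quadratic_le_exp_of_nonneg hx
  have hp : 0 < 1 - x + x ^ 2 / 2 := by nlinarith [sq_nonneg (x - 1)]
  rw [Real.exp_neg, inv_le_comm₀ (exp_pos x) hp]
  refine le_trans ?_ h
  rw [inv_le_iff_one_le_mul₀ hp]
  nlinarith [pow_nonneg hx 4]

lemma exp_sub_sq_le {x : ℝ} (hx : 0 ≤ x) : exp (x - x ^ 2 / 2) ≤ 1 + x := by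
  rw [← Real.le_log_iff_exp_le (by linarith)]
  refine le_trans ?_ (le_log_one_add_of_nonneg hx)
  rw [le_div_iff₀ (by linarith)]
  nlinarith [pow_nonneg hx 3]

section
variable {S : Type*} [MeasurableSpace S] (μ : Measure S) [IsProbabilityMeasure μ]

lemma expA {Z : S → ℝ} (h0 : ∀ s, 0 ≤ Z s) (h1 : Integrable Z μ)
    (h2 : Integrable (fun s => Z s ^ 2) μ) {l : ℝ} (hl : 0 < l) :
    ∫⁻ s, ENNReal.ofReal (exp (l * (∫ s, Z s ∂μ) - l * Z s - l ^ 2 / 2 * ∫ s, Z s ^ 2 ∂μ)) ∂μ ≤ 1 := by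
  set m := ∫ s, Z s ∂μ
  set m2 := ∫ s, Z s ^ 2 ∂μ
  have hi : Integrable (fun s => 1 - l * Z s + l ^ 2 / 2 * Z s ^ 2) μ :=
    ((integrable_const _).sub (h1.const_mul l)).add (h2.const_mul _)
  calc _ ≤ ∫⁻ s, ENNReal.ofReal (exp (l * m - l ^ 2 / 2 * m2) *
            (1 - l * Z s + l ^ 2 / 2 * Z s ^ 2)) ∂μ := by
        refine lintegral_mono fun s => ENNReal.ofReal_le_ofReal ?_
        have := exp_neg_le_quad (mul_nonneg hl.le (h0 s))
        rw [show l * m - l * Z s - l ^ 2 / 2 * m2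
          = (l * m - l ^ 2 / 2 * m2) + (-(l * Z s)) by ring, exp_add]
        refine mul_le_mul_of_nonneg_left (this.trans (le_of_eq (by ring))) (exp_pos _).le
    _ = ENNReal.ofReal (∫ s, (exp (l * m - l ^ 2 / 2 * m2) *
            (1 - l * Z s + l ^ 2 / 2 * Z s ^ 2)) ∂μ) := by
        rw [ofReal_integral_eq_lintegral_ofReal (hi.const_mul _)]
        refine Filter.Eventually.of_forall fun s => ?_
        have := exp_neg_le_quad (mul_nonneg hl.le (h0 s))
        have h3 := exp_pos (-(l * Z s))
        exact mul_nonneg (exp_pos _).le (by nlinarith)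
    _ ≤ ENNReal.ofReal 1 := by
        refine ENNReal.ofReal_le_ofReal ?_
        have hs : Integrable (fun s => 1 - l * Z s) μ := (integrable_const _).sub (h1.const_mul l)
        rw [integral_const_mul, integral_add hs (h2.const_mul _),
          integral_sub (integrable_const _) (h1.const_mul l),
          integral_const_mul, integral_const_mul]
        simp only [integral_const, probReal_univ, smul_eq_mul, mul_one]
        change _ * (1 - l * m + l ^ 2 / 2 * m2) ≤ 1
        have := add_one_le_exp (-(l * m - l ^ 2 / 2 * m2))
        calc _ ≤ exp (l * m - l ^ 2 / 2 * m2) * exp (-(l * m - l ^ 2 / 2 * m2)) :=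
              mul_le_mul_of_nonneg_left (by linarith) (exp_pos _).le
          _ = 1 := by rw [← exp_add]; simp
    _ = 1 := by simp

lemma expB {Z : S → ℝ} (h0 : ∀ s, 0 ≤ Z s) (h1 : Integrable Z μ) {l : ℝ} (hl : 0 < l) :
    ∫⁻ s, ENNReal.ofReal (exp (l * Z s - l ^ 2 / 2 * Z s ^ 2 - l * (∫ s, Z s ∂μ))) ∂μ ≤ 1 := by
  set m := ∫ s, Z s ∂μ
  have hi : Integrable (fun s => 1 + l * Z s) μ :=
    ((integrable_const _).add (h1.const_mul l))
  calc _ ≤ ∫⁻ s, ENNReal.ofReal (exp (-(l * m)) * (1 + l * Z s)) ∂μ := by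
        refine lintegral_mono fun s => ENNReal.ofReal_le_ofReal ?_
        have := exp_sub_sq_le (mul_nonneg hl.le (h0 s))
        rw [show l * Z s - l ^ 2 / 2 * Z s ^ 2 - l * m
          = -(l * m) + (l * Z s - (l * Z s) ^ 2 / 2) by ring, exp_add]
        exact mul_le_mul_of_nonneg_left this (exp_pos _).le
    _ = ENNReal.ofReal (∫ s, (exp (-(l * m)) * (1 + l * Z s)) ∂μ) := by
        rw [ofReal_integral_eq_lintegral_ofReal (hi.const_mul _)]
        refine Filter.Eventually.of_forall fun s => ?_
        have := mul_nonneg hl.le (h0 s)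
        exact mul_nonneg (exp_pos _).le (by linarith)
    _ ≤ ENNReal.ofReal 1 := by
        refine ENNReal.ofReal_le_ofReal ?_
        rw [integral_const_mul, integral_add (integrable_const _) (h1.const_mul l),
          integral_const_mul]
        simp only [integral_const, probReal_univ, smul_eq_mul, mul_one]
        have := add_one_le_exp (l * m)
        calc _ ≤ exp (-(l * m)) * exp (l * m) :=
              mul_le_mul_of_nonneg_left (by linarith) (exp_pos _).le
          _ = 1 := by rw [← exp_add]; simp
    _ = 1 := by simp

lemma pi_prod_le {n : ℕ} {φ : S → ENNReal} (hφ : Measurable φ) (h : ∫⁻ s, φ s ∂μ ≤ 1) :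
    ∫⁻ ω, ∏ i, φ (ω i) ∂(Measure.pi fun _ : Fin n => μ) ≤ 1 := by
  have hind : iIndepFun (fun (i : Fin n) (ω : Fin n → S) => φ (ω i))
      (Measure.pi fun _ : Fin n => μ) :=
    iIndepFun_pi (X := fun _ => φ) (fun _ => hφ.aemeasurable)
  rw [lintegral_prod_eq_prod_lintegral_of_indepFun Finset.univ _ hind
    (fun i => hφ.comp (measurable_pi_apply i))]
  refine Finset.prod_le_one' fun i _ => ?_
  have := (measurePreserving_eval (fun _ : Fin n => μ) i).lintegral_comp hφ
  simp only [Function.eval] at this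
  rw [this]; exact h

variable {H : Type*} [MeasurableSpace H]

lemma dv (P Q : Measure H) [IsProbabilityMeasure P] [IsProbabilityMeasure Q] (hQP : Q ≪ P)
    (hllr : Integrable (llr Q P) Q) {F : H → ENNReal} (hF : Measurable F) {g : H → ℝ}
    (hg : Integrable g Q) (hgF : ∀ᵐ h ∂Q, ENNReal.ofReal (exp (g h)) ≤ F h) {C : ℝ} (hC : 0 < C)
    (hFC : ∫⁻ h, F h ∂P ≤ ENNReal.ofReal C) :
    ∫ h, g h ∂Q ≤ ∫ h, llr Q P h ∂Q + log C := by
  have hle : ∫⁻ h, ENNReal.ofReal (exp (g h - llr Q P h)) ∂Q ≤ ENNReal.ofReal C := by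
    calc _ ≤ ∫⁻ h, F h * (Q.rnDeriv P h)⁻¹ ∂Q := by
          refine lintegral_mono_ae ?_
          filter_upwards [hgF, Measure.rnDeriv_pos hQP, hQP.ae_le (Measure.rnDeriv_lt_top Q P)]
            with h h1 h2 h3
          rw [exp_sub, llr, exp_log (ENNReal.toReal_pos h2.ne' h3.ne),
            ENNReal.ofReal_div_of_pos (ENNReal.toReal_pos h2.ne' h3.ne),
            ENNReal.ofReal_toReal h3.ne, div_eq_mul_inv]
          gcongr
      _ = ∫⁻ h, Q.rnDeriv P h * (F h * (Q.rnDeriv P h)⁻¹) ∂P := by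
          rw [lintegral_rnDeriv_mul hQP]
          exact (hF.mul (Measure.measurable_rnDeriv Q P).inv).aemeasurable
      _ ≤ ∫⁻ h, F h ∂P := by
          refine lintegral_mono fun h => ?_
          calc _ = F h * (Q.rnDeriv P h * (Q.rnDeriv P h)⁻¹) := by ring
            _ ≤ F h * 1 := by gcongr; exact ENNReal.mul_inv_le_one _
            _ = F h := mul_one _
      _ ≤ _ := hFC
  have hu : Integrable (fun h => g h - llr Q P h) Q := hg.sub hllr
  have hmeas : AEStronglyMeasurable (fun h => exp (g h - llr Q P h)) Q :=
    continuous_exp.comp_aestronglyMeasurable hu.1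
  have hexp : Integrable (fun h => exp (g h - llr Q P h)) Q := by
    refine ⟨hmeas, ?_⟩
    rw [hasFiniteIntegral_iff_ofReal (Filter.Eventually.of_forall fun _ => (exp_pos _).le)]
    exact hle.trans_lt ENNReal.ofReal_lt_top
  have hInteg : ∫ h, exp (g h - llr Q P h) ∂Q ≤ C := by
    rw [← ofReal_integral_eq_lintegral_ofReal hexp
      (Filter.Eventually.of_forall fun _ => (exp_pos _).le)] at hle
    exact (ENNReal.ofReal_le_ofReal_iff hC.le).1 hle
  have key : ∫ h, (1 - log C + (g h - llr Q P h)) ∂Q ≤ ∫ h, C⁻¹ * exp (g h - llr Q P h) ∂Q := by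
    refine integral_mono ((integrable_const _).add hu) (hexp.const_mul _) fun h => ?_
    have := add_one_le_exp (g h - llr Q P h - log C)
    rw [exp_sub _ (log C), exp_log hC] at this
    simp only
    rw [inv_mul_eq_div]; linarith
  rw [integral_add (integrable_const _) hu, integral_sub hg hllr, integral_const_mul] at key
  simp only [integral_const, probReal_univ, smul_eq_mul, one_mul] at key
  have : C⁻¹ * ∫ h, exp (g h - llr Q P h) ∂Q ≤ 1 := by
    rw [inv_mul_le_iff₀ hC]; simpa using hInteg
  linarith

lemma good_event (P : Measure H) [IsProbabilityMeasure P] {n : ℕ} {φ ψ : H → S → ENNReal}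
    (hφ : Measurable (Function.uncurry φ)) (hψ : Measurable (Function.uncurry ψ))
    (h1 : ∀ h, ∫⁻ s, φ h s ∂μ ≤ 1) (h2 : ∀ h, ∫⁻ s, ψ h s ∂μ ≤ 1) {δ : ℝ} (hδ : 0 < δ) :
    ENNReal.ofReal (1 - δ) ≤ (Measure.pi fun _ : Fin n => μ)
      {ω | ∫⁻ h, ∏ i, φ h (ω i) ∂P ≤ ENNReal.ofReal (2 / δ) ∧
        ∫⁻ h, ∏ i, ψ h (ω i) ∂P ≤ ENNReal.ofReal (2 / δ)} := by
  have m1 : Measurable fun q : (Fin n → S) × H => ∏ i, φ q.2 (q.1 i) :=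
    Finset.measurable_fun_prod _ fun i _ =>
      hφ.comp (measurable_snd.prodMk ((measurable_pi_apply i).comp measurable_fst))
  have m2 : Measurable fun q : (Fin n → S) × H => ∏ i, ψ q.2 (q.1 i) :=
    Finset.measurable_fun_prod _ fun i _ =>
      hψ.comp (measurable_snd.prodMk ((measurable_pi_apply i).comp measurable_fst))
  let W : (Fin n → S) → ENNReal := fun ω => ∫⁻ h, (∏ i, φ h (ω i) + ∏ i, ψ h (ω i)) ∂P
  have hW : Measurable W := (m1.add m2).lintegral_prod_right'
  have hEW : ∫⁻ ω, W ω ∂(Measure.pi fun _ : Fin n => μ) ≤ 2 := by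
    rw [lintegral_lintegral_swap (m1.add m2).aemeasurable]
    calc _ ≤ ∫⁻ h, 2 ∂P := by
          refine lintegral_mono fun h => ?_
          have m1' : Measurable fun ω : Fin n → S => ∏ i, φ h (ω i) :=
            m1.comp (measurable_prodMk_right (y := h))
          rw [lintegral_add_left m1']
          have e1 := pi_prod_le μ (n := n) (hφ.comp (measurable_prodMk_left (x := h))) (h1 h)
          have e2 := pi_prod_le μ (n := n) (hψ.comp (measurable_prodMk_left (x := h))) (h2 h)
          rw [← one_add_one_eq_two]
          exact add_le_add e1 e2
      _ = 2 := by simp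
  have hmarkov : (Measure.pi fun _ : Fin n => μ) {ω | ENNReal.ofReal (2 / δ) ≤ W ω}
      ≤ ENNReal.ofReal δ := by
    have := (mul_meas_ge_le_lintegral hW (ENNReal.ofReal (2 / δ))).trans hEW
    have h2δ : ENNReal.ofReal (2 / δ) * ENNReal.ofReal δ = 2 := by
      rw [← ENNReal.ofReal_mul (by positivity), div_mul_cancel₀ _ hδ.ne']; simp
    rw [← h2δ] at this
    exact (ENNReal.mul_le_mul_iff_right (by simpa using hδ) ENNReal.ofReal_ne_top).1 this
  have hcompl := prob_compl_eq_one_sub (μ := Measure.pi fun _ : Fin n => μ)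
    (measurableSet_le (measurable_const (a := ENNReal.ofReal (2 / δ))) hW)
  refine le_trans ?_ (measure_mono (s := {ω | ENNReal.ofReal (2 / δ) ≤ W ω}ᶜ) ?_)
  · rw [hcompl, ENNReal.ofReal_sub _ hδ.le, ENNReal.ofReal_one]
    exact tsub_le_tsub_left hmarkov 1
  · intro ω hω
    simp only [Set.mem_compl_iff, Set.mem_ofPred_eq, not_le] at hω
    exact ⟨(lintegral_mono fun h => le_self_add).trans hω.le,
      (lintegral_mono fun h => le_add_self).trans hω.le⟩

open Classical in
lemma pac_abs (P : Measure H) [IsProbabilityMeasure P] {n : ℕ} (hn : 1 ≤ n) {Z : H → S → ℝ}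
    (hZ : Measurable (Function.uncurry Z)) (h0 : ∀ h s, 0 ≤ Z h s)
    (hb : ∀ s, ∃ b, ∀ h, Z h s ≤ b) {l : ℝ} (hl : 0 < l) {δ : ℝ} (hδ : 0 < δ) :
    ENNReal.ofReal (1 - δ) ≤ (Measure.pi fun _ : Fin n => μ)
      {ω | ∀ Q : Measure H, IsProbabilityMeasure Q → Q ≪ P → Integrable (llr Q P) Q →
        Integrable (fun q : H × S => Z q.1 q.2 ^ 2) (Q.prod μ) →
        |(∫ s, ∫ h, Z h s ∂Q ∂μ) - (n : ℝ)⁻¹ * ∑ i, ∫ h, Z h (ω i) ∂Q|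
          ≤ ((∫ h, llr Q P h ∂Q) + log (2 / δ)) / (l * n)
            + l / (2 * n) * ∑ i, ∫ h, Z h (ω i) ^ 2 ∂Q
            + l / 2 * ∫ s, ∫ h, Z h s ^ 2 ∂Q ∂μ} := by
  have hZ2 : Measurable fun q : H × S => Z q.1 q.2 ^ 2 := hZ.pow_const 2
  let m : H → ℝ := fun h => ∫ s, Z h s ∂μ
  let v : H → ℝ := fun h => ∫ s, Z h s ^ 2 ∂μ
  have hm : Measurable m := (hZ.stronglyMeasurable.integral_prod_right).measurable
  have hv : Measurable v := (hZ2.stronglyMeasurable.integral_prod_right').measurable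
  let T : Set H := {h | Integrable (fun s => Z h s ^ 2) μ}
  have hT : MeasurableSet T := measurableSet_integrable (f := fun h s => Z h s ^ 2)
    hZ2.stronglyMeasurable
  have hZh : ∀ h, Measurable (Z h) := fun h => hZ.comp (measurable_prodMk_left (x := h))
  have hZs : ∀ s, Measurable (fun h => Z h s) := fun s => hZ.comp (measurable_prodMk_right (y := s))
  have hT1 : ∀ h ∈ T, Integrable (Z h) μ := fun h hh =>
    ((memLp_two_iff_integrable_sq (hZh h).aestronglyMeasurable).2 hh).integrable one_le_two
  let a : H → S → ℝ := fun h s => l * m h - l * Z h s - l ^ 2 / 2 * v h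
  let b : H → S → ℝ := fun h s => l * Z h s - l ^ 2 / 2 * Z h s ^ 2 - l * m h
  have hZ' : Measurable fun q : H × S => Z q.1 q.2 := hZ
  have ham : Measurable (Function.uncurry a) := by
    change Measurable fun q : H × S => l * m q.1 - l * Z q.1 q.2 - l ^ 2 / 2 * v q.1
    fun_prop
  have hbm : Measurable (Function.uncurry b) := by
    change Measurable fun q : H × S => l * Z q.1 q.2 - l ^ 2 / 2 * Z q.1 q.2 ^ 2 - l * m q.1
    fun_prop
  let φ : H → S → ENNReal := fun h s => if h ∈ T then ENNReal.ofReal (exp (a h s)) else 0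
  let ψ : H → S → ENNReal := fun h s => if h ∈ T then ENNReal.ofReal (exp (b h s)) else 0
  have hφ : Measurable (Function.uncurry φ) :=
    Measurable.ite (measurable_fst hT) ham.exp.ennreal_ofReal measurable_const
  have hψ : Measurable (Function.uncurry ψ) :=
    Measurable.ite (measurable_fst hT) hbm.exp.ennreal_ofReal measurable_const
  have hφ1 : ∀ h, ∫⁻ s, φ h s ∂μ ≤ 1 := by
    intro h
    by_cases hh : h ∈ T
    · simp only [φ, hh, if_true]; exact expA μ (h0 h) (hT1 h hh) hh hl
    · simp [φ, hh]
  have hψ1 : ∀ h, ∫⁻ s, ψ h s ∂μ ≤ 1 := by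
    intro h
    by_cases hh : h ∈ T
    · simp only [ψ, hh, if_true]; exact expB μ (h0 h) (hT1 h hh) hl
    · simp [ψ, hh]
  refine (good_event μ P (n := n) hφ hψ hφ1 hψ1 hδ).trans (measure_mono ?_)
  rintro ω ⟨hω1, hω2⟩ Q hQ hQP hllr hInteg
  have hn0 : (0 : ℝ) < n := by exact_mod_cast hn
  have hTQ : ∀ᵐ h ∂Q, h ∈ T := hInteg.prod_right_ae
  have hInteg1 : Integrable (Function.uncurry Z) (Q.prod μ) :=
    ((memLp_two_iff_integrable_sq hZ.aestronglyMeasurable).2 hInteg).integrable one_le_two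
  have im : Integrable m Q := hInteg1.integral_prod_left
  have iv : Integrable v Q := hInteg.integral_prod_left
  have iZ : ∀ s, Integrable (fun h => Z h s) Q := by
    intro s
    obtain ⟨B, hB⟩ := hb s
    refine Integrable.of_bound (hZs s).aestronglyMeasurable B
      (Filter.Eventually.of_forall fun h => ?_)
    rw [Real.norm_of_nonneg (h0 h s)]; exact hB h
  have iZ2 : ∀ s, Integrable (fun h => Z h s ^ 2) Q := by
    intro s
    obtain ⟨B, hB⟩ := hb s
    refine Integrable.of_bound ((hZs s).pow_const 2).aestronglyMeasurable (B ^ 2)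
      (Filter.Eventually.of_forall fun h => ?_)
    rw [Real.norm_of_nonneg (sq_nonneg _)]; exact pow_le_pow_left₀ (h0 h s) (hB h) 2
  have ia : ∀ s, Integrable (fun h => a h s) Q := fun s =>
    ((im.const_mul l).sub ((iZ s).const_mul l)).sub (iv.const_mul _)
  have ib : ∀ s, Integrable (fun h => b h s) Q := fun s =>
    (((iZ s).const_mul l).sub ((iZ2 s).const_mul _)).sub (im.const_mul l)
  have swap1 : ∫ s, ∫ h, Z h s ∂Q ∂μ = ∫ h, m h ∂Q := (integral_integral_swap hInteg1).symm
  have swap2 : ∫ s, ∫ h, Z h s ^ 2 ∂Q ∂μ = ∫ h, v h ∂Q :=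
    (integral_integral_swap (f := fun h s => Z h s ^ 2) hInteg).symm
  have hC : 0 < 2 / δ := by positivity
  have mF : ∀ {f : H → S → ENNReal}, Measurable (Function.uncurry f) →
      Measurable fun h => ∏ i, f h (ω i) := fun hf =>
    Finset.measurable_fun_prod _ fun i _ => hf.comp measurable_prodMk_right
  have d1 := dv P Q hQP hllr (mF hφ) (g := fun h => ∑ i, a h (ω i))
    (integrable_finsetSum _ fun i _ => ia _) (by
      filter_upwards [hTQ] with h hh
      simp only [φ, hh, if_true]
      rw [exp_sum, ENNReal.ofReal_prod_of_nonneg fun i _ => (exp_pos _).le]) hC hω1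
  have d2 := dv P Q hQP hllr (mF hψ) (g := fun h => ∑ i, b h (ω i))
    (integrable_finsetSum _ fun i _ => ib _) (by
      filter_upwards [hTQ] with h hh
      simp only [ψ, hh, if_true]
      rw [exp_sum, ENNReal.ofReal_prod_of_nonneg fun i _ => (exp_pos _).le]) hC hω2
  have ea : ∀ s, ∫ h, a h s ∂Q = l * ∫ h, m h ∂Q - l * ∫ h, Z h s ∂Q
      - l ^ 2 / 2 * ∫ h, v h ∂Q := by
    intro s
    have e : Integrable (fun h => l * m h - l * Z h s) Q :=
      (im.const_mul l).sub ((iZ s).const_mul l)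
    simp only [a]
    rw [integral_sub e (iv.const_mul _), integral_sub (im.const_mul l) ((iZ s).const_mul l)]
    simp only [integral_const_mul]
  have eb : ∀ s, ∫ h, b h s ∂Q = l * ∫ h, Z h s ∂Q - l ^ 2 / 2 * ∫ h, Z h s ^ 2 ∂Q
      - l * ∫ h, m h ∂Q := by
    intro s
    have e : Integrable (fun h => l * Z h s - l ^ 2 / 2 * Z h s ^ 2) Q :=
      ((iZ s).const_mul l).sub ((iZ2 s).const_mul _)
    simp only [b]
    rw [integral_sub e (im.const_mul _), integral_sub ((iZ s).const_mul l) ((iZ2 s).const_mul _)]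
    simp only [integral_const_mul]
  rw [integral_finsetSum _ fun i _ => ia _] at d1
  rw [integral_finsetSum _ fun i _ => ib _] at d2
  simp only [ea, Finset.sum_sub_distrib, ← Finset.mul_sum, Finset.sum_const, Finset.card_univ,
    Fintype.card_fin, nsmul_eq_mul] at d1
  simp only [eb, Finset.sum_sub_distrib, ← Finset.mul_sum, Finset.sum_const, Finset.card_univ,
    Fintype.card_fin, nsmul_eq_mul] at d2
  rw [swap1, swap2]
  have p1 : 0 ≤ ∑ i, ∫ h, Z h (ω i) ^ 2 ∂Q :=
    Finset.sum_nonneg fun i _ => integral_nonneg fun h => sq_nonneg _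
  have p2 : 0 ≤ ∫ h, v h ∂Q := integral_nonneg fun h => integral_nonneg fun s => sq_nonneg _
  generalize (∫ h, llr Q P h ∂Q) = k at *
  generalize (∑ i, ∫ h, Z h (ω i) ^ 2 ∂Q) = z2 at *
  generalize (∑ i, ∫ h, Z h (ω i) ∂Q) = z1 at *
  generalize (∫ h, v h ∂Q) = V at *
  generalize (∫ h, m h ∂Q) = M at *
  generalize log (2 / δ) = L at *
  have hln : 0 < l * n := by positivity
  rw [← mul_le_mul_iff_right₀ hln, ← abs_of_pos hln, ← abs_mul, abs_of_pos hln]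
  have eL : l * n * (M - (n : ℝ)⁻¹ * z1) = l * n * M - l * z1 := by field_simp
  have eR : l * n * ((k + L) / (l * n) + l / (2 * n) * z2 + l / 2 * V)
      = k + L + l ^ 2 / 2 * z2 + l ^ 2 / 2 * n * V := by field_simp
  rw [eL, eR, abs_le]
  have q1 : 0 ≤ l ^ 2 / 2 * z2 := by positivity
  have q2 : 0 ≤ l ^ 2 / 2 * n * V := by positivity
  constructor <;> linarith

end

/-- **PAC-Bayes bound for the smoothed risk (Proposition 2).**  With probability at least
`1 − δ` over the logged data, simultaneously for all posteriors `Q` on `H` (with finite KL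
divergence to the prior `P`, and such that the theoretical second-moment term is integrable),
the gap between the smoothed risk `R^α(π_Q)` and its empirical counterpart `R̂ₙ^α(π_Q)` is
controlled by the KL divergence and empirical plus theoretical second moments. -/
theorem pac_bayes_smoothed_risk
    {X : Type*} [MeasurableSpace X] {K : ℕ}
    {H : Type*} [MeasurableSpace H]
    (ν : Measure X) [IsProbabilityMeasure ν]
    (p0 c : X → Fin K → ℝ)
    (hp0meas : ∀ a, Measurable fun x => p0 x a)
    (hcmeas : ∀ a, Measurable fun x => c x a)
    (hp0pos : ∀ x a, 0 < p0 x a) (hp0sum : ∀ x, ∑ a, p0 x a = 1)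
    (hc : ∀ x a, c x a ∈ Set.Icc (-1 : ℝ) 0)
    (ev : H → X → Fin K)
    (hev : Measurable fun q : H × X => ev q.1 q.2)
    (κ0 : Kernel X (Fin K)) [IsMarkovKernel κ0]
    (hκ0 : ∀ x a, κ0 x {a} = ENNReal.ofReal (p0 x a))
    (P : Measure H) [IsProbabilityMeasure P]
    (lam : ℝ) (hlam : 0 < lam) (n : ℕ) (hn : 1 ≤ n)
    (δ : ℝ) (hδ : δ ∈ Set.Ioo (0 : ℝ) 1) (α : ℝ) (hα : α ∈ Set.Icc (0 : ℝ) 1) :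
    ENNReal.ofReal (1 - δ) ≤
      (Measure.pi fun _ : Fin n => ν ⊗ₘ κ0)
        {ω | ∀ Q : Measure H, IsProbabilityMeasure Q → klDiv Q P ≠ ⊤ →
          Integrable (fun x => ∑ a, p0 x a *
              ((Q {h | ev h x = a}).toReal * c x a ^ 2 / p0 x a ^ (2 * α))) ν →
          |(∫ x, ∑ a, p0 x a * ((Q {h | ev h x = a}).toReal * c x a / p0 x a ^ α) ∂ν)
              - (n : ℝ)⁻¹ * ∑ i, c (ω i).1 (ω i).2 * (Q {h | ev h (ω i).1 = (ω i).2}).toReal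
                  / p0 (ω i).1 (ω i).2 ^ α|
            ≤ ((klDiv Q P).toReal + Real.log (2 / δ)) / (lam * n)
              + lam / (2 * n) * ∑ i, (Q {h | ev h (ω i).1 = (ω i).2}).toReal
                  * c (ω i).1 (ω i).2 ^ 2 / p0 (ω i).1 (ω i).2 ^ (2 * α)
              + lam / 2 * ∫ x, ∑ a, p0 x a *
                  ((Q {h | ev h x = a}).toReal * c x a ^ 2 / p0 x a ^ (2 * α)) ∂ν} := by
  have hQm : ∀ x a, MeasurableSet {h : H | ev h x = a} := fun x a =>
    (hev.comp (measurable_prodMk_right (y := x))) (measurableSet_singleton a)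
  let w : X × Fin K → ℝ := fun s => -c s.1 s.2 / p0 s.1 s.2 ^ α
  have hw0 : ∀ s, 0 ≤ w s := fun s =>
    div_nonneg (by have := (hc s.1 s.2).2; linarith) (rpow_nonneg (hp0pos _ _).le _)
  have hwm : Measurable w := by
    refine measurable_from_prod_countable_left fun a => ?_
    exact (hcmeas a).neg.div ((hp0meas a).pow_const α)
  let Z : H → X × Fin K → ℝ := fun h s => if ev h s.1 = s.2 then w s else 0
  have hZ : Measurable (Function.uncurry Z) := by
    refine Measurable.ite ?_ (hwm.comp measurable_snd) measurable_const
    exact measurableSet_eq_fun (hev.comp (measurable_fst.prodMk measurable_snd.fst))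
      measurable_snd.snd
  have h0 : ∀ h s, 0 ≤ Z h s := by
    intro h s
    simp only [Z]
    split_ifs
    · exact hw0 s
    · exact le_rfl
  have hb : ∀ s, ∃ b, ∀ h, Z h s ≤ b := by
    intro s
    refine ⟨w s, fun h => ?_⟩
    simp only [Z]
    split_ifs
    · exact le_rfl
    · exact hw0 s
  refine (pac_abs (ν ⊗ₘ κ0) P hn hZ h0 hb hlam hδ.1).trans (measure_mono ?_)
  intro ω hω Q hQ hkl hInteg
  have hkl' : Q ≪ P ∧ Integrable (llr Q P) Q := by
    by_contra hcon
    exact hkl (by simp [klDiv, hcon])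
  have hkle : ∫ h, llr Q P h ∂Q ≤ (klDiv Q P).toReal := by
    rw [klDiv, if_pos hkl', ENNReal.toReal_ofReal']
    exact le_max_left _ _
  have hite : ∀ (s : X × Fin K) (r : ℝ), ∫ h, (if ev h s.1 = s.2 then r else 0) ∂Q
      = (Q {h | ev h s.1 = s.2}).toReal * r := by
    intro s r
    have := integral_indicator_const (μ := Q) r (hQm s.1 s.2)
    simp only [Set.indicator_apply, Set.mem_ofPred_eq, smul_eq_mul] at this
    exact this
  have e1 : ∀ s : X × Fin K, ∫ h, Z h s ∂Q
      = -(c s.1 s.2 * (Q {h | ev h s.1 = s.2}).toReal / p0 s.1 s.2 ^ α) := by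
    intro s
    rw [hite s (w s)]
    simp only [w]
    ring
  have hsq : ∀ s, w s ^ 2 = c s.1 s.2 ^ 2 / p0 s.1 s.2 ^ (2 * α) := by
    intro s
    simp only [w]
    rw [div_pow, neg_sq, mul_comm 2 α, rpow_mul (hp0pos _ _).le, rpow_two]
  have e2 : ∀ s : X × Fin K, ∫ h, Z h s ^ 2 ∂Q
      = (Q {h | ev h s.1 = s.2}).toReal * c s.1 s.2 ^ 2 / p0 s.1 s.2 ^ (2 * α) := by
    intro s
    have : ∀ h, Z h s ^ 2 = if ev h s.1 = s.2 then w s ^ 2 else 0 := by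
      intro h
      simp only [Z]
      split_ifs <;> simp
    simp only [this]
    rw [hite s (w s ^ 2), hsq, mul_div_assoc]
  have hreal : ∀ x a, (κ0 x).real {a} = p0 x a := by
    intro x a
    rw [measureReal_def, hκ0, ENNReal.toReal_ofReal (hp0pos x a).le]
  have hker : ∀ x (f : Fin K → ℝ), ∫ a, f a ∂(κ0 x) = ∑ a, p0 x a * f a := by
    intro x f
    rw [integral_fintype Integrable.of_finite]
    simp only [hreal, smul_eq_mul]
  have hZ2 : Measurable fun q : H × (X × Fin K) => Z q.1 q.2 ^ 2 := hZ.pow_const 2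
  have hq2m : Measurable fun s => ∫ h, Z h s ^ 2 ∂Q :=
    (hZ2.stronglyMeasurable.integral_prod_left').measurable
  have hq2i : Integrable (fun s => ∫ h, Z h s ^ 2 ∂Q) (ν ⊗ₘ κ0) := by
    rw [Measure.integrable_compProd_iff hq2m.aestronglyMeasurable]
    refine ⟨Filter.Eventually.of_forall fun x => Integrable.of_finite, ?_⟩
    simp only [hker]
    convert hInteg using 4 with x a
    rw [Real.norm_of_nonneg (integral_nonneg fun h => sq_nonneg _), e2]
  have hprod : Integrable (fun q : H × (X × Fin K) => Z q.1 q.2 ^ 2) (Q.prod (ν ⊗ₘ κ0)) := by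
    rw [integrable_prod_iff' hZ2.aestronglyMeasurable]
    constructor
    · refine Filter.Eventually.of_forall fun s => ?_
      obtain ⟨B, hB⟩ := hb s
      refine Integrable.of_bound (hZ2.comp measurable_prodMk_right).aestronglyMeasurable (B ^ 2)
        (Filter.Eventually.of_forall fun h => ?_)
      rw [Real.norm_of_nonneg (sq_nonneg _)]
      exact pow_le_pow_left₀ (h0 h s) (hB h) 2
    · simpa only [norm_pow, Real.norm_eq_abs, sq_abs] using hq2i
  have hq1i : Integrable (fun s => ∫ h, Z h s ∂Q) (ν ⊗ₘ κ0) :=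
    (((memLp_two_iff_integrable_sq hZ.aestronglyMeasurable).2 hprod).integrable
      one_le_two).integral_prod_right
  have key := hω Q hQ hkl'.1 hkl'.2 hprod
  rw [Measure.integral_compProd hq1i, Measure.integral_compProd hq2i] at key
  simp only [hker, e1, e2] at key
  have f1 : ∫ x, ∑ a, p0 x a * -(c x a * (Q {h | ev h x = a}).toReal / p0 x a ^ α) ∂ν
      = -∫ x, ∑ a, p0 x a * ((Q {h | ev h x = a}).toReal * c x a / p0 x a ^ α) ∂ν := by
    rw [← integral_neg]
    congr 1
    ext x
    rw [← Finset.sum_neg_distrib]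
    refine Finset.sum_congr rfl fun a _ => ?_
    ring
  rw [f1, Finset.sum_neg_distrib, mul_neg, neg_sub_neg, abs_sub_comm] at key
  refine key.trans ?_
  have hln : 0 < lam * n := by
    have : (0 : ℝ) < n := by exact_mod_cast hn
    positivity
  gcongr
end

section
/- (Extension of the main theorem, uniform in λ) Let n ≥ 1, δ ∈ (0,1), α ∈ [0,1], and let P be a fixed prior on H. Then with probability at least 1−δ over draws of D_n, the following holds simultaneously for all posteriors Q on H and all λ ∈ (0,1): |R(π_Q) − R̂_n^α(π_Q)| ≤ √(KL1'(π_Q,λ)/(2n)) + B_n^α(π_Q) + KL2'(π_Q,λ)/(nλ) + (λ/2)·V̄_n^α(π_Q), where KL1'(π_Q,λ) = D_KL(Q‖P) + log(8√n/(δλ)) and KL2'(π_Q,λ) = 2(D_KL(Q‖P) + log(8/(δλ))). -/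
open MeasureTheory ProbabilityTheory Real

lemma aux_dv {H : Type*} [MeasurableSpace H] (Q P : Measure H) [IsProbabilityMeasure Q]
    [IsProbabilityMeasure P] (hkl : klDiv Q P ≠ ⊤) (f : H → ℝ) (hf : Measurable f)
    (C : ℝ) (hC : ∀ h, |f h| ≤ C) (M : ℝ) (hM : 0 < M)
    (hint : ∫⁻ h, ENNReal.ofReal (Real.exp (f h)) ∂P ≤ ENNReal.ofReal M) :
    ∫ h, f h ∂Q ≤ (klDiv Q P).toReal + Real.log M := by
  have hcond : Q ≪ P ∧ Integrable (llr Q P) Q := by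
    by_contra hcon
    exact hkl (by rw [klDiv, if_neg hcon])
  have hle : ∫ x, llr Q P x ∂Q ≤ (klDiv Q P).toReal := by
    rw [klDiv, if_pos hcond, ENNReal.toReal_ofReal']
    exact le_max_left _ _
  obtain ⟨hac, hllr⟩ := hcond
  have hfQ : Integrable f Q := Integrable.of_bound hf.aestronglyMeasurable C
    (Filter.Eventually.of_forall fun h => by simpa using hC h)
  have hfP : Integrable (fun h => Real.exp (f h)) P :=
    Integrable.of_bound (Real.measurable_exp.comp hf).aestronglyMeasurable (Real.exp C)
    (Filter.Eventually.of_forall fun h => by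
      rw [Real.norm_eq_abs, abs_of_pos (Real.exp_pos _)]
      exact Real.exp_le_exp.2 ((le_abs_self _).trans (hC h)))
  have h1 := integral_llr_tilted_right hac hfQ hfP hllr
  have : IsProbabilityMeasure (P.tilted f) := isProbabilityMeasure_tilted hfP
  have h2 : 0 ≤ ∫ x, llr Q (P.tilted f) x ∂Q := by
    have := InformationTheory.integral_llr_add_sub_measure_univ_nonneg
      (hac.trans (absolutelyContinuous_tilted hfP)) (integrable_llr_tilted_right hac hfQ hllr hfP)
    simpa using this
  have h3 : ∫ x, Real.exp (f x) ∂P ≤ M := by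
    rw [integral_eq_lintegral_of_nonneg_ae
      (Filter.Eventually.of_forall fun h => (Real.exp_pos _).le) hfP.1]
    exact ENNReal.toReal_le_of_le_ofReal hM.le hint
  have h4 : Real.log (∫ x, Real.exp (f x) ∂P) ≤ Real.log M :=
    Real.log_le_log (integral_exp_pos hfP) h3
  linarith

lemma aux_pi {Z : Type*} [MeasurableSpace Z] (μ : Measure Z) [IsProbabilityMeasure μ] (n : ℕ)
    (φ : Z → ℝ) (hφ : Measurable φ) (b : ℝ) (hb : 0 ≤ b)
    (h : ∫⁻ z, ENNReal.ofReal (Real.exp (φ z)) ∂μ ≤ ENNReal.ofReal b) :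
    ∫⁻ ω, ENNReal.ofReal (Real.exp (∑ i, φ (ω i))) ∂(Measure.pi fun _ : Fin n => μ)
      ≤ ENNReal.ofReal (b ^ n) := by
  have hm : Measurable fun z => Real.exp (φ z) := Real.measurable_exp.comp hφ
  have hI : Integrable (fun z => Real.exp (φ z)) μ :=
    (lintegral_ofReal_ne_top_iff_integrable hm.aestronglyMeasurable
      (Filter.Eventually.of_forall fun h => (Real.exp_pos _).le)).1
      (h.trans_lt ENNReal.ofReal_lt_top).ne
  have hJ : Integrable (fun ω : Fin n → Z => ∏ i, Real.exp (φ (ω i)))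
      (Measure.pi fun _ : Fin n => μ) := Integrable.fintype_prod (fun _ => hI)
  simp_rw [Real.exp_sum]
  rw [← ofReal_integral_eq_lintegral_ofReal hJ
    (Filter.Eventually.of_forall fun ω => Finset.prod_nonneg fun i _ => (Real.exp_pos _).le)]
  apply ENNReal.ofReal_le_ofReal
  rw [integral_fintype_prod_eq_prod (f := fun _ z => Real.exp (φ z)), Finset.prod_const]
  simp only [Finset.card_univ, Fintype.card_fin]
  apply pow_le_pow_left₀ (integral_nonneg fun z => (Real.exp_pos _).le)
  rw [integral_eq_lintegral_of_nonneg_ae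
      (Filter.Eventually.of_forall fun h => (Real.exp_pos _).le) hI.1]
  exact ENNReal.toReal_le_of_le_ofReal hb h

/-- pointwise lower bound of the truncated Gaussian mixture, right side -/
lemma aux_gauss_right (n : ℕ) (hn : 1 ≤ n) (m : ℝ) (h0 : -(4 * n) ≤ m) (h1 : m ≤ 0) :
    2 * Real.sqrt n ≤ ∫ s in (-(4 * n : ℝ))..(4 * n), Real.exp (-(s - m) ^ 2 / (8 * n)) := by
  have hn' : (1 : ℝ) ≤ n := by exact_mod_cast hn
  have hnpos : (0 : ℝ) < n := by linarith
  set r := Real.sqrt n with hr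
  have hrn : r ^ 2 = n := Real.sq_sqrt hnpos.le
  have hr1 : 1 ≤ r := Real.one_le_sqrt.2 hn'
  have hcont : Continuous fun s : ℝ => Real.exp (-(s - m) ^ 2 / (8 * n)) := by fun_prop
  have hle : r ≤ n := by nlinarith
  calc 2 * r ≤ ∫ s in m..(m + 4 * r), (1 - (s - m) ^ 2 / (16 * n)) ^ 2 := by
        have : ∀ s : ℝ, HasDerivAt
          (fun s => (s - m) - (s - m) ^ 3 / (24 * n) + (s - m) ^ 5 / (1280 * n ^ 2))
          ((1 - (s - m) ^ 2 / (16 * n)) ^ 2) s := by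
          intro s
          have hd : HasDerivAt (fun s : ℝ => s - m) 1 s := (hasDerivAt_id s).sub_const m
          refine HasDerivAt.congr_deriv ((hd.sub ((hd.pow 3).div_const (24 * n))).add
            ((hd.pow 5).div_const (1280 * n ^ 2))) ?_
          push_cast
          field_simp
          ring
        rw [intervalIntegral.integral_eq_sub_of_hasDerivAt (fun s _ => this s)
          (Continuous.intervalIntegrable (by fun_prop) _ _)]
        have e : (m + 4 * r - m) - (m + 4 * r - m) ^ 3 / (24 * n)
          + (m + 4 * r - m) ^ 5 / (1280 * n ^ 2)
          - ((m - m) - (m - m) ^ 3 / (24 * n) + (m - m) ^ 5 / (1280 * n ^ 2)) = (32 / 15) * r := by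
          rw [← hrn]
          have : r ≠ 0 := by positivity
          field_simp
          ring
        rw [e]
        linarith
    _ ≤ ∫ s in m..(m + 4 * r), Real.exp (-(s - m) ^ 2 / (8 * n)) := by
        apply intervalIntegral.integral_mono_on (by linarith)
          (Continuous.intervalIntegrable (by fun_prop) _ _) (hcont.intervalIntegrable _ _)
        intro s hs
        have hs0 : 0 ≤ s - m := by linarith [hs.1]
        have hs1 : s - m ≤ 4 * r := by linarith [hs.2]
        have e : Real.exp (-(s - m) ^ 2 / (8 * n)) = Real.exp (-((s - m) ^ 2 / (16 * n))) ^ 2 := by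
          rw [← Real.exp_nat_mul]
          congr 1
          field_simp
          push_cast
          ring
        rw [e]
        apply pow_le_pow_left₀
        · rw [sub_nonneg, div_le_one (by positivity), ← hrn]
          nlinarith
        · linarith [Real.add_one_le_exp (-((s - m) ^ 2 / (16 * n)))]
    _ ≤ _ := by
        apply intervalIntegral.integral_mono_interval h0 (by linarith) (by linarith)
        · exact Filter.Eventually.of_forall fun s => (Real.exp_pos _).le
        · exact hcont.intervalIntegrable _ _

lemma aux_gauss (n : ℕ) (hn : 1 ≤ n) (m : ℝ) (h0 : -(4 * n) ≤ m) (h1 : m ≤ 4 * n) :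
    2 * Real.sqrt n ≤ ∫ s in (-(4 * n : ℝ))..(4 * n), Real.exp (-(s - m) ^ 2 / (8 * n)) := by
  rcases le_total m 0 with h | h
  · exact aux_gauss_right n hn m h0 h
  · have := aux_gauss_right n hn (-m) (by linarith) (by linarith)
    have e := intervalIntegral.integral_comp_neg (a := (-(4 * n : ℝ))) (b := 4 * n)
      (fun s => Real.exp (-(s - m) ^ 2 / (8 * n)))
    rw [neg_neg] at e
    rw [← e]
    convert this using 6
    ring

lemma aux_gauss_exp (n : ℕ) (hn : 1 ≤ n) (d : ℝ) (h0 : |d| ≤ 1) :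
    2 * Real.sqrt n * Real.exp (2 * n * d ^ 2)
      ≤ ∫ s in (-(4 * n : ℝ))..(4 * n), Real.exp (s * d - s ^ 2 / (8 * n)) := by
  have hn' : (1 : ℝ) ≤ n := by exact_mod_cast hn
  have hd := abs_le.1 h0
  have := aux_gauss n hn (4 * n * d) (by nlinarith) (by nlinarith)
  have e : ∀ s : ℝ, Real.exp (s * d - s ^ 2 / (8 * n))
      = Real.exp (-(s - 4 * n * d) ^ 2 / (8 * n)) * Real.exp (2 * n * d ^ 2) := by
    intro s
    rw [← Real.exp_add]
    congr 1
    field_simp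
    ring
  simp_rw [e]
  rw [intervalIntegral.integral_mul_const]
  exact mul_le_mul_of_nonneg_right this (Real.exp_pos _).le

lemma aux_hoeff {Z : Type*} [MeasurableSpace Z] (μ : Measure Z) [IsProbabilityMeasure μ] (n : ℕ)
    (hn : 1 ≤ n) (f : Z → ℝ) (hf : Measurable f) (hb : ∀ z, f z ∈ Set.Icc (-1 : ℝ) 0) (s : ℝ) :
    ∫⁻ ω, ENNReal.ofReal (Real.exp (s * ((∫ z, f z ∂μ) - (n : ℝ)⁻¹ * ∑ i, f (ω i))
      - s ^ 2 / (8 * n))) ∂(Measure.pi fun _ : Fin n => μ) ≤ 1 := by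
  have hn' : (1 : ℝ) ≤ n := by exact_mod_cast hn
  have hsg := hasSubgaussianMGF_of_mem_Icc (μ := μ) hf.aemeasurable
    (Filter.Eventually.of_forall hb)
  set m := ∫ z, f z ∂μ with hm
  have key := aux_pi μ n (fun z => (-(s / n)) * (f z - m) - s ^ 2 / (8 * n ^ 2))
    (by fun_prop) 1 zero_le_one ?_
  · rw [one_pow, ENNReal.ofReal_one] at key
    refine le_trans (le_of_eq ?_) key
    congr 1
    ext ω
    congr 2
    rw [Finset.sum_sub_distrib, ← Finset.mul_sum, Finset.sum_sub_distrib]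
    simp only [Finset.sum_const, Finset.card_univ, Fintype.card_fin, nsmul_eq_mul]
    field_simp
    ring
  · have h1 := hsg.integrable_exp_mul (-(s / n))
    have h2 := hsg.mgf_le (-(s / n))
    rw [mgf] at h2
    have e : ∀ z, Real.exp ((-(s / n)) * (f z - m) - s ^ 2 / (8 * n ^ 2))
      = Real.exp ((-(s / n)) * (f z - m)) * Real.exp (-(s ^ 2 / (8 * n ^ 2))) := by
      intro z
      rw [← Real.exp_add]
      congr 1
    simp_rw [e]
    rw [← ofReal_integral_eq_lintegral_ofReal (h1.mul_const _)
      (Filter.Eventually.of_forall fun ω => by positivity)]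
    apply ENNReal.ofReal_le_ofReal
    rw [integral_mul_const]
    calc _ ≤ _ := mul_le_mul_of_nonneg_right h2 (Real.exp_pos _).le
      _ = 1 := by
        rw [← Real.exp_add, Real.exp_eq_one_iff]
        simp
        field_simp
        ring

lemma aux_maurer {Z : Type*} [MeasurableSpace Z] (μ : Measure Z) [IsProbabilityMeasure μ] (n : ℕ)
    (hn : 1 ≤ n) (f : Z → ℝ) (hf : Measurable f) (hb : ∀ z, f z ∈ Set.Icc (-1 : ℝ) 0) :
    ∫⁻ ω, ENNReal.ofReal (Real.exp (2 * n * ((∫ z, f z ∂μ) - (n : ℝ)⁻¹ * ∑ i, f (ω i)) ^ 2))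
      ∂(Measure.pi fun _ : Fin n => μ) ≤ ENNReal.ofReal (4 * Real.sqrt n) := by
  have hn' : (1 : ℝ) ≤ n := by exact_mod_cast hn
  have hnpos : (0 : ℝ) < n := by linarith
  have hfi : Integrable f μ := Integrable.of_mem_Icc (-1) 0 hf.aemeasurable
    (Filter.Eventually.of_forall hb)
  set m := ∫ z, f z ∂μ with hm
  have hm0 : -1 ≤ m ∧ m ≤ 0 := by
    constructor
    · have := integral_mono (integrable_const (-1 : ℝ)) hfi (fun z => (hb z).1)
      simpa using this
    · exact integral_nonpos (fun z => (hb z).2)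
  set D : (Fin n → Z) → ℝ := fun ω => m - (n : ℝ)⁻¹ * ∑ i, f (ω i) with hD
  have hDm : Measurable D := by fun_prop
  have hD1 : ∀ ω, |D ω| ≤ 1 := by
    intro ω
    have u1 : ∑ i, f (ω i) ≤ 0 := Finset.sum_nonpos fun i _ => (hb _).2
    have u2 : -(n : ℝ) ≤ ∑ i, f (ω i) := by
      have := Finset.sum_le_sum (s := Finset.univ) (fun i _ => (hb (ω i)).1)
      simpa using this
    have u3 : -1 ≤ (n : ℝ)⁻¹ * ∑ i, f (ω i) := by
      rw [inv_mul_eq_div, le_div_iff₀ hnpos]; linarith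
    have u4 : (n : ℝ)⁻¹ * ∑ i, f (ω i) ≤ 0 := by
      rw [inv_mul_eq_div]; exact div_nonpos_of_nonpos_of_nonneg u1 hnpos.le
    rw [abs_le]
    constructor <;> simp only [hD] <;> linarith
  have hsq : 0 < Real.sqrt n := Real.sqrt_pos.2 hnpos
  have hpt : ∀ ω, ENNReal.ofReal (2 * Real.sqrt n) * ENNReal.ofReal (Real.exp (2 * n * D ω ^ 2))
      ≤ ∫⁻ s in Set.Ioc (-(4 * n : ℝ)) (4 * n),
        ENNReal.ofReal (Real.exp (s * D ω - s ^ 2 / (8 * n))) := by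
    intro ω
    rw [← ENNReal.ofReal_mul (by positivity)]
    refine (ENNReal.ofReal_le_ofReal (aux_gauss_exp n hn (D ω) (hD1 ω))).trans ?_
    rw [intervalIntegral.integral_of_le (by linarith), ofReal_integral_eq_lintegral_ofReal]
    · exact (Continuous.integrableOn_Ioc (by fun_prop))
    · exact Filter.Eventually.of_forall fun s => (Real.exp_pos _).le
  have hfin : ENNReal.ofReal (2 * Real.sqrt n) *
      ∫⁻ ω, ENNReal.ofReal (Real.exp (2 * n * D ω ^ 2)) ∂(Measure.pi fun _ : Fin n => μ)
      ≤ ENNReal.ofReal (8 * n) := by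
    rw [← lintegral_const_mul _ (by fun_prop)]
    refine (lintegral_mono hpt).trans ?_
    rw [lintegral_lintegral_swap (by fun_prop)]
    refine (lintegral_mono (fun s => aux_hoeff μ n hn f hf hb s)).trans ?_
    rw [lintegral_const, Measure.restrict_apply_univ, Real.volume_Ioc, one_mul]
    apply ENNReal.ofReal_le_ofReal
    linarith
  have e : ENNReal.ofReal (8 * n) = ENNReal.ofReal (2 * Real.sqrt n) *
      ENNReal.ofReal (4 * Real.sqrt n) := by
    rw [← ENNReal.ofReal_mul (by positivity)]
    congr 1
    nlinarith [Real.sq_sqrt hnpos.le]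
  rw [e] at hfin
  exact (ENNReal.mul_le_mul_iff_right (by simpa using hsq) ENNReal.ofReal_ne_top).1 hfin

lemma aux_bt (x : ℝ) : Real.exp (x - x ^ 2 / 2) ≤ 1 + x + x ^ 2 / 2 := by
  have hpos : ∀ y : ℝ, 0 < 1 + y + y ^ 2 / 2 := fun y => by nlinarith [sq_nonneg (y + 1)]
  let F : ℝ → ℝ := fun y => Real.log (1 + y + y ^ 2 / 2) - y + y ^ 2 / 2
  have hd : ∀ y, HasDerivAt F (y * (1 + y / 2 + y ^ 2 / 2) / (1 + y + y ^ 2 / 2)) y := by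
    intro y
    have h1 : HasDerivAt (fun y : ℝ => 1 + y + y ^ 2 / 2) (1 + y) y := by
      refine HasDerivAt.congr_deriv
        (((hasDerivAt_id y).const_add 1).add (((hasDerivAt_id y).pow 2).div_const 2)) ?_
      simp
    have h2 := ((h1.log (hpos y).ne').sub (hasDerivAt_id y)).add
      (((hasDerivAt_id y).pow 2).div_const 2)
    refine HasDerivAt.congr_deriv h2 ?_
    have := (hpos y).ne'
    simp only [id]
    push_cast
    rw [eq_div_iff this, add_mul, sub_mul, div_mul_cancel₀ _ this]
    ring
  have hcont : Continuous F := continuous_iff_continuousAt.2 fun y => (hd y).continuousAt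
  have hF : 0 ≤ F x := by
    have hF0 : F 0 = 0 := by simp [F]
    have hq : ∀ y : ℝ, 0 ≤ 1 + y / 2 + y ^ 2 / 2 := fun y => by nlinarith [sq_nonneg (y + 1/2)]
    rcases le_total 0 x with h | h
    · rw [← hF0]
      refine monotoneOn_of_deriv_nonneg (convex_Ici 0) hcont.continuousOn
        (fun y _ => (hd y).differentiableAt.differentiableWithinAt) ?_ Set.self_mem_Ici h h
      intro y hy
      rw [interior_Ici] at hy
      rw [(hd y).deriv]
      exact div_nonneg (mul_nonneg (le_of_lt hy) (hq y)) (hpos y).le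
    · rw [← hF0]
      refine antitoneOn_of_deriv_nonpos (convex_Iic 0) hcont.continuousOn
        (fun y _ => (hd y).differentiableAt.differentiableWithinAt) ?_ h Set.self_mem_Iic h
      intro y hy
      rw [interior_Iic] at hy
      rw [(hd y).deriv]
      exact div_nonpos_of_nonpos_of_nonneg
        (mul_nonpos_of_nonpos_of_nonneg (le_of_lt hy) (hq y)) (hpos y).le
  rw [← Real.le_log_iff_exp_le (hpos x)]
  simp only [F] at hF
  linarith

/-- the importance-weighted cost -/
noncomputable def ipsY {X : Type*} {K : ℕ} (p0 c : X → Fin K → ℝ) (α : ℝ) (x : X) (b a : Fin K) : ℝ :=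
  if b = a then c x a / p0 x a ^ α else 0

/-- its conditional mean -/
noncomputable def ipsM {X : Type*} {K : ℕ} (p0 c : X → Fin K → ℝ) (α : ℝ) (x : X) (b : Fin K) : ℝ :=
  c x b * p0 x b ^ (1 - α)

/-- the variance proxy -/
noncomputable def ipsV {X : Type*} {K : ℕ} (p0 c : X → Fin K → ℝ) (α : ℝ) (x : X) (b a : Fin K) : ℝ :=
  p0 x b * (1 / p0 x b ^ (2 * α)) + if b = a then c x a ^ 2 / p0 x a ^ (2 * α) else 0

/-- the exponent -/
noncomputable def ipsE {X : Type*} {K : ℕ} (p0 c : X → Fin K → ℝ) (α s : ℝ) (x : X) (b a : Fin K) : ℝ :=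
  s * (ipsY p0 c α x b a - ipsM p0 c α x b) - s ^ 2 / 2 * ipsV p0 c α x b a

lemma ipsE_meas {X : Type*} [MeasurableSpace X] {K : ℕ} (p0 c : X → Fin K → ℝ) (α s : ℝ)
    (hp0meas : ∀ a, Measurable fun x => p0 x a)
    (hcmeas : ∀ a, Measurable fun x => c x a) :
    Measurable fun q : X × (Fin K × Fin K) => ipsE p0 c α s q.1 q.2.1 q.2.2 := by
  apply measurable_from_prod_countable_left
  rintro ⟨b, a⟩
  have := hp0meas a
  have := hp0meas b
  have := hcmeas a
  have := hcmeas b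
  simp only [ipsE, ipsY, ipsM, ipsV]
  split_ifs <;> fun_prop

lemma ips_real {K : ℕ} (p c : Fin K → ℝ) (α s : ℝ) (hp : ∀ a, 0 < p a) (hsum : ∑ a, p a = 1)
    (hc : ∀ a, c a ∈ Set.Icc (-1 : ℝ) 0) (b : Fin K) :
    ∑ a, Real.exp (ipsE (X := Unit) (fun _ => p) (fun _ => c) α s () b a) * p a ≤ 1 := by
  set y : Fin K → ℝ := fun a => if b = a then c a / p a ^ α else 0 with hy
  set q := p b * (1 / p b ^ (2 * α)) with hq
  set m := c b * p b ^ (1 - α) with hm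
  have hpow : ∀ a, (p a ^ α) ^ 2 = p a ^ (2 * α) := by
    intro a
    rw [← Real.rpow_natCast, ← Real.rpow_mul (hp a).le]
    congr 1
    push_cast
    ring
  have hy2 : ∀ a, y a ^ 2 = if b = a then c a ^ 2 / p a ^ (2 * α) else 0 := by
    intro a
    simp only [hy]
    split_ifs
    · rw [div_pow, hpow]
    · simp
  have h1 : ∀ a, Real.exp (ipsE (X := Unit) (fun _ => p) (fun _ => c) α s () b a) * p a
      ≤ (1 + s * y a + s ^ 2 / 2 * y a ^ 2) * p a * Real.exp (-(s * m + s ^ 2 / 2 * q)) := by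
    intro a
    have e : ipsE (X := Unit) (fun _ => p) (fun _ => c) α s () b a
      = (s * y a - (s * y a) ^ 2 / 2) + (-(s * m + s ^ 2 / 2 * q)) := by
      simp only [ipsE, ipsY, ipsM, ipsV]
      rw [← hy2 a]
      simp only [hy]
      ring
    rw [e, Real.exp_add]
    have := aux_bt (s * y a)
    have h2 : 0 ≤ p a * Real.exp (-(s * m + s ^ 2 / 2 * q)) :=
      mul_nonneg (hp a).le (Real.exp_pos _).le
    have := mul_le_mul_of_nonneg_right this h2
    linarith
  refine (Finset.sum_le_sum fun a _ => h1 a).trans ?_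
  rw [← Finset.sum_mul]
  have hs1 : ∑ a, y a * p a = m := by
    simp only [hy, ite_mul, zero_mul, Finset.sum_ite_eq, Finset.mem_univ, if_true, hm]
    rw [Real.rpow_sub (hp b), Real.rpow_one]
    ring
  have hs2 : ∑ a, y a ^ 2 * p a ≤ q := by
    simp only [hy2, ite_mul, zero_mul, Finset.sum_ite_eq, Finset.mem_univ, if_true, hq]
    have hpp : 0 < p b ^ (2 * α) := Real.rpow_pos_of_pos (hp b) _
    have : c b ^ 2 ≤ 1 := by nlinarith [(hc b).1, (hc b).2]
    rw [mul_comm]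
    exact mul_le_mul_of_nonneg_left (div_le_div_of_nonneg_right this hpp.le) (hp b).le
  have hs3 : ∑ a, (1 + s * y a + s ^ 2 / 2 * y a ^ 2) * p a
      = 1 + s * m + s ^ 2 / 2 * ∑ a, y a ^ 2 * p a := by
    rw [← hs1, ← hsum, Finset.mul_sum, Finset.mul_sum, ← Finset.sum_add_distrib,
      ← Finset.sum_add_distrib]
    refine Finset.sum_congr rfl fun a _ => ?_
    rw [hsum]
    ring
  rw [hs3, Real.exp_neg]
  apply mul_inv_le_one_of_le₀ _ (Real.exp_pos _).le
  have h5 : s ^ 2 / 2 * ∑ a, y a ^ 2 * p a ≤ s ^ 2 / 2 * q :=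
    mul_le_mul_of_nonneg_left hs2 (by positivity)
  linarith [Real.add_one_le_exp (s * m + s ^ 2 / 2 * q)]

lemma ips_lint {X : Type*} [MeasurableSpace X] {K : ℕ}
    (ν : Measure X) [IsProbabilityMeasure ν]
    (p0 c : X → Fin K → ℝ)
    (hp0meas : ∀ a, Measurable fun x => p0 x a)
    (hcmeas : ∀ a, Measurable fun x => c x a)
    (hp0pos : ∀ x a, 0 < p0 x a) (hp0sum : ∀ x, ∑ a, p0 x a = 1)
    (hc : ∀ x a, c x a ∈ Set.Icc (-1 : ℝ) 0)
    (κ0 : Kernel X (Fin K)) [IsMarkovKernel κ0]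
    (hκ0 : ∀ x a, κ0 x {a} = ENNReal.ofReal (p0 x a))
    (α s : ℝ) (g : X → Fin K) (hg : Measurable g) :
    ∫⁻ z, ENNReal.ofReal (Real.exp (ipsE p0 c α s z.1 (g z.1) z.2)) ∂(ν ⊗ₘ κ0)
      ≤ ENNReal.ofReal 1 := by
  have hm : Measurable fun z : X × Fin K => ipsE p0 c α s z.1 (g z.1) z.2 :=
    (ipsE_meas p0 c α s hp0meas hcmeas).comp
      (f := fun z : X × Fin K => (z.1, (g z.1, z.2))) (by fun_prop)
  rw [Measure.lintegral_compProd (by fun_prop)]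
  calc _ ≤ ∫⁻ x, ENNReal.ofReal 1 ∂ν := by
        apply lintegral_mono
        intro x
        simp only
        rw [lintegral_fintype]
        simp_rw [hκ0, ← ENNReal.ofReal_mul (Real.exp_pos _).le]
        rw [← ENNReal.ofReal_sum_of_nonneg
          (fun a _ => mul_nonneg (Real.exp_pos _).le (hp0pos x a).le)]
        exact ENNReal.ofReal_le_ofReal
          (ips_real (p0 x) (c x) α s (hp0pos x) (hp0sum x) (hc x) (g x))
    _ = _ := by simp

lemma aux_int {H : Type*} [MeasurableSpace H] {K : ℕ} (Q : Measure H) [IsProbabilityMeasure Q]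
    (g : H → Fin K) (hg : Measurable g) (F : Fin K → ℝ) : Integrable (fun h => F (g h)) Q := by
  refine Integrable.of_bound ((measurable_of_finite F).comp hg).aestronglyMeasurable
    (∑ a, |F a|) (Filter.Eventually.of_forall fun h => ?_)
  rw [Real.norm_eq_abs]
  exact Finset.single_le_sum (f := fun a => |F a|) (fun a _ => abs_nonneg _) (Finset.mem_univ (g h))

lemma aux_qsum {H : Type*} [MeasurableSpace H] {K : ℕ} (Q : Measure H) [IsProbabilityMeasure Q]
    (g : H → Fin K) (hg : Measurable g) (F : Fin K → ℝ) :
    ∫ h, F (g h) ∂Q = ∑ a, (Q {h | g h = a}).toReal * F a := by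
  have : IsProbabilityMeasure (Q.map g) := Measure.isProbabilityMeasure_map hg.aemeasurable
  rw [← integral_map (φ := g) (f := F) hg.aemeasurable
    (measurable_of_finite F).aestronglyMeasurable, integral_fintype Integrable.of_finite]
  refine Finset.sum_congr rfl fun a _ => ?_
  rw [Measure.real, Measure.map_apply hg (measurableSet_singleton a), smul_eq_mul]
  rfl

lemma aux_arith (l lam L S W : ℝ) (hlpos : 0 < l) (hk1 : l ≤ lam) (hlam2 : lam ≤ 2 * l)
    (hL0 : 0 ≤ L) (hW0 : 0 ≤ W) (h1 : l * S - l ^ 2 / 2 * W ≤ L)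
    (h2 : -l * S - (-l) ^ 2 / 2 * W ≤ L) : |S| ≤ 2 * L / lam + lam / 2 * W := by
  have hl0 : 0 < lam := by linarith
  have h3 : l * |S| ≤ L + l ^ 2 / 2 * W := by
    rw [neg_sq] at h2
    rcases abs_cases S with ⟨e, _⟩ | ⟨e, _⟩ <;> rw [e] <;> linarith
  have h4 : |S| ≤ L / l + l / 2 * W := by
    have : L / l + l / 2 * W = (L + l ^ 2 / 2 * W) / l := by field_simp
    rw [this, le_div_iff₀ hlpos]
    linarith
  have h5 : L / l ≤ 2 * L / lam := by
    rw [div_le_div_iff₀ hlpos hl0]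
    nlinarith
  have h6 : l / 2 * W ≤ lam / 2 * W := mul_le_mul_of_nonneg_right (by linarith) hW0
  linarith

set_option maxHeartbeats 1000000 in
lemma aux_final {X : Type*} [MeasurableSpace X] {K : ℕ}
    {H : Type*} [MeasurableSpace H]
    (ν : Measure X) [IsProbabilityMeasure ν]
    (p0 c : X → Fin K → ℝ)
    (hcmeas : ∀ a, Measurable fun x => c x a)
    (hp0pos : ∀ x a, 0 < p0 x a) (hp0sum : ∀ x, ∑ a, p0 x a = 1)
    (hc : ∀ x a, c x a ∈ Set.Icc (-1 : ℝ) 0)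
    (ev : H → X → Fin K)
    (hev : Measurable fun q : H × X => ev q.1 q.2)
    (P : Measure H) [IsProbabilityMeasure P]
    (n : ℕ) (hn : 1 ≤ n)
    (δ : ℝ) (hδ : δ ∈ Set.Ioo (0 : ℝ) 1) (α : ℝ) (hα : α ∈ Set.Icc (0 : ℝ) 1)
    (ω : Fin n → X × Fin K)
    (hE1 : ∫⁻ h, ENNReal.ofReal (Real.exp (2 * n * ((∫ x, c x (ev h x) ∂ν)
      - (n : ℝ)⁻¹ * ∑ i, c (ω i).1 (ev h (ω i).1)) ^ 2)) ∂P
        ≤ ENNReal.ofReal (8 * Real.sqrt n / δ))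
    (hE2 : ∀ k : ℕ, ∀ s : ℝ, (s = (1 / 2) ^ (k + 1) ∨ s = -(1 / 2) ^ (k + 1)) →
      ∫⁻ h, ENNReal.ofReal (Real.exp (∑ i, ipsE p0 c α s (ω i).1 (ev h (ω i).1) (ω i).2)) ∂P
        ≤ ENNReal.ofReal (4 / (δ * (1 / 2) ^ (k + 1))))
    (Q : Measure H) [IsProbabilityMeasure Q] (hkl : klDiv Q P ≠ ⊤)
    (lam : ℝ) (hlam : lam ∈ Set.Ioo (0 : ℝ) 1) :
          |(∫ x, ∑ a, (Q {h | ev h x = a}).toReal * c x a ∂ν)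
              - (n : ℝ)⁻¹ * ∑ i, c (ω i).1 (ω i).2 * (Q {h | ev h (ω i).1 = (ω i).2}).toReal
                  / p0 (ω i).1 (ω i).2 ^ α|
            ≤ Real.sqrt (((klDiv Q P).toReal + Real.log (8 * Real.sqrt n / (δ * lam)))
                  / (2 * n))
              + (1 - (n : ℝ)⁻¹ * ∑ i, ∑ a,
                  (Q {h | ev h (ω i).1 = a}).toReal * p0 (ω i).1 a ^ (1 - α))
              + 2 * ((klDiv Q P).toReal + Real.log (8 / (δ * lam))) / (n * lam)
              + lam / 2 * ((n : ℝ)⁻¹ * ∑ i,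
                  ((∑ a, p0 (ω i).1 a *
                      ((Q {h | ev h (ω i).1 = a}).toReal / p0 (ω i).1 a ^ (2 * α)))
                    + (Q {h | ev h (ω i).1 = (ω i).2}).toReal * c (ω i).1 (ω i).2 ^ 2
                        / p0 (ω i).1 (ω i).2 ^ (2 * α))) := by
  have hn' : (1 : ℝ) ≤ n := by exact_mod_cast hn
  have hnpos : (0 : ℝ) < n := by linarith
  have hninv : (n : ℝ)⁻¹ * n = 1 := inv_mul_cancel₀ hnpos.ne'
  have hδ0 := hδ.1
  have hl0 := hlam.1
  have hl1 := hlam.2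
  have hsq1 : 1 ≤ Real.sqrt n := Real.one_le_sqrt.2 hn'
  have hevx : ∀ x, Measurable fun h => ev h x := fun x =>
    hev.comp (f := fun h => (h, x)) (by fun_prop)
  have hcm : Measurable fun q : X × Fin K => c q.1 q.2 := measurable_from_prod_countable_left hcmeas
  have hcev : Measurable fun q : H × X => c q.2 (ev q.1 q.2) :=
    hcm.comp (f := fun q : H × X => (q.2, ev q.1 q.2)) (by fun_prop)
  have hcevh : ∀ h, Measurable fun x => c x (ev h x) := fun h =>
    hcev.comp (f := fun x => (h, x)) (by fun_prop)
  set T := (klDiv Q P).toReal with hT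
  have hT0 : 0 ≤ T := ENNReal.toReal_nonneg
  set R : H → ℝ := fun h => ∫ x, c x (ev h x) ∂ν with hR
  have hRm : Measurable R := by
    have : StronglyMeasurable R := hcev.stronglyMeasurable.integral_prod_right' (ν := ν)
    exact this.measurable
  have hR1 : ∀ h, -1 ≤ R h ∧ R h ≤ 0 := by
    intro h
    have hi : Integrable (fun x => c x (ev h x)) ν := Integrable.of_mem_Icc (-1) 0
      (hcevh h).aemeasurable (Filter.Eventually.of_forall fun x => hc _ _)
    constructor
    · have := integral_mono (integrable_const (-1 : ℝ)) hi (fun x => (hc _ _).1)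
      simpa using this
    · exact integral_nonpos (fun z => (hc _ _).2)
  have hRint : Integrable R Q := Integrable.of_mem_Icc (-1) 0
      hRm.aemeasurable (Filter.Eventually.of_forall fun x => hR1 x)
  -- averages
  set q : Fin n → Fin K → ℝ := fun i a => (Q {h | ev h (ω i).1 = a}).toReal with hq
  have hq0 : ∀ i a, 0 ≤ q i a := fun i a => ENNReal.toReal_nonneg
  have hqs : ∀ i (F : Fin K → ℝ), ∫ h, F (ev h (ω i).1) ∂Q = ∑ a, q i a * F a :=
    fun i F => aux_qsum Q _ (hevx _) F
  have hqi : ∀ i (F : Fin K → ℝ), Integrable (fun h => F (ev h (ω i).1)) Q :=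
    fun i F => aux_int Q _ (hevx _) F
  have hq1 : ∀ i, ∑ a, q i a = 1 := by
    intro i
    have := hqs i (fun _ => 1)
    simpa using this.symm
  have hRpi : ∫ x, ∑ a, (Q {h | ev h x = a}).toReal * c x a ∂ν = ∫ h, R h ∂Q := by
    have e : ∀ x, ∑ a, (Q {h | ev h x = a}).toReal * c x a = ∫ h, c x (ev h x) ∂Q := fun x =>
      (aux_qsum Q _ (hevx x) (c x)).symm
    simp_rw [e]
    rw [hR]
    apply integral_integral_swap
    refine Integrable.of_mem_Icc (-1) 0 ?_ (Filter.Eventually.of_forall fun x => hc _ _)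
    exact (hcev.comp (measurable_swap)).aemeasurable
  rw [hRpi]
  -- the three pieces
  set Aq : Fin n → ℝ := fun i => ∑ a, q i a * c (ω i).1 a with hAq
  set Mq : Fin n → ℝ := fun i => ∑ a, q i a * ipsM p0 c α (ω i).1 a with hMq
  set Yq : Fin n → ℝ := fun i => ∑ a, q i a * ipsY p0 c α (ω i).1 a (ω i).2 with hYq
  set Vq : Fin n → ℝ := fun i => ∑ a, q i a * ipsV p0 c α (ω i).1 a (ω i).2 with hVq
  have hYe : ∀ i, c (ω i).1 (ω i).2 * q i (ω i).2 / p0 (ω i).1 (ω i).2 ^ α = Yq i := by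
    intro i
    simp only [hYq, ipsY, mul_ite, mul_zero, Finset.sum_ite_eq', Finset.mem_univ, if_true]
    ring
  have hVe : ∀ i, ((∑ a, p0 (ω i).1 a * (q i a / p0 (ω i).1 a ^ (2 * α)))
        + q i (ω i).2 * c (ω i).1 (ω i).2 ^ 2 / p0 (ω i).1 (ω i).2 ^ (2 * α)) = Vq i := by
    intro i
    simp only [hVq, ipsV, mul_add, mul_ite, mul_zero, Finset.sum_add_distrib,
      Finset.sum_ite_eq', Finset.mem_univ, if_true]
    congr 1
    · refine Finset.sum_congr rfl fun a _ => ?_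
      ring
    · ring
  have hV0 : ∀ i, 0 ≤ Vq i := by
    intro i
    rw [← hVe i]
    have hpp : ∀ a, 0 < p0 (ω i).1 a ^ (2 * α) := fun a => Real.rpow_pos_of_pos (hp0pos _ _) _
    refine add_nonneg (Finset.sum_nonneg fun a _ => ?_) ?_
    · exact mul_nonneg (hp0pos _ _).le (div_nonneg (hq0 i a) (hpp a).le)
    · exact div_nonneg (mul_nonneg (hq0 _ _) (sq_nonneg _)) (hpp _).le
  have eY : ∑ i, c (ω i).1 (ω i).2 * (Q {h | ev h (ω i).1 = (ω i).2}).toReal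
      / p0 (ω i).1 (ω i).2 ^ α = ∑ i, Yq i := Finset.sum_congr rfl fun i _ => hYe i
  have eB : ∑ i, ∑ a, (Q {h | ev h (ω i).1 = a}).toReal * p0 (ω i).1 a ^ (1 - α)
      = ∑ i, ∑ a, q i a * p0 (ω i).1 a ^ (1 - α) := rfl
  have eV : ∑ i, ((∑ a, p0 (ω i).1 a *
        ((Q {h | ev h (ω i).1 = a}).toReal / p0 (ω i).1 a ^ (2 * α)))
      + (Q {h | ev h (ω i).1 = (ω i).2}).toReal * c (ω i).1 (ω i).2 ^ 2
        / p0 (ω i).1 (ω i).2 ^ (2 * α)) = ∑ i, Vq i := Finset.sum_congr rfl fun i _ => hVe i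
  rw [eY, eB, eV]
  -- first piece
  set D : H → ℝ := fun h => R h - (n : ℝ)⁻¹ * ∑ i, c (ω i).1 (ev h (ω i).1) with hD
  have hD1 : ∀ h, |D h| ≤ 1 := by
    intro h
    have u1 : ∑ i, c (ω i).1 (ev h (ω i).1) ≤ 0 := Finset.sum_nonpos fun i _ => (hc _ _).2
    have u2 : -(n : ℝ) ≤ ∑ i, c (ω i).1 (ev h (ω i).1) := by
      have := Finset.sum_le_sum (s := Finset.univ) (fun i _ => (hc (ω i).1 (ev h (ω i).1)).1)
      simpa using this
    have u3 : -1 ≤ (n : ℝ)⁻¹ * ∑ i, c (ω i).1 (ev h (ω i).1) := by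
      rw [inv_mul_eq_div, le_div_iff₀ hnpos]; linarith
    have u4 : (n : ℝ)⁻¹ * ∑ i, c (ω i).1 (ev h (ω i).1) ≤ 0 := by
      rw [inv_mul_eq_div]; exact div_nonpos_of_nonpos_of_nonneg u1 hnpos.le
    have := hR1 h
    rw [abs_le]
    constructor <;> simp only [hD] <;> linarith [this.1, this.2]
  have hFm : ∀ i (F : Fin K → ℝ), Measurable fun h => F (ev h (ω i).1) := fun i F =>
    (measurable_of_finite F).comp (hevx _)
  have hDm : Measurable D :=
    hRm.sub ((Finset.measurable_sum _ fun i _ => hFm i (c (ω i).1)).const_mul _)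
  have hDi : Integrable D Q := Integrable.of_bound hDm.aestronglyMeasurable 1
    (Filter.Eventually.of_forall fun h => by simpa using hD1 h)
  have hD2i : Integrable (fun h => D h ^ 2) Q :=
    Integrable.of_bound (hDm.pow_const 2).aestronglyMeasurable 1
    (Filter.Eventually.of_forall fun h => by
      rw [Real.norm_eq_abs, abs_pow]
      exact pow_le_one₀ (abs_nonneg _) (hD1 h))
  have hDQ : ∫ h, D h ∂Q = (∫ h, R h ∂Q) - (n : ℝ)⁻¹ * ∑ i, Aq i := by
    rw [hD, integral_sub hRint ((integrable_finsetSum _ fun i _ => hqi i (c (ω i).1)).const_mul _),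
      integral_const_mul, integral_finsetSum _ (fun i _ => hqi i (c (ω i).1))]
    congr 2
    exact Finset.sum_congr rfl fun i _ => hqs i (c (ω i).1)
  have hJ : (∫ h, D h ∂Q) ^ 2 ≤ ∫ h, D h ^ 2 ∂Q := by
    set m := ∫ h, D h ∂Q with hm
    have h0 : 0 ≤ ∫ h, (D h - m) ^ 2 ∂Q := integral_nonneg fun h => sq_nonneg _
    have e : ∫ h, (D h - m) ^ 2 ∂Q = (∫ h, D h ^ 2 ∂Q) - m ^ 2 := by
      have : ∀ h, (D h - m) ^ 2 = D h ^ 2 - 2 * m * D h + m ^ 2 := fun h => by ring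
      simp_rw [this]
      rw [integral_add (f := fun h => D h ^ 2 - 2 * m * D h)
        (hD2i.sub (hDi.const_mul _)) (integrable_const _), integral_sub hD2i (hDi.const_mul _), integral_const_mul, ← hm]
      simp
      ring
    linarith
  have hI1 : |(∫ h, R h ∂Q) - (n : ℝ)⁻¹ * ∑ i, Aq i|
      ≤ Real.sqrt ((T + Real.log (8 * Real.sqrt n / (δ * lam))) / (2 * n)) := by
    rw [← hDQ]
    apply Real.abs_le_sqrt
    have h1 := aux_dv Q P hkl (fun h => 2 * n * D h ^ 2) (by fun_prop) (2 * n) (by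
      intro h
      rw [abs_of_nonneg (by positivity)]
      have : D h ^ 2 ≤ 1 := by
        rw [← sq_abs]
        exact pow_le_one₀ (abs_nonneg _) (hD1 h)
      nlinarith) (8 * Real.sqrt n / δ) (by positivity) hE1
    rw [integral_const_mul] at h1
    have h2 : Real.log (8 * Real.sqrt n / δ) ≤ Real.log (8 * Real.sqrt n / (δ * lam)) := by
      apply Real.log_le_log (by positivity)
      apply div_le_div_of_nonneg_left (by positivity) (by positivity)
      nlinarith
    rw [le_div_iff₀ (by positivity)]
    nlinarith
  -- second piece
  have hI2 : |(n : ℝ)⁻¹ * ∑ i, (Aq i - Mq i)|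
      ≤ 1 - (n : ℝ)⁻¹ * ∑ i, ∑ a, q i a * p0 (ω i).1 a ^ (1 - α) := by
    have h1 : ∀ i, |Aq i - Mq i| ≤ 1 - ∑ a, q i a * p0 (ω i).1 a ^ (1 - α) := by
      intro i
      have e1 : 1 - ∑ a, q i a * p0 (ω i).1 a ^ (1 - α)
          = ∑ a, (q i a - q i a * p0 (ω i).1 a ^ (1 - α)) := by
        rw [Finset.sum_sub_distrib, hq1 i]
      rw [e1]
      simp only [hAq, hMq]
      rw [← Finset.sum_sub_distrib]
      refine (Finset.abs_sum_le_sum_abs _ _).trans (Finset.sum_le_sum fun a _ => ?_)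
      have hple : p0 (ω i).1 a ≤ 1 := by
        rw [← hp0sum (ω i).1]
        exact Finset.single_le_sum (f := fun a => p0 (ω i).1 a)
          (fun a _ => (hp0pos _ _).le) (Finset.mem_univ a)
      have hw : p0 (ω i).1 a ^ (1 - α) ≤ 1 :=
        Real.rpow_le_one (hp0pos _ _).le hple (by linarith [hα.2])
      have e : q i a * c (ω i).1 a - q i a * ipsM p0 c α (ω i).1 a
        = (q i a * (1 - p0 (ω i).1 a ^ (1 - α))) * c (ω i).1 a := by
        rw [ipsM]; ring
      have hz : 0 ≤ q i a * (1 - p0 (ω i).1 a ^ (1 - α)) :=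
        mul_nonneg (hq0 i a) (by linarith)
      have hcc : |c (ω i).1 a| ≤ 1 :=
        abs_le.2 ⟨(hc _ _).1, by linarith [(hc (ω i).1 a).2]⟩
      rw [e, abs_mul, abs_of_nonneg hz]
      nlinarith
    rw [abs_mul, abs_of_pos (by positivity)]
    have h2 : |∑ i, (Aq i - Mq i)| ≤ n - ∑ i, ∑ a, q i a * p0 (ω i).1 a ^ (1 - α) := by
      refine (Finset.abs_sum_le_sum_abs _ _).trans ((Finset.sum_le_sum fun i _ => h1 i).trans ?_)
      rw [Finset.sum_sub_distrib]
      simp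
    calc _ ≤ _ := mul_le_mul_of_nonneg_left h2 (by positivity)
      _ = _ := by rw [mul_sub, hninv]
  -- third piece
  obtain ⟨k, hk1, hk2⟩ := exists_nat_pow_near_of_lt_one (x := lam) (y := (1 / 2 : ℝ)) hl0 hl1.le
    (by norm_num) (by norm_num)
  set l : ℝ := (1 / 2) ^ (k + 1) with hl
  have hlpos : 0 < l := by positivity
  have hlam2 : lam ≤ 2 * l := by rw [hl, pow_succ]; linarith
  set L := T + Real.log (8 / (δ * lam)) with hL
  have hdv : ∀ s : ℝ, (s = l ∨ s = -l) →
      s * ∑ i, (Yq i - Mq i) - s ^ 2 / 2 * ∑ i, Vq i ≤ L := by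
    intro s hs
    have hFi : ∀ i, Integrable (fun h => ipsE p0 c α s (ω i).1 (ev h (ω i).1) (ω i).2) Q :=
      fun i => hqi i (fun b => ipsE p0 c α s (ω i).1 b (ω i).2)
    have h1 := aux_dv Q P hkl
      (fun h => ∑ i, ipsE p0 c α s (ω i).1 (ev h (ω i).1) (ω i).2)
      (Finset.measurable_sum _ fun i _ => hFm i (fun b => ipsE p0 c α s (ω i).1 b (ω i).2))
      (∑ i, ∑ b, |ipsE p0 c α s (ω i).1 b (ω i).2|) (by
        intro h
        refine (Finset.abs_sum_le_sum_abs _ _).trans (Finset.sum_le_sum fun i _ => ?_)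
        exact Finset.single_le_sum (f := fun b => |ipsE p0 c α s (ω i).1 b (ω i).2|)
          (fun a _ => abs_nonneg _) (Finset.mem_univ _))
      (4 / (δ * l)) (by positivity) (hE2 k s hs)
    rw [integral_finsetSum _ (fun i _ => hFi i)] at h1
    have h2 : ∀ i, ∫ h, ipsE p0 c α s (ω i).1 (ev h (ω i).1) (ω i).2 ∂Q
        = s * (Yq i - Mq i) - s ^ 2 / 2 * Vq i := by
      intro i
      rw [hqs i (fun b => ipsE p0 c α s (ω i).1 b (ω i).2)]
      simp only [hYq, hMq, hVq, ipsE]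
      rw [← Finset.sum_sub_distrib, Finset.mul_sum, Finset.mul_sum, ← Finset.sum_sub_distrib]
      refine Finset.sum_congr rfl fun a _ => ?_
      ring
    simp_rw [h2] at h1
    rw [Finset.sum_sub_distrib, ← Finset.mul_sum, ← Finset.mul_sum] at h1
    refine h1.trans ?_
    have h3 : Real.log (4 / (δ * l)) ≤ Real.log (8 / (δ * lam)) := by
      apply Real.log_le_log (by positivity)
      rw [div_le_div_iff₀ (by positivity) (by positivity)]
      nlinarith
    simp only [hL]
    linarith
  have hL0 : 0 ≤ L := by
    have : 0 ≤ Real.log (8 / (δ * lam)) := by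
      apply Real.log_nonneg
      rw [le_div_iff₀ (by positivity)]
      nlinarith [hδ.2]
    positivity
  set S := ∑ i, (Yq i - Mq i) with hS
  set W := ∑ i, Vq i with hW
  have hW0 : 0 ≤ W := Finset.sum_nonneg fun i _ => hV0 i
  have hSabs : |S| ≤ 2 * L / lam + lam / 2 * W := by
    have h1 := hdv l (Or.inl rfl)
    have h2 := hdv (-l) (Or.inr rfl)
    exact aux_arith l lam L S W hlpos hk1.le hlam2 hL0 hW0 h1 h2
  have hI3 : |(n : ℝ)⁻¹ * S| ≤ 2 * L / (n * lam) + lam / 2 * ((n : ℝ)⁻¹ * W) := by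
    rw [abs_mul, abs_of_pos (by positivity)]
    calc _ ≤ _ := mul_le_mul_of_nonneg_left hSabs (by positivity)
      _ = _ := by field_simp
  have hdec : (∫ h, R h ∂Q) - (n : ℝ)⁻¹ * ∑ i, Yq i
      = ((∫ h, R h ∂Q) - (n : ℝ)⁻¹ * ∑ i, Aq i) + (n : ℝ)⁻¹ * ∑ i, (Aq i - Mq i)
        - (n : ℝ)⁻¹ * S := by
    rw [hS, Finset.sum_sub_distrib, Finset.sum_sub_distrib]
    ring
  rw [hdec]
  have t1 := abs_sub (((∫ h, R h ∂Q) - (n : ℝ)⁻¹ * ∑ i, Aq i) + (n : ℝ)⁻¹ * ∑ i, (Aq i - Mq i))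
    ((n : ℝ)⁻¹ * S)
  have t2 := abs_add_le ((∫ h, R h ∂Q) - (n : ℝ)⁻¹ * ∑ i, Aq i) ((n : ℝ)⁻¹ * ∑ i, (Aq i - Mq i))
  linarith

/-- **Extension of the main theorem, uniform in `λ`.**  With probability at least `1 − δ`
over the logged data, the two-sided PAC-Bayes bound holds simultaneously for all posteriors
`Q` on `H` (with finite KL divergence to the prior) and all `λ ∈ (0,1)`. -/
theorem pac_bayes_ips_alpha_uniform_lambda
    {X : Type*} [MeasurableSpace X] {K : ℕ}
    {H : Type*} [MeasurableSpace H]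
    (ν : Measure X) [IsProbabilityMeasure ν]
    (p0 c : X → Fin K → ℝ)
    (hp0meas : ∀ a, Measurable fun x => p0 x a)
    (hcmeas : ∀ a, Measurable fun x => c x a)
    (hp0pos : ∀ x a, 0 < p0 x a) (hp0sum : ∀ x, ∑ a, p0 x a = 1)
    (hc : ∀ x a, c x a ∈ Set.Icc (-1 : ℝ) 0)
    (ev : H → X → Fin K)
    (hev : Measurable fun q : H × X => ev q.1 q.2)
    (κ0 : Kernel X (Fin K)) [IsMarkovKernel κ0]
    (hκ0 : ∀ x a, κ0 x {a} = ENNReal.ofReal (p0 x a))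
    (P : Measure H) [IsProbabilityMeasure P]
    (n : ℕ) (hn : 1 ≤ n)
    (δ : ℝ) (hδ : δ ∈ Set.Ioo (0 : ℝ) 1) (α : ℝ) (hα : α ∈ Set.Icc (0 : ℝ) 1) :
    ENNReal.ofReal (1 - δ) ≤
      (Measure.pi fun _ : Fin n => ν ⊗ₘ κ0)
        {ω | ∀ Q : Measure H, IsProbabilityMeasure Q → klDiv Q P ≠ ⊤ →
          ∀ lam : ℝ, lam ∈ Set.Ioo (0 : ℝ) 1 →
          |(∫ x, ∑ a, (Q {h | ev h x = a}).toReal * c x a ∂ν)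
              - (n : ℝ)⁻¹ * ∑ i, c (ω i).1 (ω i).2 * (Q {h | ev h (ω i).1 = (ω i).2}).toReal
                  / p0 (ω i).1 (ω i).2 ^ α|
            ≤ Real.sqrt (((klDiv Q P).toReal + Real.log (8 * Real.sqrt n / (δ * lam)))
                  / (2 * n))
              + (1 - (n : ℝ)⁻¹ * ∑ i, ∑ a,
                  (Q {h | ev h (ω i).1 = a}).toReal * p0 (ω i).1 a ^ (1 - α))
              + 2 * ((klDiv Q P).toReal + Real.log (8 / (δ * lam))) / (n * lam)
              + lam / 2 * ((n : ℝ)⁻¹ * ∑ i,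
                  ((∑ a, p0 (ω i).1 a *
                      ((Q {h | ev h (ω i).1 = a}).toReal / p0 (ω i).1 a ^ (2 * α)))
                    + (Q {h | ev h (ω i).1 = (ω i).2}).toReal * c (ω i).1 (ω i).2 ^ 2
                        / p0 (ω i).1 (ω i).2 ^ (2 * α)))} := by
  classical
  have hn' : (1 : ℝ) ≤ n := by exact_mod_cast hn
  have hnpos : (0 : ℝ) < n := by linarith
  have hδ0 := hδ.1
  have hsq : 0 < Real.sqrt n := Real.sqrt_pos.2 hnpos
  have hcm : Measurable fun q : X × Fin K => c q.1 q.2 := measurable_from_prod_countable_left hcmeas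
  have hcev : Measurable fun q : H × X => c q.2 (ev q.1 q.2) :=
    hcm.comp (f := fun q : H × X => (q.2, ev q.1 q.2)) (by fun_prop)
  have hevh : ∀ h, Measurable fun x => ev h x := fun h =>
    hev.comp (f := fun x => (h, x)) (by fun_prop)
  have hcevh : ∀ h, Measurable fun x => c x (ev h x) := fun h =>
    hcev.comp (f := fun x => (h, x)) (by fun_prop)
  set μ := Measure.pi fun _ : Fin n => ν ⊗ₘ κ0 with hμ
  have hRm : Measurable fun h => ∫ x, c x (ev h x) ∂ν := by
    have : StronglyMeasurable fun h => ∫ x, c x (ev h x) ∂ν :=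
      hcev.stronglyMeasurable.integral_prod_right' (ν := ν)
    exact this.measurable
  let f1 : (Fin n → X × Fin K) → H → ENNReal := fun ω h =>
    ENNReal.ofReal (Real.exp (2 * n * ((∫ x, c x (ev h x) ∂ν)
      - (n : ℝ)⁻¹ * ∑ i, c (ω i).1 (ev h (ω i).1)) ^ 2))
  let f2 : ℝ → (Fin n → X × Fin K) → H → ENNReal := fun s ω h =>
    ENNReal.ofReal (Real.exp (∑ i, ipsE p0 c α s (ω i).1 (ev h (ω i).1) (ω i).2))
  have hf1 : Measurable (Function.uncurry f1) := by
    have h1 : ∀ i : Fin n, Measurable fun z : (Fin n → X × Fin K) × H =>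
        c (z.1 i).1 (ev z.2 (z.1 i).1) := fun i =>
      hcev.comp (f := fun z : (Fin n → X × Fin K) × H => (z.2, (z.1 i).1)) (by fun_prop)
    have h2 : Measurable fun z : (Fin n → X × Fin K) × H => ∫ x, c x (ev z.2 x) ∂ν :=
      hRm.comp measurable_snd
    simp only [f1, Function.uncurry_def]
    fun_prop
  have hf2 : ∀ s, Measurable (Function.uncurry (f2 s)) := by
    intro s
    have h1 : ∀ i : Fin n, Measurable fun z : (Fin n → X × Fin K) × H =>
        ipsE p0 c α s (z.1 i).1 (ev z.2 (z.1 i).1) (z.1 i).2 := by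
      intro i
      have h0 : Measurable fun z : (Fin n → X × Fin K) × H => ev z.2 (z.1 i).1 :=
        hev.comp (f := fun z : (Fin n → X × Fin K) × H => (z.2, (z.1 i).1)) (by fun_prop)
      exact (ipsE_meas p0 c α s hp0meas hcmeas).comp (f := fun z : (Fin n → X × Fin K) × H =>
        ((z.1 i).1, (ev z.2 (z.1 i).1, (z.1 i).2))) (by fun_prop)
    simp only [f2, Function.uncurry_def]
    fun_prop
  let E1 : (Fin n → X × Fin K) → ENNReal := fun ω => ∫⁻ h, f1 ω h ∂P
  let E2 : ℝ → (Fin n → X × Fin K) → ENNReal := fun s ω => ∫⁻ h, f2 s ω h ∂P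
  have hE1m : Measurable E1 := hf1.lintegral_prod_right'
  have hE2m : ∀ s, Measurable (E2 s) := fun s => (hf2 s).lintegral_prod_right'
  have hE1 : ∫⁻ ω, E1 ω ∂μ ≤ ENNReal.ofReal (4 * Real.sqrt n) := by
    simp only [E1]
    rw [lintegral_lintegral_swap hf1.aemeasurable]
    calc _ ≤ ∫⁻ h, ENNReal.ofReal (4 * Real.sqrt n) ∂P := by
          apply lintegral_mono
          intro h
          have := aux_maurer (ν ⊗ₘ κ0) n hn (fun z => c z.1 (ev h z.1))
            ((hcevh h).comp measurable_fst) (fun z => hc _ _)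
          have e : ∫ z, c z.1 (ev h z.1) ∂(ν ⊗ₘ κ0) = ∫ x, c x (ev h x) ∂ν := by
            conv_rhs => rw [← Measure.fst_compProd ν κ0, Measure.fst]
            rw [integral_map measurable_fst.aemeasurable (hcevh h).aestronglyMeasurable]
          rw [e] at this
          exact this
      _ = _ := by simp
  have hE2 : ∀ s, ∫⁻ ω, E2 s ω ∂μ ≤ 1 := by
    intro s
    simp only [E2]
    rw [lintegral_lintegral_swap (hf2 s).aemeasurable]
    calc _ ≤ ∫⁻ h, 1 ∂P := by
          apply lintegral_mono
          intro h
          have hm : Measurable fun z : X × Fin K => ipsE p0 c α s z.1 (ev h z.1) z.2 := by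
            have := hevh h
            exact (ipsE_meas p0 c α s hp0meas hcmeas).comp
              (f := fun z : X × Fin K => (z.1, (ev h z.1, z.2))) (by fun_prop)
          have := aux_pi (ν ⊗ₘ κ0) n _ hm 1 zero_le_one
            (ips_lint ν p0 c hp0meas hcmeas hp0pos hp0sum hc κ0 hκ0 α s (fun x => ev h x) (hevh h))
          simpa using this
      _ = _ := by simp
  let w : ℕ → ENNReal := fun k => ENNReal.ofReal (δ * (1 / 2) ^ (k + 1) / 4)
  let w1 : ENNReal := ENNReal.ofReal (δ / (8 * Real.sqrt n))
  let G : (Fin n → X × Fin K) → ENNReal := fun ω =>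
    w1 * E1 ω + ∑' k : ℕ, w k * (E2 ((1 / 2) ^ (k + 1)) ω + E2 (-(1 / 2) ^ (k + 1)) ω)
  have hGm : Measurable G := by
    refine (hE1m.const_mul _).add (Measurable.tsum fun k => ?_)
    exact ((hE2m _).add (hE2m _)).const_mul _
  have hG : ∫⁻ ω, G ω ∂μ ≤ ENNReal.ofReal δ := by
    simp only [G]
    rw [lintegral_add_left (hE1m.const_mul _), lintegral_const_mul _ hE1m,
      lintegral_tsum (f := fun (k : ℕ) ω =>
        w k * (E2 ((1 / 2) ^ (k + 1)) ω + E2 (-(1 / 2) ^ (k + 1)) ω))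
        (fun k => (((hE2m _).add (hE2m _)).const_mul _).aemeasurable)]
    have h1 : w1 * ∫⁻ ω, E1 ω ∂μ ≤ ENNReal.ofReal (δ / 2) := by
      refine (mul_le_mul_right hE1 _).trans (le_of_eq ?_)
      simp only [w1]
      rw [← ENNReal.ofReal_mul (by positivity)]
      congr 1
      field_simp
      norm_num
    have h2 : ∀ k : ℕ, ∫⁻ ω, w k * (E2 ((1 / 2) ^ (k + 1)) ω + E2 (-(1 / 2) ^ (k + 1)) ω) ∂μ
        ≤ ENNReal.ofReal (δ / 4 * (1 / 2) ^ k) := by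
      intro k
      rw [lintegral_const_mul (w k) (f := fun ω =>
        E2 ((1 / 2) ^ (k + 1)) ω + E2 (-(1 / 2) ^ (k + 1)) ω) ((hE2m _).add (hE2m _)),
        lintegral_add_left (hE2m _)]
      refine (mul_le_mul_right (add_le_add (hE2 _) (hE2 _)) _).trans (le_of_eq ?_)
      simp only [w]
      rw [one_add_one_eq_two, ← ENNReal.ofReal_ofNat, ← ENNReal.ofReal_mul (by positivity)]
      congr 1
      rw [pow_succ]
      ring
    have h3 : ∑' k : ℕ, ENNReal.ofReal (δ / 4 * (1 / 2) ^ k) = ENNReal.ofReal (δ / 2) := by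
      rw [← ENNReal.ofReal_tsum_of_nonneg (fun k => by positivity)
        (summable_geometric_two.mul_left _), tsum_mul_left, tsum_geometric_two]
      congr 1
      ring
    calc _ ≤ ENNReal.ofReal (δ / 2) + ENNReal.ofReal (δ / 2) :=
          add_le_add h1 ((ENNReal.tsum_le_tsum h2).trans h3.le)
      _ = _ := by
        rw [← ENNReal.ofReal_add (by positivity) (by positivity)]
        congr 1
        ring
  have hbad : μ {ω | 1 ≤ G ω} ≤ ENNReal.ofReal δ := by
    have := mul_meas_ge_le_lintegral (μ := μ) hGm 1
    rw [one_mul] at this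
    exact this.trans hG
  have hgood : ENNReal.ofReal (1 - δ) ≤ μ {ω | 1 ≤ G ω}ᶜ := by
    rw [prob_compl_eq_one_sub (measurableSet_le measurable_const hGm),
      ENNReal.ofReal_sub _ hδ0.le, ENNReal.ofReal_one]
    exact tsub_le_tsub_left hbad _
  refine hgood.trans (measure_mono ?_)
  intro ω hω
  have hω : G ω ≤ 1 := by
    simp only [Set.mem_compl_iff, Set.mem_ofPred_eq, not_le] at hω
    exact hω.le
  have hinv : ∀ (a b : ℝ) (e : ENNReal), 0 < a → a * b = 1 → ENNReal.ofReal a * e ≤ 1 →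
      e ≤ ENNReal.ofReal b := by
    intro a b e ha hab he
    have ha' : ENNReal.ofReal a ≠ 0 := by simpa using ha
    refine (ENNReal.mul_le_mul_iff_right ha' ENNReal.ofReal_ne_top).1 ?_
    rw [← ENNReal.ofReal_mul ha.le, hab, ENNReal.ofReal_one]
    exact he
  intro Q hQ hkl lam hlam
  refine aux_final ν p0 c hcmeas hp0pos hp0sum hc ev hev P n hn δ hδ α hα ω ?_ ?_ Q hkl lam hlam
  · apply hinv (δ / (8 * Real.sqrt n))
    · positivity
    · field_simp
    · exact le_trans le_self_add hω
  · intro k s hs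
    apply hinv (δ * (1 / 2) ^ (k + 1) / 4)
    · positivity
    · field_simp
    · have h1 : w k * (E2 ((1 / 2) ^ (k + 1)) ω + E2 (-(1 / 2) ^ (k + 1)) ω) ≤ 1 :=
        (ENNReal.le_tsum (f := fun k : ℕ =>
          w k * (E2 ((1 / 2) ^ (k + 1)) ω + E2 (-(1 / 2) ^ (k + 1)) ω)) k).trans
          (le_trans le_add_self hω)
      refine le_trans (mul_le_mul_right ?_ _) h1
      rcases hs with rfl | rfl
      · exact le_self_add
      · exact le_add_self
end

section
/- (One-sided extension of the main theorem, uniform in α) Let n ≥ 1, δ ∈ (0,1), λ > 0, and let P be a fixed prior on H. Then with probability at least 1−δ over draws of D_n, the following holds simultaneously for all posteriors Q on H and all α ∈ (0,1]: R(π_Q) ≤ R̂_n^α(π_Q) + √(KL1''(π_Q,α)/(2n)) + B_n^α(π_Q) + KL2''(π_Q,α)/(nλ) + (λ/2)·V̄_n^{2α}(π_Q), where KL1''(π_Q,α) = D_KL(Q‖P) + log(8√n/(δα)), KL2''(π_Q,α) = D_KL(Q‖P) + log(8/(δα)), and V̄_n^{2α}(π_Q) = (1/n)Σ_{i=1}^n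 ( E_{a∼π0(·|x_i)}[π_Q(a|x_i)/π0(a|x_i)^{4α}] + π_Q(a_i|x_i)·c_i²/π0(a_i|x_i)^{4α} ). -/
open MeasureTheory ProbabilityTheory Real

/-- Donsker–Varadhan inequality for bounded measurable functions. -/
theorem dv_ineq {H : Type*} [MeasurableSpace H] (P Q : Measure H)
    [IsProbabilityMeasure P] [IsProbabilityMeasure Q] (hkl : klDiv Q P ≠ ⊤)
    (f : H → ℝ) (hf : Measurable f) (C : ℝ) (hC : ∀ h, |f h| ≤ C) (B : ℝ) (hB : 0 < B)
    (hint : ∫⁻ h, ENNReal.ofReal (Real.exp (f h)) ∂P ≤ ENNReal.ofReal B) :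
    ∫ h, f h ∂Q ≤ (klDiv Q P).toReal + Real.log B := by
  have hc : Q ≪ P ∧ Integrable (llr Q P) Q := by
    by_contra h
    exact hkl (by simp [klDiv, h])
  have hk : ∫ x, llr Q P x ∂Q ≤ (klDiv Q P).toReal := by
    simp only [klDiv, hc, and_self, if_true]
    rw [ENNReal.toReal_ofReal']
    exact le_max_left _ _
  have hfQ : Integrable f Q :=
    Integrable.of_bound hf.aestronglyMeasurable C (Filter.Eventually.of_forall hC)
  have hfP : Integrable (fun x => Real.exp (f x)) P :=
    Integrable.of_bound hf.exp.aestronglyMeasurable (Real.exp C)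
      (Filter.Eventually.of_forall fun h => by
        rw [Real.norm_eq_abs, Real.abs_exp]
        exact Real.exp_le_exp.2 (le_of_abs_le (hC h)))
  have h1 := integral_llr_tilted_right hc.1 hfQ hfP hc.2
  have h2 := integrable_llr_tilted_right hc.1 hfQ hc.2 hfP
  have hP' : IsProbabilityMeasure (P.tilted f) := isProbabilityMeasure_tilted hfP
  have h3 := InformationTheory.integral_llr_add_sub_measure_univ_nonneg
    (hc.1.trans (absolutelyContinuous_tilted hfP)) h2
  simp only [probReal_univ] at h3
  have h4 : ∫ x, Real.exp (f x) ∂P ≤ B := by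
    rw [integral_eq_lintegral_of_nonneg_ae (Filter.Eventually.of_forall fun h => (Real.exp_pos _).le)
      hf.exp.aestronglyMeasurable]
    exact ENNReal.toReal_le_of_le_ofReal hB.le hint
  have h5 : Real.log (∫ x, Real.exp (f x) ∂P) ≤ Real.log B :=
    Real.log_le_log (integral_exp_pos hfP) h4
  linarith

/-- The per-sample functional. -/
noncomputable def phiF {X : Type*} {K : ℕ} {H : Type*} (p0 c : X → Fin K → ℝ)
    (ev : H → X → Fin K) (lam al : ℝ) (h : H) (x : X) (a : Fin K) : ℝ :=
  -(c x a * (if ev h x = a then 1 else 0) / p0 x a ^ al)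
    - (1 - ∑ b, (if ev h x = b then 1 else 0) * p0 x b ^ (1 - al))
    - lam / 2 * ((if ev h x = a then 1 else 0) * c x a ^ 2 / p0 x a ^ (2 * al))

theorem phiF_meas {X : Type*} [MeasurableSpace X] {K : ℕ} {H : Type*} [MeasurableSpace H]
    (p0 c : X → Fin K → ℝ)
    (hp0meas : ∀ a, Measurable fun x => p0 x a)
    (hcmeas : ∀ a, Measurable fun x => c x a)
    (ev : H → X → Fin K)
    (hev : Measurable fun q : H × X => ev q.1 q.2) (lam al : ℝ) :
    Measurable fun q : H × (X × Fin K) => phiF p0 c ev lam al q.1 q.2.1 q.2.2 := by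
  have key : Measurable fun q : (H × X) × Fin K => phiF p0 c ev lam al q.1.1 q.1.2 q.2 := by
    refine measurable_from_prod_countable_left fun a => ?_
    have hI : ∀ b, Measurable fun q : H × X => (if ev q.1 q.2 = b then (1 : ℝ) else 0) :=
      fun b => Measurable.ite (hev (measurableSet_singleton b)) measurable_const measurable_const
    have hp : ∀ b (r : ℝ), Measurable fun q : H × X => p0 q.2 b ^ r :=
      fun b r => ((hp0meas b).comp measurable_snd).pow_const r
    have hc' : ∀ b, Measurable fun q : H × X => c q.2 b :=
      fun b => (hcmeas b).comp measurable_snd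
    unfold phiF
    refine ((((hc' a).mul (hI a)).div (hp a al)).neg.sub (measurable_const.sub ?_)).sub
      ((((hI a).mul ((hc' a).pow_const 2)).div (hp a (2 * al))).const_mul _)
    exact Finset.measurable_fun_sum _ fun b _ => (hI b).mul (hp b (1 - al))
  exact key.comp ((measurable_fst.prodMk measurable_snd.fst).prodMk measurable_snd.snd)

theorem exp_quad_le {x : ℝ} (hx : 0 ≤ x) : Real.exp (x - x ^ 2 / 2) ≤ 1 + x := by
  have h : x - x ^ 2 / 2 ≤ Real.log (1 + x) := by
    have h1 := Real.le_log_one_add_of_nonneg hx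
    refine le_trans ?_ h1
    rw [le_div_iff₀ (by linarith)]
    nlinarith [pow_nonneg hx 3]
  calc _ ≤ Real.exp (Real.log (1 + x)) := Real.exp_le_exp.2 h
    _ = 1 + x := Real.exp_log (by linarith)

/-- conditional exponential moment -/
theorem cond_moment {X : Type*} {K : ℕ} {H : Type*} (p0 c : X → Fin K → ℝ)
    (hp0pos : ∀ x a, 0 < p0 x a) (hp0sum : ∀ x, ∑ a, p0 x a = 1)
    (hc : ∀ x a, c x a ∈ Set.Icc (-1 : ℝ) 0)
    (ev : H → X → Fin K) (lam al : ℝ) (hlam : 0 < lam) (hal : al ∈ Set.Ioc (0 : ℝ) 1)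
    (h : H) (x : X) :
    ∑ a, Real.exp (lam * phiF p0 c ev lam al h x a) * p0 x a ≤ 1 + lam * (-c x (ev h x)) := by
  set b := ev h x with hb
  set p := p0 x b with hp
  have hppos : 0 < p := hp0pos x b
  have hple : p ≤ 1 := by
    rw [← hp0sum x]
    exact Finset.single_le_sum (fun a _ => (hp0pos x a).le) (Finset.mem_univ b)
  set m := -c x b with hm
  have hm0 : 0 ≤ m := by have := (hc x b).2; simp only [hm]; linarith
  set s := p ^ (1 - al) with hs
  have hs0 : 0 < s := Real.rpow_pos_of_pos hppos _
  have hs1 : s ≤ 1 := Real.rpow_le_one hppos.le hple (by linarith [hal.2])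
  set y := lam * m / p ^ al with hy
  have hpal : 0 < p ^ al := Real.rpow_pos_of_pos hppos _
  have hy0 : 0 ≤ y := by positivity
  have hsum : ∑ b', (if ev h x = b' then (1 : ℝ) else 0) * p0 x b' ^ (1 - al) = s := by
    simp [hs, hp, hb]
  have hpy : p * y = lam * m * s := by
    rw [hy, hs, Real.rpow_sub hppos, Real.rpow_one]
    field_simp
  have hterm : ∀ a, Real.exp (lam * phiF p0 c ev lam al h x a) * p0 x a
      ≤ Real.exp (-(lam * (1 - s))) * (p0 x a + if b = a then p * y else 0) := by
    intro a
    unfold phiF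
    rw [hsum]
    by_cases hab : b = a
    · subst hab
      rw [if_pos hb.symm, if_pos rfl]
      have e : lam * (-(c x b * 1 / p0 x b ^ al) - (1 - s)
          - lam / 2 * (1 * c x b ^ 2 / p0 x b ^ (2 * al)))
          = -(lam * (1 - s)) + (y - y ^ 2 / 2) := by
        have h2 : p0 x b ^ (2 * al) = (p ^ al) ^ 2 := by
          rw [← hp, mul_comm, Real.rpow_mul hppos.le]; norm_cast
        rw [h2, ← hp, hy, hm]
        field_simp
        ring
      rw [e, Real.exp_add, mul_assoc]
      refine mul_le_mul_of_nonneg_left ?_ (Real.exp_pos _).le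
      have := exp_quad_le hy0
      rw [← hp]
      nlinarith
    · rw [if_neg (by rw [← hb]; exact hab), if_neg hab]
      apply le_of_eq
      have e : lam * (-(c x a * 0 / p0 x a ^ al) - (1 - s)
          - lam / 2 * (0 * c x a ^ 2 / p0 x a ^ (2 * al)))
          = -(lam * (1 - s)) := by simp; ring
      rw [e, add_zero]
  calc _ ≤ ∑ a, Real.exp (-(lam * (1 - s))) * (p0 x a + if b = a then p * y else 0) :=
        Finset.sum_le_sum fun a _ => hterm a
    _ = Real.exp (-(lam * (1 - s))) * (1 + lam * m * s) := by
        rw [← Finset.mul_sum, Finset.sum_add_distrib, hp0sum, ← hpy]; simp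
    _ ≤ 1 * (1 + lam * m * s) := by
        refine mul_le_mul_of_nonneg_right ?_ (by positivity)
        rw [Real.exp_le_one_iff]
        have : 0 ≤ lam * (1 - s) := mul_nonneg hlam.le (by linarith)
        linarith
    _ ≤ 1 + lam * m := by
        have : lam * m * s ≤ lam * m * 1 := mul_le_mul_of_nonneg_left hs1 (by positivity)
        linarith

/-- Risk of a deterministic hypothesis. -/
noncomputable def riskH {X : Type*} [MeasurableSpace X] {K : ℕ} {H : Type*} (ν : Measure X)
    (c : X → Fin K → ℝ) (ev : H → X → Fin K) (h : H) : ℝ :=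
  ∫ x, ∑ b, (if ev h x = b then 1 else 0) * c x b ∂ν

theorem riskInt_meas {X : Type*} [MeasurableSpace X] {K : ℕ} {H : Type*} [MeasurableSpace H]
    (c : X → Fin K → ℝ) (hcmeas : ∀ a, Measurable fun x => c x a)
    (ev : H → X → Fin K) (hev : Measurable fun q : H × X => ev q.1 q.2) :
    Measurable fun q : H × X => ∑ b, (if ev q.1 q.2 = b then (1 : ℝ) else 0) * c q.2 b := by
  refine Finset.measurable_fun_sum _ fun b _ => ?_
  exact (Measurable.ite (hev (measurableSet_singleton b)) measurable_const measurable_const).mul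
    ((hcmeas b).comp measurable_snd)

theorem riskInt_bound {X : Type*} {K : ℕ} {H : Type*}
    (c : X → Fin K → ℝ) (hc : ∀ x a, c x a ∈ Set.Icc (-1 : ℝ) 0) (ev : H → X → Fin K)
    (h : H) (x : X) : |∑ b, (if ev h x = b then (1 : ℝ) else 0) * c x b| ≤ 1 := by
  have := hc x (ev h x)
  simp only [ite_mul, one_mul, zero_mul, Finset.sum_ite_eq, Finset.mem_univ, if_true]
  rw [abs_le]
  exact ⟨this.1, by linarith [this.2]⟩

theorem riskH_bound {X : Type*} [MeasurableSpace X] {K : ℕ} {H : Type*} (ν : Measure X)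
    [IsProbabilityMeasure ν]
    (c : X → Fin K → ℝ) (hc : ∀ x a, c x a ∈ Set.Icc (-1 : ℝ) 0) (ev : H → X → Fin K)
    (h : H) : |riskH ν c ev h| ≤ 1 := by
  have := norm_integral_le_of_norm_le_const (μ := ν) (C := 1)
    (f := fun x => ∑ b, (if ev h x = b then (1 : ℝ) else 0) * c x b)
    (Filter.Eventually.of_forall fun x => riskInt_bound c hc ev h x)
  simpa [riskH] using this

theorem riskH_meas {X : Type*} [MeasurableSpace X] {K : ℕ} {H : Type*} [MeasurableSpace H]
    (ν : Measure X) [IsProbabilityMeasure ν]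
    (c : X → Fin K → ℝ) (hcmeas : ∀ a, Measurable fun x => c x a)
    (ev : H → X → Fin K) (hev : Measurable fun q : H × X => ev q.1 q.2) :
    Measurable (riskH ν c ev) :=
  ((riskInt_meas c hcmeas ev hev).stronglyMeasurable.integral_prod_right (ν := ν)).measurable

theorem one_moment {X : Type*} [MeasurableSpace X] {K : ℕ} {H : Type*} [MeasurableSpace H]
    (ν : Measure X) [IsProbabilityMeasure ν] (p0 c : X → Fin K → ℝ)
    (hp0meas : ∀ a, Measurable fun x => p0 x a)
    (hcmeas : ∀ a, Measurable fun x => c x a)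
    (hp0pos : ∀ x a, 0 < p0 x a) (hp0sum : ∀ x, ∑ a, p0 x a = 1)
    (hc : ∀ x a, c x a ∈ Set.Icc (-1 : ℝ) 0)
    (ev : H → X → Fin K)
    (hev : Measurable fun q : H × X => ev q.1 q.2)
    (κ0 : Kernel X (Fin K)) [IsMarkovKernel κ0]
    (hκ0 : ∀ x a, κ0 x {a} = ENNReal.ofReal (p0 x a))
    (lam al : ℝ) (hlam : 0 < lam) (hal : al ∈ Set.Ioc (0 : ℝ) 1) (h : H) :
    ∫⁻ z, ENNReal.ofReal (Real.exp (lam * (riskH ν c ev h + phiF p0 c ev lam al h z.1 z.2)))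
      ∂(ν ⊗ₘ κ0) ≤ 1 := by
  have hm : Measurable fun z : X × Fin K => phiF p0 c ev lam al h z.1 z.2 :=
    (phiF_meas p0 c hp0meas hcmeas ev hev lam al).comp measurable_prodMk_left
  have hci : Integrable (fun x => ∑ b, (if ev h x = b then (1 : ℝ) else 0) * c x b) ν :=
    Integrable.of_bound
      ((riskInt_meas c hcmeas ev hev).comp measurable_prodMk_left).aestronglyMeasurable 1
      (Filter.Eventually.of_forall fun x => riskInt_bound c hc ev h x)
  have step : ∀ x, ∫⁻ a, ENNReal.ofReal (Real.exp (lam * phiF p0 c ev lam al h x a)) ∂(κ0 x)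
      ≤ ENNReal.ofReal (1 - lam * ∑ b, (if ev h x = b then (1 : ℝ) else 0) * c x b) := by
    intro x
    rw [lintegral_fintype]
    simp_rw [hκ0, ← ENNReal.ofReal_mul (Real.exp_pos _).le]
    rw [← ENNReal.ofReal_sum_of_nonneg
      (fun a _ => mul_nonneg (Real.exp_pos _).le (hp0pos x a).le)]
    apply ENNReal.ofReal_le_ofReal
    refine (cond_moment p0 c hp0pos hp0sum hc ev lam al hlam hal h x).trans (le_of_eq ?_)
    simp only [ite_mul, one_mul, zero_mul, Finset.sum_ite_eq, Finset.mem_univ, if_true]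
    ring
  have h1 : ∫⁻ z, ENNReal.ofReal (Real.exp (lam * phiF p0 c ev lam al h z.1 z.2)) ∂(ν ⊗ₘ κ0)
      ≤ ENNReal.ofReal (Real.exp (-(lam * riskH ν c ev h))) := by
    rw [Measure.lintegral_compProd (hm.const_mul lam).exp.ennreal_ofReal]
    refine (lintegral_mono step).trans ?_
    rw [← ofReal_integral_eq_lintegral_ofReal]
    · apply ENNReal.ofReal_le_ofReal
      rw [integral_sub (integrable_const _) (hci.const_mul _), integral_const_mul]
      simp only [integral_const, probReal_univ, smul_eq_mul, one_mul]
      have := Real.add_one_le_exp (-(lam * riskH ν c ev h))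
      unfold riskH at this ⊢
      linarith
    · exact (integrable_const _).sub (hci.const_mul _)
    · refine Filter.Eventually.of_forall fun x => ?_
      have := (hc x (ev h x)).2
      simp only [ite_mul, one_mul, zero_mul, Finset.sum_ite_eq, Finset.mem_univ, if_true,
        Pi.zero_apply]
      nlinarith
  simp_rw [mul_add, Real.exp_add, ENNReal.ofReal_mul (Real.exp_pos _).le]
  rw [lintegral_const_mul _ (hm.const_mul lam).exp.ennreal_ofReal]
  refine (mul_le_mul_right h1 _).trans (le_of_eq ?_)
  rw [← ENNReal.ofReal_mul (Real.exp_pos _).le, ← Real.exp_add]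
  simp

/-- The exponent. -/
noncomputable def bigF {X : Type*} [MeasurableSpace X] {K : ℕ} {H : Type*} (ν : Measure X)
    (p0 c : X → Fin K → ℝ) (ev : H → X → Fin K) (lam al : ℝ) {n : ℕ}
    (h : H) (ω : Fin n → X × Fin K) : ℝ :=
  ∑ i, lam * (riskH ν c ev h + phiF p0 c ev lam al h (ω i).1 (ω i).2)

theorem bigF_meas {X : Type*} [MeasurableSpace X] {K : ℕ} {H : Type*} [MeasurableSpace H]
    (ν : Measure X) [IsProbabilityMeasure ν] (p0 c : X → Fin K → ℝ)
    (hp0meas : ∀ a, Measurable fun x => p0 x a)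
    (hcmeas : ∀ a, Measurable fun x => c x a)
    (ev : H → X → Fin K)
    (hev : Measurable fun q : H × X => ev q.1 q.2) (lam al : ℝ) (n : ℕ) :
    Measurable fun q : H × (Fin n → X × Fin K) => bigF ν p0 c ev lam al q.1 q.2 := by
  refine Finset.measurable_fun_sum _ fun i _ => Measurable.const_mul (Measurable.add ?_ ?_) _
  · exact (riskH_meas ν c hcmeas ev hev).comp measurable_fst
  · exact (phiF_meas p0 c hp0meas hcmeas ev hev lam al).comp
      (measurable_fst.prodMk ((measurable_pi_apply i).comp measurable_snd))

theorem big_moment {X : Type*} [MeasurableSpace X] {K : ℕ} {H : Type*} [MeasurableSpace H]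
    (ν : Measure X) [IsProbabilityMeasure ν] (p0 c : X → Fin K → ℝ)
    (hp0meas : ∀ a, Measurable fun x => p0 x a)
    (hcmeas : ∀ a, Measurable fun x => c x a)
    (hp0pos : ∀ x a, 0 < p0 x a) (hp0sum : ∀ x, ∑ a, p0 x a = 1)
    (hc : ∀ x a, c x a ∈ Set.Icc (-1 : ℝ) 0)
    (ev : H → X → Fin K)
    (hev : Measurable fun q : H × X => ev q.1 q.2)
    (κ0 : Kernel X (Fin K)) [IsMarkovKernel κ0]
    (hκ0 : ∀ x a, κ0 x {a} = ENNReal.ofReal (p0 x a))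
    (lam al : ℝ) (hlam : 0 < lam) (hal : al ∈ Set.Ioc (0 : ℝ) 1) (n : ℕ) (h : H) :
    ∫⁻ ω, ENNReal.ofReal (Real.exp (bigF ν p0 c ev lam al h ω))
      ∂(Measure.pi fun _ : Fin n => ν ⊗ₘ κ0) ≤ 1 := by
  have hm : Measurable fun z : X × Fin K => ENNReal.ofReal
      (Real.exp (lam * (riskH ν c ev h + phiF p0 c ev lam al h z.1 z.2))) :=
    ((((phiF_meas p0 c hp0meas hcmeas ev hev lam al).comp
      measurable_prodMk_left).const_add _).const_mul lam).exp.ennreal_ofReal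
  simp_rw [bigF, Real.exp_sum]
  simp_rw [ENNReal.ofReal_prod_of_nonneg (fun i _ => (Real.exp_pos _).le)]
  have hind := iIndepFun_pi (μ := fun _ : Fin n => ν ⊗ₘ κ0) (fun _ => hm.aemeasurable)
  rw [lintegral_prod_eq_prod_lintegral_of_indepFun Finset.univ _ hind
    (fun i => hm.comp (measurable_pi_apply i))]
  refine Finset.prod_le_one' fun i _ => ?_
  have hmp := measurePreserving_eval (fun _ : Fin n => ν ⊗ₘ κ0) i
  have := hmp.lintegral_comp hm
  refine (le_of_eq this).trans ?_
  exact one_moment ν p0 c hp0meas hcmeas hp0pos hp0sum hc ev hev κ0 hκ0 lam al hlam hal h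

/-- Good event. -/
theorem good_event_s7 {X : Type*} [MeasurableSpace X] {K : ℕ} {H : Type*} [MeasurableSpace H]
    (ν : Measure X) [IsProbabilityMeasure ν] (p0 c : X → Fin K → ℝ)
    (hp0meas : ∀ a, Measurable fun x => p0 x a)
    (hcmeas : ∀ a, Measurable fun x => c x a)
    (hp0pos : ∀ x a, 0 < p0 x a) (hp0sum : ∀ x, ∑ a, p0 x a = 1)
    (hc : ∀ x a, c x a ∈ Set.Icc (-1 : ℝ) 0)
    (ev : H → X → Fin K)
    (hev : Measurable fun q : H × X => ev q.1 q.2)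
    (κ0 : Kernel X (Fin K)) [IsMarkovKernel κ0]
    (hκ0 : ∀ x a, κ0 x {a} = ENNReal.ofReal (p0 x a))
    (P : Measure H) [IsProbabilityMeasure P] (n : ℕ)
    (δ : ℝ) (hδ : δ ∈ Set.Ioo (0 : ℝ) 1) (lam : ℝ) (hlam : 0 < lam) :
    ENNReal.ofReal (1 - δ) ≤ (Measure.pi fun _ : Fin n => ν ⊗ₘ κ0)
      {ω | ∀ j : ℕ, ∫⁻ h, ENNReal.ofReal
        (Real.exp (bigF ν p0 c ev lam ((1 / 2 : ℝ) ^ j) h ω)) ∂P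
          ≤ ENNReal.ofReal (2 / (δ * (1 / 2 : ℝ) ^ j))} := by
  set μ := Measure.pi fun _ : Fin n => ν ⊗ₘ κ0 with hμ
  have hal : ∀ j : ℕ, ((1 / 2 : ℝ) ^ j) ∈ Set.Ioc (0 : ℝ) 1 := fun j =>
    ⟨by positivity, pow_le_one₀ (by norm_num) (by norm_num)⟩
  have hmj : ∀ j : ℕ, Measurable fun q : H × (Fin n → X × Fin K) => ENNReal.ofReal
        (Real.exp (bigF ν p0 c ev lam ((1 / 2 : ℝ) ^ j) q.1 q.2)) := fun j =>
    (bigF_meas ν p0 c hp0meas hcmeas ev hev lam _ n).exp.ennreal_ofReal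
  set g : ℕ → (Fin n → X × Fin K) → ENNReal := fun j ω => ∫⁻ h, ENNReal.ofReal
        (Real.exp (bigF ν p0 c ev lam ((1 / 2 : ℝ) ^ j) h ω)) ∂P with hg
  have hgm : ∀ j, Measurable (g j) := fun j => (hmj j).lintegral_prod_left'
  have hg1 : ∀ j, ∫⁻ ω, g j ω ∂μ ≤ 1 := by
    intro j
    simp only [hg]
    have hsw : AEMeasurable (Function.uncurry fun (ω : Fin n → X × Fin K) (h : H) =>
        ENNReal.ofReal (Real.exp (bigF ν p0 c ev lam ((1 / 2 : ℝ) ^ j) h ω))) (μ.prod P) :=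
      ((hmj j).comp measurable_swap).aemeasurable
    rw [lintegral_lintegral_swap hsw]
    calc _ ≤ ∫⁻ _, 1 ∂P := lintegral_mono fun h =>
          big_moment ν p0 c hp0meas hcmeas hp0pos hp0sum hc ev hev κ0 hκ0 lam _ hlam (hal j) n h
      _ = 1 := by simp
  set G : (Fin n → X × Fin K) → ENNReal := fun ω => ∑' j : ℕ, (2⁻¹ : ENNReal) ^ (j + 1) * g j ω
    with hG
  have hGm : Measurable G := Measurable.tsum fun j => (hgm j).const_mul _
  have hG1 : ∫⁻ ω, G ω ∂μ ≤ 1 := by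
    simp only [hG]
    rw [lintegral_tsum fun j => ((hgm j).const_mul _).aemeasurable]
    simp_rw [lintegral_const_mul _ (hgm _)]
    calc _ ≤ ∑' j : ℕ, (2⁻¹ : ENNReal) ^ (j + 1) :=
          ENNReal.tsum_le_tsum fun j => mul_le_of_le_one_right' (hg1 j)
      _ = 1 := by
          rw [ENNReal.tsum_geometric_add_one, ENNReal.one_sub_inv_two, inv_inv]
          exact ENNReal.inv_mul_cancel (by norm_num) (by norm_num)
  have hmk := mul_meas_ge_le_lintegral (μ := μ) hGm (ENNReal.ofReal (1 / δ))
  have hbad : μ {ω | ENNReal.ofReal (1 / δ) ≤ G ω} ≤ ENNReal.ofReal δ := by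
    have h2 := hmk.trans hG1
    have e : ENNReal.ofReal δ * ENNReal.ofReal (1 / δ) = 1 := by
      rw [← ENNReal.ofReal_mul hδ.1.le, mul_one_div_cancel hδ.1.ne']; simp
    calc _ = ENNReal.ofReal δ * (ENNReal.ofReal (1 / δ) * μ {ω | ENNReal.ofReal (1 / δ) ≤ G ω}) := by
          rw [← mul_assoc, e, one_mul]
      _ ≤ ENNReal.ofReal δ * 1 := by gcongr
      _ = _ := mul_one _
  have hgood : ENNReal.ofReal (1 - δ) ≤ μ {ω | ENNReal.ofReal (1 / δ) ≤ G ω}ᶜ := by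
    rw [prob_compl_eq_one_sub (measurableSet_le measurable_const hGm),
      ENNReal.ofReal_sub _ hδ.1.le, ENNReal.ofReal_one]
    exact tsub_le_tsub_left hbad _
  refine hgood.trans (measure_mono ?_)
  intro ω hω j
  simp only [Set.mem_compl_iff, Set.mem_ofPred_eq, not_le] at hω
  have h1 : (2⁻¹ : ENNReal) ^ (j + 1) * g j ω ≤ ENNReal.ofReal (1 / δ) :=
    (ENNReal.le_tsum j).trans hω.le
  have e2 : (2 : ENNReal) ^ (j + 1) * (2⁻¹ : ENNReal) ^ (j + 1) = 1 := by
    rw [← mul_pow, ENNReal.mul_inv_cancel (by norm_num) (by norm_num), one_pow]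
  have hδ0 := hδ.1
  calc g j ω = 2 ^ (j + 1) * ((2⁻¹ : ENNReal) ^ (j + 1) * g j ω) := by
        rw [← mul_assoc, e2, one_mul]
    _ ≤ 2 ^ (j + 1) * ENNReal.ofReal (1 / δ) := by gcongr
    _ = ENNReal.ofReal (2 ^ (j + 1)) * ENNReal.ofReal (1 / δ) := by
        rw [ENNReal.ofReal_pow (by norm_num)]; norm_num
    _ = _ := by
        rw [← ENNReal.ofReal_mul (by positivity)]
        congr 1
        rw [one_div, one_div, inv_pow, pow_succ]
        field_simp

theorem ind_int {X : Type*} [MeasurableSpace X] {K : ℕ} {H : Type*} [MeasurableSpace H]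
    (ev : H → X → Fin K) (hev : Measurable fun q : H × X => ev q.1 q.2)
    (Q : Measure H) [IsProbabilityMeasure Q] (x : X) (b : Fin K) :
    Integrable (fun h => if ev h x = b then (1 : ℝ) else 0) Q ∧
      ∫ h, (if ev h x = b then (1 : ℝ) else 0) ∂Q = (Q {h | ev h x = b}).toReal := by
  have hs : MeasurableSet {h | ev h x = b} :=
    (hev.comp measurable_prodMk_right) (measurableSet_singleton b)
  have e : (fun h => if ev h x = b then (1 : ℝ) else 0)
      = Set.indicator {h | ev h x = b} (fun _ => (1 : ℝ)) := by
    ext h; simp [Set.indicator]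
  rw [e]
  refine ⟨(integrable_const _).indicator hs, ?_⟩
  rw [integral_indicator hs]
  simp [Measure.real]

theorem phiF_int {X : Type*} [MeasurableSpace X] {K : ℕ} {H : Type*} [MeasurableSpace H]
    (p0 c : X → Fin K → ℝ)
    (ev : H → X → Fin K) (hev : Measurable fun q : H × X => ev q.1 q.2) (lam al : ℝ)
    (Q : Measure H) [IsProbabilityMeasure Q] (x : X) (a : Fin K) :
    Integrable (fun h => phiF p0 c ev lam al h x a) Q ∧
    ∫ h, phiF p0 c ev lam al h x a ∂Q =
      -(c x a * (Q {h | ev h x = a}).toReal / p0 x a ^ al)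
      - (1 - ∑ b, (Q {h | ev h x = b}).toReal * p0 x b ^ (1 - al))
      - lam / 2 * ((Q {h | ev h x = a}).toReal * c x a ^ 2 / p0 x a ^ (2 * al)) := by
  have hI := fun b => (ind_int ev hev Q x b).1
  have i1 : Integrable (fun h => -(c x a * (if ev h x = a then (1 : ℝ) else 0) / p0 x a ^ al)) Q :=
    (((hI a).const_mul _).div_const _).neg
  have i2' : ∀ b ∈ Finset.univ, Integrable
      (fun h => (if ev h x = b then (1 : ℝ) else 0) * p0 x b ^ (1 - al)) Q :=
    fun b _ => (hI b).mul_const _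
  have i2'' := integrable_finsetSum Finset.univ i2'
  have i2 : Integrable
      (fun h => 1 - ∑ b, (if ev h x = b then (1 : ℝ) else 0) * p0 x b ^ (1 - al)) Q :=
    (integrable_const _).sub i2''
  have i3 : Integrable (fun h => lam / 2 *
      ((if ev h x = a then (1 : ℝ) else 0) * c x a ^ 2 / p0 x a ^ (2 * al))) Q :=
    (((hI a).mul_const _).div_const _).const_mul _
  have e := fun b => (ind_int ev hev Q x b).2
  unfold phiF
  refine ⟨(i1.sub i2).sub i3, ?_⟩
  have i12 : Integrable (fun h => -(c x a * (if ev h x = a then (1 : ℝ) else 0) / p0 x a ^ al)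
      - (1 - ∑ b, (if ev h x = b then (1 : ℝ) else 0) * p0 x b ^ (1 - al))) Q := i1.sub i2
  rw [integral_sub i12 i3, integral_sub i1 i2, integral_sub (integrable_const _) i2'',
    integral_finsetSum _ i2', integral_neg, integral_div, integral_const_mul, integral_const_mul,
    integral_div, integral_mul_const, e]
  simp_rw [integral_mul_const, e]
  simp

theorem riskH_int {X : Type*} [MeasurableSpace X] {K : ℕ} {H : Type*} [MeasurableSpace H]
    (ν : Measure X) [IsProbabilityMeasure ν] (c : X → Fin K → ℝ)
    (hcmeas : ∀ a, Measurable fun x => c x a)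
    (hc : ∀ x a, c x a ∈ Set.Icc (-1 : ℝ) 0)
    (ev : H → X → Fin K) (hev : Measurable fun q : H × X => ev q.1 q.2)
    (Q : Measure H) [IsProbabilityMeasure Q] :
    Integrable (riskH ν c ev) Q ∧
    ∫ h, riskH ν c ev h ∂Q = ∫ x, ∑ a, (Q {h | ev h x = a}).toReal * c x a ∂ν := by
  refine ⟨Integrable.of_bound (riskH_meas ν c hcmeas ev hev).aestronglyMeasurable 1
    (Filter.Eventually.of_forall fun h => riskH_bound ν c hc ev h), ?_⟩
  unfold riskH
  have hint : Integrable (Function.uncurry fun (h : H) (x : X) =>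
      ∑ b, (if ev h x = b then (1 : ℝ) else 0) * c x b) (Q.prod ν) :=
    Integrable.of_bound (riskInt_meas c hcmeas ev hev).aestronglyMeasurable 1
      (Filter.Eventually.of_forall fun q => riskInt_bound c hc ev q.1 q.2)
  rw [integral_integral_swap hint]
  congr 1
  ext x
  rw [integral_finsetSum _ fun b _ => ((ind_int ev hev Q x b).1.mul_const _)]
  simp_rw [integral_mul_const, (ind_int ev hev Q x _).2]

theorem bigF_bound {X : Type*} [MeasurableSpace X] {K : ℕ} {H : Type*}
    (ν : Measure X) [IsProbabilityMeasure ν] (p0 c : X → Fin K → ℝ)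
    (hc : ∀ x a, c x a ∈ Set.Icc (-1 : ℝ) 0)
    (ev : H → X → Fin K) (lam al : ℝ) {n : ℕ} (ω : Fin n → X × Fin K) :
    ∃ C, ∀ h, |bigF ν p0 c ev lam al h ω| ≤ C := by
  have hphi : ∀ x a, ∃ C, ∀ h, |phiF p0 c ev lam al h x a| ≤ C := by
    intro x a
    refine ⟨∑ b', |-(c x a * (if b' = a then 1 else 0) / p0 x a ^ al)
      - (1 - ∑ b, (if b' = b then 1 else 0) * p0 x b ^ (1 - al))
      - lam / 2 * ((if b' = a then 1 else 0) * c x a ^ 2 / p0 x a ^ (2 * al))|, fun h => ?_⟩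
    unfold phiF
    exact Finset.single_le_sum (f := fun b' => |-(c x a * (if b' = a then 1 else 0) / p0 x a ^ al)
      - (1 - ∑ b, (if b' = b then 1 else 0) * p0 x b ^ (1 - al))
      - lam / 2 * ((if b' = a then 1 else 0) * c x a ^ 2 / p0 x a ^ (2 * al))|)
      (fun b _ => abs_nonneg _) (Finset.mem_univ (ev h x))
  choose C hC using hphi
  refine ⟨∑ i, |lam| * (1 + C (ω i).1 (ω i).2), fun h => ?_⟩
  refine (Finset.abs_sum_le_sum_abs _ _).trans (Finset.sum_le_sum fun i _ => ?_)
  rw [abs_mul]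
  refine mul_le_mul_of_nonneg_left ((abs_add_le _ _).trans ?_) (abs_nonneg _)
  exact add_le_add (riskH_bound ν c hc ev h) (hC _ _ h)

theorem bigF_meas_left {X : Type*} [MeasurableSpace X] {K : ℕ} {H : Type*} [MeasurableSpace H]
    (ν : Measure X) [IsProbabilityMeasure ν] (p0 c : X → Fin K → ℝ)
    (hp0meas : ∀ a, Measurable fun x => p0 x a)
    (hcmeas : ∀ a, Measurable fun x => c x a)
    (ev : H → X → Fin K)
    (hev : Measurable fun q : H × X => ev q.1 q.2) (lam al : ℝ) {n : ℕ}
    (ω : Fin n → X × Fin K) :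
    Measurable fun h => bigF ν p0 c ev lam al h ω := by
  have h1 := bigF_meas ν p0 c hp0meas hcmeas ev hev lam al n
  have h2 : Measurable fun h : H => (h, ω) := measurable_id.prodMk measurable_const
  have h3 := h1.comp h2
  simp only [Function.comp_def] at h3
  exact h3

set_option maxHeartbeats 200000

/-- **One-sided extension of the main theorem, uniform in `α`.**  With probability at least
`1 − δ` over the logged data, the one-sided PAC-Bayes bound holds simultaneously for all
posteriors `Q` on `H` (with finite KL divergence to the prior) and all `α ∈ (0,1]`, where the
second-moment term is evaluated at `2α` (i.e. with exponent `4α` in the denominator). -/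
theorem pac_bayes_ips_alpha_uniform_alpha
    {X : Type*} [MeasurableSpace X] {K : ℕ}
    {H : Type*} [MeasurableSpace H]
    (ν : Measure X) [IsProbabilityMeasure ν]
    (p0 c : X → Fin K → ℝ)
    (hp0meas : ∀ a, Measurable fun x => p0 x a)
    (hcmeas : ∀ a, Measurable fun x => c x a)
    (hp0pos : ∀ x a, 0 < p0 x a) (hp0sum : ∀ x, ∑ a, p0 x a = 1)
    (hc : ∀ x a, c x a ∈ Set.Icc (-1 : ℝ) 0)
    (ev : H → X → Fin K)
    (hev : Measurable fun q : H × X => ev q.1 q.2)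
    (κ0 : Kernel X (Fin K)) [IsMarkovKernel κ0]
    (hκ0 : ∀ x a, κ0 x {a} = ENNReal.ofReal (p0 x a))
    (P : Measure H) [IsProbabilityMeasure P]
    (n : ℕ) (hn : 1 ≤ n)
    (δ : ℝ) (hδ : δ ∈ Set.Ioo (0 : ℝ) 1) (lam : ℝ) (hlam : 0 < lam) :
    ENNReal.ofReal (1 - δ) ≤
      (Measure.pi fun _ : Fin n => ν ⊗ₘ κ0)
        {ω | ∀ Q : Measure H, IsProbabilityMeasure Q → klDiv Q P ≠ ⊤ →
          ∀ α : ℝ, α ∈ Set.Ioc (0 : ℝ) 1 →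
          (∫ x, ∑ a, (Q {h | ev h x = a}).toReal * c x a ∂ν)
            ≤ (n : ℝ)⁻¹ * ∑ i, c (ω i).1 (ω i).2 * (Q {h | ev h (ω i).1 = (ω i).2}).toReal
                  / p0 (ω i).1 (ω i).2 ^ α
              + Real.sqrt (((klDiv Q P).toReal + Real.log (8 * Real.sqrt n / (δ * α)))
                  / (2 * n))
              + (1 - (n : ℝ)⁻¹ * ∑ i, ∑ a,
                  (Q {h | ev h (ω i).1 = a}).toReal * p0 (ω i).1 a ^ (1 - α))
              + ((klDiv Q P).toReal + Real.log (8 / (δ * α))) / (n * lam)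
              + lam / 2 * ((n : ℝ)⁻¹ * ∑ i,
                  ((∑ a, p0 (ω i).1 a *
                      ((Q {h | ev h (ω i).1 = a}).toReal / p0 (ω i).1 a ^ (4 * α)))
                    + (Q {h | ev h (ω i).1 = (ω i).2}).toReal * c (ω i).1 (ω i).2 ^ 2
                        / p0 (ω i).1 (ω i).2 ^ (4 * α)))} := by
  refine (good_event_s7 ν p0 c hp0meas hcmeas hp0pos hp0sum hc ev hev κ0 hκ0 P n δ hδ lam hlam).trans
    (measure_mono ?_)
  intro ω hω Q hQ hkl α hα
  have hδ0 := hδ.1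
  have hα0 := hα.1
  obtain ⟨j, hj1, hj2⟩ := exists_nat_pow_near_of_lt_one hα.1 hα.2
    (by norm_num : (0 : ℝ) < 1 / 2) (by norm_num)
  have hωj : ∫⁻ h, ENNReal.ofReal (Real.exp (bigF ν p0 c ev lam ((1 / 2 : ℝ) ^ j) h ω)) ∂P
      ≤ ENNReal.ofReal (2 / (δ * (1 / 2 : ℝ) ^ j)) := hω j
  have hβ1 : (1 / 2 : ℝ) ^ j ≤ 1 := pow_le_one₀ (by norm_num) (by norm_num)
  rw [pow_succ] at hj1
  generalize (1 / 2 : ℝ) ^ j = β at hj1 hj2 hωj hβ1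
  have hβ0 : 0 < β := lt_of_lt_of_le hα0 hj2
  obtain ⟨C, hC⟩ := bigF_bound ν p0 c hc ev lam β ω
  have hFm : Measurable (fun h => bigF ν p0 c ev lam β h ω) :=
    bigF_meas_left ν p0 c hp0meas hcmeas ev hev lam β ω
  have hBpos : 0 < 2 / (δ * β) := by positivity
  have hdv := dv_ineq P Q hkl (fun h => bigF ν p0 c ev lam β h ω) hFm C hC
    (2 / (δ * β)) hBpos hωj
  have hlog : Real.log (2 / (δ * β)) ≤ Real.log (8 / (δ * α)) := by
    apply Real.log_le_log (by positivity)
    apply div_le_div₀ (by norm_num) (by norm_num) (by positivity)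
    exact mul_le_mul_of_nonneg_left hj2 hδ0.le
  have hple : ∀ x a, p0 x a ≤ 1 := fun x a => by
    rw [← hp0sum x]
    exact Finset.single_le_sum (fun a _ => (hp0pos x a).le) (Finset.mem_univ a)
  have hrisk := riskH_int ν c hcmeas hc ev hev Q
  have hint : ∫ h, bigF ν p0 c ev lam β h ω ∂Q = ∑ i, lam *
      ((∫ x, ∑ a, (Q {h | ev h x = a}).toReal * c x a ∂ν) +
        (-(c (ω i).1 (ω i).2 * (Q {h | ev h (ω i).1 = (ω i).2}).toReal
            / p0 (ω i).1 (ω i).2 ^ β)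
          - (1 - ∑ b, (Q {h | ev h (ω i).1 = b}).toReal * p0 (ω i).1 b ^ (1 - β))
          - lam / 2 * ((Q {h | ev h (ω i).1 = (ω i).2}).toReal * c (ω i).1 (ω i).2 ^ 2
            / p0 (ω i).1 (ω i).2 ^ (2 * β)))) := by
    unfold bigF
    have hii : ∀ i ∈ Finset.univ, Integrable (fun h => lam * (riskH ν c ev h +
        phiF p0 c ev lam β h (ω i).1 (ω i).2)) Q := fun i _ =>
      (hrisk.1.add (phiF_int p0 c ev hev lam β Q (ω i).1 (ω i).2).1).const_mul lam
    rw [integral_finsetSum _ hii]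
    refine Finset.sum_congr rfl fun i _ => ?_
    rw [integral_const_mul, integral_add hrisk.1 (phiF_int p0 c ev hev lam β Q _ _).1, hrisk.2,
      (phiF_int p0 c ev hev lam β Q _ _).2]
  rw [hint] at hdv
  generalize (∫ x, ∑ a, (Q {h | ev h x = a}).toReal * c x a ∂ν) = R at hdv ⊢
  have hsqrt := Real.sqrt_nonneg (((klDiv Q P).toReal + Real.log (8 * Real.sqrt n / (δ * α)))
                  / (2 * n))
  have hnpos : (0 : ℝ) < n := by exact_mod_cast hn
  have hmono : ∑ i, lam * (R - (c (ω i).1 (ω i).2 * (Q {h | ev h (ω i).1 = (ω i).2}).toReal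
            / p0 (ω i).1 (ω i).2 ^ α)
          - (1 - ∑ b, (Q {h | ev h (ω i).1 = b}).toReal * p0 (ω i).1 b ^ (1 - α))
          - lam / 2 * ((∑ a, p0 (ω i).1 a *
                      ((Q {h | ev h (ω i).1 = a}).toReal / p0 (ω i).1 a ^ (4 * α)))
                    + (Q {h | ev h (ω i).1 = (ω i).2}).toReal * c (ω i).1 (ω i).2 ^ 2
                        / p0 (ω i).1 (ω i).2 ^ (4 * α)))
      ≤ (klDiv Q P).toReal + Real.log (8 / (δ * α)) := by
    refine le_trans (Finset.sum_le_sum fun i _ => ?_) (hdv.trans (by linarith))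
    refine mul_le_mul_of_nonneg_left ?_ hlam.le
    have hp := hp0pos (ω i).1 (ω i).2
    have hp1 := hple (ω i).1 (ω i).2
    have a1 : c (ω i).1 (ω i).2 * (Q {h | ev h (ω i).1 = (ω i).2}).toReal
            / p0 (ω i).1 (ω i).2 ^ β ≤ c (ω i).1 (ω i).2 *
              (Q {h | ev h (ω i).1 = (ω i).2}).toReal / p0 (ω i).1 (ω i).2 ^ α := by
      have h0 : c (ω i).1 (ω i).2 * (Q {h | ev h (ω i).1 = (ω i).2}).toReal ≤ 0 :=
        mul_nonpos_of_nonpos_of_nonneg (hc _ _).2 ENNReal.toReal_nonneg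
      rw [div_eq_mul_inv, div_eq_mul_inv]
      refine mul_le_mul_of_nonpos_left ?_ h0
      exact inv_anti₀ (Real.rpow_pos_of_pos hp _)
        (Real.rpow_le_rpow_of_exponent_ge hp hp1 hj2)
    have a2 : ∑ b, (Q {h | ev h (ω i).1 = b}).toReal * p0 (ω i).1 b ^ (1 - α)
        ≤ ∑ b, (Q {h | ev h (ω i).1 = b}).toReal * p0 (ω i).1 b ^ (1 - β) := by
      refine Finset.sum_le_sum fun b _ => mul_le_mul_of_nonneg_left ?_ ENNReal.toReal_nonneg
      exact Real.rpow_le_rpow_of_exponent_ge (hp0pos _ _) (hple _ _) (by linarith)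
    have a3 : (Q {h | ev h (ω i).1 = (ω i).2}).toReal * c (ω i).1 (ω i).2 ^ 2
            / p0 (ω i).1 (ω i).2 ^ (2 * β) ≤ (∑ a, p0 (ω i).1 a *
                      ((Q {h | ev h (ω i).1 = a}).toReal / p0 (ω i).1 a ^ (4 * α)))
            + (Q {h | ev h (ω i).1 = (ω i).2}).toReal * c (ω i).1 (ω i).2 ^ 2
                        / p0 (ω i).1 (ω i).2 ^ (4 * α) := by
      have h1 : 0 ≤ ∑ a, p0 (ω i).1 a *
          ((Q {h | ev h (ω i).1 = a}).toReal / p0 (ω i).1 a ^ (4 * α)) :=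
        Finset.sum_nonneg fun a _ => mul_nonneg (hp0pos _ _).le
          (div_nonneg ENNReal.toReal_nonneg (Real.rpow_nonneg (hp0pos _ _).le _))
      have h2 : (Q {h | ev h (ω i).1 = (ω i).2}).toReal * c (ω i).1 (ω i).2 ^ 2
            / p0 (ω i).1 (ω i).2 ^ (2 * β) ≤
            (Q {h | ev h (ω i).1 = (ω i).2}).toReal * c (ω i).1 (ω i).2 ^ 2
                        / p0 (ω i).1 (ω i).2 ^ (4 * α) := by
        refine div_le_div_of_nonneg_left (mul_nonneg ENNReal.toReal_nonneg (sq_nonneg _))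
          (Real.rpow_pos_of_pos hp _) ?_
        exact Real.rpow_le_rpow_of_exponent_ge hp hp1 (by linarith)
      linarith
    have a4 := mul_le_mul_of_nonneg_left a3 (by positivity : 0 ≤ lam / 2)
    linarith
  rw [← Finset.mul_sum, Finset.sum_sub_distrib, Finset.sum_sub_distrib, Finset.sum_sub_distrib,
    Finset.sum_sub_distrib, ← Finset.mul_sum] at hmono
  simp only [Finset.sum_const, Finset.card_univ, Fintype.card_fin, nsmul_eq_mul, mul_one] at hmono
  generalize (∑ i, c (ω i).1 (ω i).2 * (Q {h | ev h (ω i).1 = (ω i).2}).toReal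
            / p0 (ω i).1 (ω i).2 ^ α) = S1 at hmono ⊢
  generalize (∑ i, ∑ b, (Q {h | ev h (ω i).1 = b}).toReal * p0 (ω i).1 b ^ (1 - α)) = S2
    at hmono ⊢
  generalize (∑ i, ((∑ a, p0 (ω i).1 a *
                      ((Q {h | ev h (ω i).1 = a}).toReal / p0 (ω i).1 a ^ (4 * α)))
                    + (Q {h | ev h (ω i).1 = (ω i).2}).toReal * c (ω i).1 (ω i).2 ^ 2
                        / p0 (ω i).1 (ω i).2 ^ (4 * α))) = S3 at hmono ⊢
  have hfin : (lam * (n * R - S1 - (n - S2) - lam / 2 * S3)) / (n * lam)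
      ≤ ((klDiv Q P).toReal + Real.log (8 / (δ * α))) / (n * lam) :=
    div_le_div_of_nonneg_right hmono (by positivity)
  have e : (lam * (n * R - S1 - (n - S2) - lam / 2 * S3)) / (n * lam)
      = R - (n : ℝ)⁻¹ * S1 - (1 - (n : ℝ)⁻¹ * S2) - lam / 2 * ((n : ℝ)⁻¹ * S3) := by
    field_simp
  rw [e] at hfin
  linarith
end
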